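/- Let m ≥ 2 be an integer, Δ > 1 and 0 < α < 1/m. Then there exists a constant C such that: for every real 2m×m matrix J with J^1 invertible such that A_j := Π_j J is Δ-regular for each j ∈ 𝒞, for every convex tree 𝒯 of dyadic cubes in ℝ^m, for every measurable c : (0,∞) → ℂ with |c| ≤ 1 almost everywhere, every u ∈ ℝ^{2m}, every 1 ≤ i ≤ m, and every tuple (F_j)_{j∈𝒞} of real-valued smooth compactly supported functions on ℝ^m, one has |Λ_𝒯((F_j)_{j∈𝒞})| ≤ C |Q_𝒯| ∏_{j∈𝒞} M_α(F_j)(A_j𝒯). -/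

import Mathlib

open MeasureTheory Matrix
open scoped ENNReal NNReal BigOperators

noncomputable section

namespace SBL

/-- The set of corners of the `m`-dimensional cube: functions `{1,…,m} → {0,1}`. -/
abbrev Corner (m : ℕ) := Fin m → Fin 2

/-- Index type for `ℝ^{2m}`: coordinates `x^0_i` (left) and `x^1_i` (right). -/
abbrev Idx (m : ℕ) := Fin m ⊕ Fin m

/-- The coordinate of `ℝ^{2m}` selected by the corner `j` at position `i`. -/
def sel {m : ℕ} (j : Corner m) (i : Fin m) : Idx m :=
  if j i = 0 then Sum.inl i else Sum.inr i

/-- The projection `Π_j : ℝ^{2m} → ℝ^m`, `Π_j x = (x_1^{j(1)},…,x_m^{j(m)})`. -/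
def proj {m : ℕ} (j : Corner m) (x : Idx m → ℝ) : Fin m → ℝ := fun i => x (sel j i)

/-- The projection `Π_j` as an `m × 2m` matrix. -/
def projM {m : ℕ} (j : Corner m) : Matrix (Fin m) (Idx m) ℝ :=
  Matrix.of fun i k => if k = sel j i then 1 else 0

/-- `A_j := Π_j J`, the `m × m` matrix obtained by applying `Π_j` to (the columns of) a
`2m × m` matrix `J`, i.e. selecting rows of `J` according to the corner `j`. -/
def Amat {m : ℕ} (J : Matrix (Idx m) (Fin m) ℝ) (j : Corner m) : Matrix (Fin m) (Fin m) ℝ :=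
  Matrix.of fun i k => J (sel j i) k

/-- Euclidean norm on a finite pi type. -/
def en {ι : Type*} [Fintype ι] (x : ι → ℝ) : ℝ := Real.sqrt (∑ i, (x i) ^ 2)

/-- Operator norm of a matrix with respect to the Euclidean norms. -/
def opNorm {ι κ : Type*} [Fintype ι] [Fintype κ] [DecidableEq κ] (A : Matrix ι κ ℝ) : ℝ :=
  ‖LinearMap.toContinuousLinearMap (Matrix.toEuclideanLin A)‖

/-- `Δ`-regularity of a square matrix: `max(‖A‖, |det A|⁻¹) ≤ Δ` (in particular `det A ≠ 0`). -/
def IsReg {m : ℕ} (Δ : ℝ) (A : Matrix (Fin m) (Fin m) ℝ) : Prop :=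
  opNorm A ≤ Δ ∧ A.det ≠ 0 ∧ |A.det|⁻¹ ≤ Δ

/-- A Calderón–Zygmund kernel of order `n` in `ℝ^m`, given by its multiplier `K̂` on
`ℝ^m ∖ {0}`: it is `n` times continuously differentiable there and satisfies the symbol
estimates `‖D^k K̂(η)‖ ≤ |η|^{-k}` for all `k ≤ n`. -/
def IsCZ {m : ℕ} (n : ℕ) (Khat : (Fin m → ℝ) → ℂ) : Prop :=
  ContDiffOn ℝ n Khat {0}ᶜ ∧
  ∀ k : ℕ, k ≤ n → ∀ η : Fin m → ℝ, η ≠ 0 →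
    ‖iteratedFDerivWithin ℝ k Khat {0}ᶜ η‖ ≤ (en η) ^ (-(k : ℝ))

/-- Fourier transform of a (nice) function on `ℝ^{2m}`. -/
def fourierT {m : ℕ} (φ : (Idx m → ℝ) → ℝ) (ξ : Idx m → ℝ) : ℂ :=
  ∫ x : Idx m → ℝ, Complex.exp (-2 * Real.pi * Complex.I * (∑ k, x k * ξ k)) * (φ x : ℂ)

/-- The principal value `p.v. ∫_{ℝ^{2m}} (∏_j F_j(Π_j x)) K(Πx) dx`, defined as
`∫_{ℝ^m} φ̂(−Π^T η) K̂(η) dη` with `φ = ∏_j F_j ∘ Π_j`. -/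
def pv {m : ℕ} (P : Matrix (Fin m) (Idx m) ℝ) (Khat : (Fin m → ℝ) → ℂ)
    (F : Corner m → (Fin m → ℝ) → ℝ) : ℂ :=
  ∫ η : Fin m → ℝ, fourierT (fun x => ∏ j, F j (proj j x)) (-(P.transpose.mulVec η)) * Khat η

/-- Upper `m×m` block `J^0` of a `2m×m` matrix. -/
def Jb0 {m : ℕ} (J : Matrix (Idx m) (Fin m) ℝ) : Matrix (Fin m) (Fin m) ℝ :=
  J.submatrix Sum.inl id

/-- Lower `m×m` block `J^1` of a `2m×m` matrix. -/
def Jb1 {m : ℕ} (J : Matrix (Idx m) (Fin m) ℝ) : Matrix (Fin m) (Fin m) ℝ :=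
  J.submatrix Sum.inr id

/-- `Π^J := (I, −J^0 (J^1)⁻¹)`. -/
def PiJ {m : ℕ} (J : Matrix (Idx m) (Fin m) ℝ) : Matrix (Fin m) (Idx m) ℝ :=
  Matrix.fromCols 1 (-(Jb0 J * (Jb1 J)⁻¹))

/-- The dyadic cube with parameters `Q = (k, n)`: `∏_i [2^k n_i, 2^k (n_i+1))`. -/
def dC {m : ℕ} (Q : ℤ × (Fin m → ℤ)) : Set (Fin m → ℝ) :=
  {x | ∀ i, (2:ℝ)^Q.1 * (Q.2 i : ℝ) ≤ x i ∧ x i < (2:ℝ)^Q.1 * ((Q.2 i : ℝ) + 1)}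

/-- `Q*`: the cube with the same center as `Q` and three times the side length. -/
def dCstar {m : ℕ} (Q : ℤ × (Fin m → ℤ)) : Set (Fin m → ℝ) :=
  {x | ∀ i, (2:ℝ)^Q.1 * ((Q.2 i : ℝ) - 1) ≤ x i ∧ x i < (2:ℝ)^Q.1 * ((Q.2 i : ℝ) + 2)}

/-- A (1/2-)sparse collection of dyadic cubes. -/
def IsSparse {m : ℕ} (S : Set (ℤ × (Fin m → ℤ))) : Prop :=
  ∀ Q ∈ S,
    (∑' Q' : {q : ℤ × (Fin m → ℤ) // q ∈ S ∧ dC q ⊆ dC Q}, volume (dC Q'.val)) ≤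
      2 * volume (dC Q)

/-- The average `[F]_S := (|S|⁻¹ ∫_S |F|^{2^{m-1}})^{2^{1-m}}`. -/
def avg {m : ℕ} (S : Set (Fin m → ℝ)) (F : (Fin m → ℝ) → ℝ) : ℝ :=
  (((volume S).toReal)⁻¹ * ∫ x in S, |F x| ^ (2^(m-1) : ℕ)) ^ ((2:ℝ) ^ ((1:ℤ) - (m:ℤ)))

/-- The closed axis-parallel box `∏_i [a_i, b_i]`. -/
def box {m : ℕ} (a b : Fin m → ℝ) : Set (Fin m → ℝ) := {x | ∀ i, a i ≤ x i ∧ x i ≤ b i}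

/-- Reciprocal eccentricity `ε_R = (min_i |I_i|)/(max_i |I_i|)` of the box `∏_i [a_i,b_i]`. -/
def ecc {m : ℕ} (a b : Fin m → ℝ) : ℝ := (⨅ i, (b i - a i)) / (⨆ i, (b i - a i))

/-- Modified strong maximal function evaluated on a set `S`:
`sup { (ε_R^α)^{2^{1-m}} [F]_R : R ∈ ℛ, S ⊆ R }` (as an extended real). -/
def Mal {m : ℕ} (α : ℝ) (F : (Fin m → ℝ) → ℝ) (S : Set (Fin m → ℝ)) : ℝ≥0∞ :=
  ⨆ (a : Fin m → ℝ) (b : Fin m → ℝ) (_ : ∀ i, a i < b i) (_ : S ⊆ box a b),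
    ENNReal.ofReal ((ecc a b ^ α) ^ ((2:ℝ) ^ ((1:ℤ) - (m:ℤ))) * avg (box a b) F)

/-- `M_α(F)(A𝒯) := sup_{Q ∈ 𝒯} M_α(F)(AQ)`. -/
def MalTree {m : ℕ} (α : ℝ) (F : (Fin m → ℝ) → ℝ) (A : Matrix (Fin m) (Fin m) ℝ)
    (T : Set (ℤ × (Fin m → ℤ))) : ℝ≥0∞ :=
  ⨆ Q ∈ T, Mal α F (A.mulVec '' dC Q)

/-- A convex tree of dyadic cubes with top cube `Qt`. -/
def ConvexTree {m : ℕ} (T : Set (ℤ × (Fin m → ℤ))) (Qt : ℤ × (Fin m → ℤ)) : Prop :=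
  Qt ∈ T ∧ (∀ Q ∈ T, dC Q ⊆ dC Qt) ∧
  ∀ Q ∈ T, ∀ Q' : ℤ × (Fin m → ℤ), dC Q ⊆ dC Q' → dC Q' ⊆ dC Qt → Q' ∈ T

/-- The Gaussian `g(x) = e^{−π|x|²}` on `ℝ^{2m}`. -/
def gss {m : ℕ} (x : Idx m → ℝ) : ℝ := Real.exp (-Real.pi * ∑ k, (x k) ^ 2)

/-- The mixed partial derivative `∂^0_i ∂^1_i g`. -/
def ddg {m : ℕ} (i : Fin m) (x : Idx m → ℝ) : ℝ :=
  fderiv ℝ (fun y : Idx m → ℝ => fderiv ℝ gss y (Pi.single (Sum.inl i) (1:ℝ))) x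
    (Pi.single (Sum.inr i) (1:ℝ))

/-- Isotropic `L¹` dilation on `ℝ^{2m}`: `φ_t(x) = t^{-2m} φ(t⁻¹ x)`. -/
def dil {m : ℕ} (t : ℝ) (φ : (Idx m → ℝ) → ℝ) (x : Idx m → ℝ) : ℝ :=
  (t ^ (2*m))⁻¹ * φ (t⁻¹ • x)

/-- Matrix dilation: `φ_D(x) = (det D)⁻¹ φ(D⁻¹ x)`. -/
def dilM {m : ℕ} (D : Matrix (Idx m) (Idx m) ℝ) (φ : (Idx m → ℝ) → ℝ) (x : Idx m → ℝ) : ℝ :=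
  (D.det)⁻¹ * φ (D⁻¹.mulVec x)

/-- The region `Ω_𝒯 = ∪_{Q∈𝒯} Q × (ℓ(Q)/2, ℓ(Q))` in the upper half space. -/
def Omega {m : ℕ} (T : Set (ℤ × (Fin m → ℤ))) : Set ((Fin m → ℝ) × ℝ) :=
  ⋃ Q ∈ T, (dC Q) ×ˢ Set.Ioo ((2:ℝ)^Q.1 / 2) ((2:ℝ)^Q.1)

/-- The localized form `Λ_𝒯((F_j)_j)`. -/
def LambdaT {m : ℕ} (J : Matrix (Idx m) (Fin m) ℝ) (T : Set (ℤ × (Fin m → ℤ)))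
    (c : ℝ → ℂ) (u : Idx m → ℝ) (i : Fin m) (F : Corner m → (Fin m → ℝ) → ℝ) : ℂ :=
  ∫ z in Omega T, c z.2 * Complex.ofReal ((1 + en u ^ (4*m))⁻¹ * (z.2)⁻¹ *
    ∫ x : Idx m → ℝ, (∏ j, F j (proj j x)) * dil z.2 (ddg i) (x - J.mulVec z.1 + z.2 • u))

/-- `T_k := ∪ {Q ∈ 𝒯 : ℓ(Q) = 2^k}`. -/
def Tkset {m : ℕ} (T : Set (ℤ × (Fin m → ℤ))) (k : ℤ) : Set (Fin m → ℝ) :=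
  ⋃ Q ∈ {q ∈ T | q.1 = k}, dC Q

/-- The form `Λ̃_𝒯((F_j)_j)` with localization in the `x` variables. -/
def LambdaTilde {m : ℕ} (J : Matrix (Idx m) (Fin m) ℝ) (T : Set (ℤ × (Fin m → ℤ)))
    (c : ℝ → ℂ) (u : Idx m → ℝ) (i : Fin m) (F : Corner m → (Fin m → ℝ) → ℝ) : ℂ :=
  ∑' k : ℤ, ∫ t in Set.Ioc ((2:ℝ)^(k-1)) ((2:ℝ)^k),
    c t * Complex.ofReal ((1 + en u ^ (4*m))⁻¹ * t⁻¹ *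
      ∫ p : Fin m → ℝ, ∫ x : Idx m → ℝ,
        (∏ j, Set.indicator ((Amat J j).mulVec '' Tkset T k) (F j) (proj j x)) *
          dil t (ddg i) (x - J.mulVec p + t • u))

/-- The form `Λ(𝒯,J,K)((F_j)_j)` from the induction proposition. -/
def LambdaK {m : ℕ} (J : Matrix (Idx m) (Fin m) ℝ) (T : Set (ℤ × (Fin m → ℤ)))
    (K : ℝ → (Idx m → ℝ) → ℂ) (F : Corner m → (Fin m → ℝ) → ℝ) : ℂ :=
  ∑' k : ℤ, ∫ x : Idx m → ℝ,
    Complex.ofReal (∏ j, Set.indicator ((Amat J j).mulVec '' Tkset T k) (F j) (proj j x)) *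
      ∫ t in Set.Ioc ((2:ℝ)^(k-1)) ((2:ℝ)^k), K t x * (t : ℂ)⁻¹

/-- The reflected corner `i∗j`, differing from `j` exactly at position `i`. -/
def istar {m : ℕ} (i : Fin m) (j : Corner m) : Corner m :=
  fun k => if k = i then 1 - j i else j k

/-- The diagonal matrix `Θ̃` with entry 0 at positions `i ≤ l` and 1 at positions `i > l`
(1-based), i.e. 0 for `i < l` and 1 otherwise in 0-based indexing. -/
def Th {m : ℕ} (l : ℕ) : Matrix (Fin m) (Fin m) ℝ :=
  Matrix.diagonal fun i => if (i : ℕ) < l then 0 else 1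

/-- The block diagonal matrix `Θ = diag(Θ̃, Θ̃)`. -/
def ThB {m : ℕ} (l : ℕ) : Matrix (Idx m) (Idx m) ℝ :=
  Matrix.diagonal (Sum.elim (fun i : Fin m => if (i:ℕ) < l then (0:ℝ) else 1)
    (fun i : Fin m => if (i:ℕ) < l then (0:ℝ) else 1))

end SBL

namespace SBL

/-!
Replace the staircase `Ω_𝒯` by the region between the graph of a 1-Lipschitz stopping height `ρ` and
the top scale; after normalising the maximal functions, every local Gaussian average above the
graph of `ρ / 2` is bounded. The forms to be estimated pair `∏_j F_j ∘ Π_j` with products of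
derivatives of one-dimensional Gaussians over this region.

If the data agree at both upper indices of every position, the integrand is a square, hence
non-negative, and the heat equation together with the derivative in `p` expresses a sum of such
forms as a total derivative in the scale. So the sum is bounded by the boundary terms, and each
summand by the sum. The general case follows by descending induction on the set of symmetric
positions: the Cauchy–Schwarz inequality at a position `k` bounds a form with two derivatives at `k`
by forms symmetric at `k`. The forms with derivatives elsewhere are reached by integrating by parts
in `p`, and by integrating in the width of the Gaussian from infinity, where the form vanishes; each
such step raises the order of differentiation by two. This decay is where the exponent `α` of the
eccentricity has to be small.

The translation by `u t` is absorbed in two steps. A shear of the upper half space makes the centre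
at the two differentiated coordinates correct, and the other Gaussians are dominated by centred
Gaussians of width comparable to `1 + |u|`, at the cost of a power of `1 + |u|` that the factor
`(1 + |u|^{4m})⁻¹` compensates.
-/

/-- The `n`-th derivative of the Gaussian `exp (-π x ^ 2)`. -/
def gaussDeriv (n : ℕ) : ℝ → ℝ := iteratedDeriv n fun x => Real.exp (-Real.pi * x ^ 2)

theorem gaussDeriv_zero (x : ℝ) : gaussDeriv 0 x = Real.exp (-Real.pi * x ^ 2) := by
  rw [gaussDeriv, iteratedDeriv_zero]

theorem gaussDeriv_zero_pos (x : ℝ) : 0 < gaussDeriv 0 x := by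
  rw [gaussDeriv_zero]; exact Real.exp_pos _

theorem hasDerivAt_gaussDeriv (n : ℕ) (x : ℝ) :
    HasDerivAt (gaussDeriv n) (gaussDeriv (n + 1) x) x := by
  have hsmooth : ContDiff ℝ (n + 1) fun x : ℝ => Real.exp (-Real.pi * x ^ 2) := by fun_prop
  rw [gaussDeriv, gaussDeriv, iteratedDeriv_succ]
  exact (hsmooth.differentiable_iteratedDeriv' n x).hasDerivAt

@[fun_prop]
theorem continuous_gaussDeriv (n : ℕ) : Continuous (gaussDeriv n) :=
  continuous_iff_continuousAt.2 fun x => (hasDerivAt_gaussDeriv n x).continuousAt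

theorem gaussDeriv_one (x : ℝ) : gaussDeriv 1 x = -2 * Real.pi * (x * gaussDeriv 0 x) := by
  have hexp := (((hasDerivAt_id x).pow 2).const_mul (-Real.pi)).exp
  have h0 : gaussDeriv 0 = fun x : ℝ => Real.exp (-Real.pi * x ^ 2) := funext gaussDeriv_zero
  refine (hasDerivAt_gaussDeriv 0 x).unique ?_
  rw [h0]
  refine hexp.congr_deriv ?_
  simp only [id, Nat.cast_ofNat, Pi.pow_apply]
  ring

theorem gaussDeriv_add_two (n : ℕ) (x : ℝ) :
    gaussDeriv (n + 2) x =
      -2 * Real.pi * (x * gaussDeriv (n + 1) x + (n + 1) * gaussDeriv n x) := by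
  induction n generalizing x with
  | zero =>
    refine (hasDerivAt_gaussDeriv 1 x).unique
      (HasDerivAt.congr_of_eventuallyEq ?_ (.of_forall gaussDeriv_one))
    refine (((hasDerivAt_id x).mul (hasDerivAt_gaussDeriv 0 x)).const_mul _).congr_deriv ?_
    simp only [id, zero_add, Nat.cast_zero]
    ring
  | succ n ih =>
    refine (hasDerivAt_gaussDeriv (n + 2) x).unique
      (HasDerivAt.congr_of_eventuallyEq ?_ (.of_forall ih))
    refine ((((hasDerivAt_id x).mul (hasDerivAt_gaussDeriv (n + 1) x)).add
      ((hasDerivAt_gaussDeriv n x).const_mul _)).const_mul _).congr_deriv ?_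
    simp only [id, Nat.cast_add, Nat.cast_one]
    ring

theorem exists_pow_mul_gaussDeriv_zero_le (k : ℕ) :
    ∃ C, ∀ x, |x| ^ k * gaussDeriv 0 x ≤ C * gaussDeriv 0 (x / 2) := by
  refine ⟨k.factorial * Real.exp 1, fun x => ?_⟩
  have hpow : |x| ^ k ≤ k.factorial * Real.exp |x| := by
    have := Real.pow_div_factorial_le_exp |x| (abs_nonneg x) k
    rwa [div_le_iff₀' (by positivity)] at this
  have hexp : Real.exp |x| * gaussDeriv 0 x ≤ Real.exp 1 * gaussDeriv 0 (x / 2) := by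
    rw [gaussDeriv_zero, gaussDeriv_zero, ← Real.exp_add, ← Real.exp_add, Real.exp_le_exp]
    have hpi := mul_nonneg (sub_nonneg.2 Real.pi_gt_three.le) (sq_nonneg x)
    nlinarith [sq_nonneg (|x| - 1), sq_abs x]
  calc |x| ^ k * gaussDeriv 0 x ≤ k.factorial * Real.exp |x| * gaussDeriv 0 x := by
        gcongr; exact (gaussDeriv_zero_pos x).le
    _ ≤ k.factorial * Real.exp 1 * gaussDeriv 0 (x / 2) := by
        rw [mul_assoc, mul_assoc]; gcongr

theorem exists_pow_mul_abs_gaussDeriv_le (n k : ℕ) :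
    ∃ C, ∀ x, |x| ^ k * |gaussDeriv n x| ≤ C * gaussDeriv 0 (x / 2) := by
  induction n using Nat.twoStepInduction generalizing k with
  | zero =>
    simpa only [abs_of_pos (gaussDeriv_zero_pos _)] using exists_pow_mul_gaussDeriv_zero_le k
  | one =>
    obtain ⟨C, hC⟩ := exists_pow_mul_gaussDeriv_zero_le (k + 1)
    refine ⟨2 * Real.pi * C, fun x => ?_⟩
    calc |x| ^ k * |gaussDeriv 1 x| = 2 * Real.pi * (|x| ^ (k + 1) * gaussDeriv 0 x) := by
          simp only [gaussDeriv_one, abs_mul, abs_neg, abs_two, abs_of_pos Real.pi_pos,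
            abs_of_pos (gaussDeriv_zero_pos x)]
          ring
      _ ≤ 2 * Real.pi * C * gaussDeriv 0 (x / 2) := by
          rw [mul_assoc (2 * Real.pi)]
          exact mul_le_mul_of_nonneg_left (hC x) Real.two_pi_pos.le
  | more n ih₀ ih₁ =>
    obtain ⟨C₀, h₀⟩ := ih₀ k
    obtain ⟨C₁, h₁⟩ := ih₁ (k + 1)
    refine ⟨2 * Real.pi * (C₁ + (n + 1) * C₀), fun x => ?_⟩
    calc |x| ^ k * |gaussDeriv (n + 2) x|
        = 2 * Real.pi * (|x| ^ k * |x * gaussDeriv (n + 1) x + (n + 1) * gaussDeriv n x|) := by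
          simp only [gaussDeriv_add_two, abs_mul, abs_neg, abs_two, abs_of_pos Real.pi_pos]
          ring
      _ ≤ 2 * Real.pi *
          (|x| ^ k * (|x| * |gaussDeriv (n + 1) x| + (n + 1) * |gaussDeriv n x|)) := by
          gcongr
          refine (abs_add_le _ _).trans_eq ?_
          rw [abs_mul, abs_mul, abs_of_nonneg (by positivity : (0 : ℝ) ≤ n + 1)]
      _ = 2 * Real.pi * (|x| ^ (k + 1) * |gaussDeriv (n + 1) x| +
            (n + 1) * (|x| ^ k * |gaussDeriv n x|)) := by ring
      _ ≤ 2 * Real.pi * (C₁ * gaussDeriv 0 (x / 2) + (n + 1) * (C₀ * gaussDeriv 0 (x / 2))) := by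
          gcongr ?_ * (?_ + _ * ?_)
          exacts [h₁ x, h₀ x]
      _ = 2 * Real.pi * (C₁ + (n + 1) * C₀) * gaussDeriv 0 (x / 2) := by ring

/-- The `n`-th derivative of the Gaussian, dilated to width `v` with its `L¹` norm preserved. -/
def gaussKernel (n : ℕ) (v x : ℝ) : ℝ := v⁻¹ * gaussDeriv n (v⁻¹ * x)

@[fun_prop]
theorem continuous_gaussKernel (n : ℕ) (v : ℝ) : Continuous (gaussKernel n v) := by
  unfold gaussKernel; fun_prop

theorem continuousOn_gaussKernel (n : ℕ) :
    ContinuousOn (fun z : ℝ × ℝ => gaussKernel n z.1 z.2) (Set.Ioi 0 ×ˢ Set.univ) := by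
  have hinv : ContinuousOn (fun z : ℝ × ℝ => z.1⁻¹) (Set.Ioi 0 ×ˢ Set.univ) :=
    continuousOn_fst.inv₀ fun z hz => ne_of_gt hz.1
  exact hinv.mul ((continuous_gaussDeriv n).comp_continuousOn (hinv.mul continuousOn_snd))

theorem gaussKernel_zero_pos {v : ℝ} (hv : 0 < v) (x : ℝ) : 0 < gaussKernel 0 v x :=
  mul_pos (inv_pos.2 hv) (gaussDeriv_zero_pos _)

theorem gaussKernel_zero_eq_gaussianPDFReal {v : ℝ} (hv : 0 < v) (b x : ℝ) :
    gaussKernel 0 v (x - b) =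
      ProbabilityTheory.gaussianPDFReal b (v ^ 2 / (2 * Real.pi)).toNNReal x := by
  rw [gaussKernel, gaussDeriv_zero, ProbabilityTheory.gaussianPDFReal,
    Real.coe_toNNReal _ (by positivity), mul_div_cancel₀ _ (by positivity), Real.sqrt_sq hv.le]
  congr 2
  field_simp

theorem exists_abs_gaussKernel_le (n : ℕ) :
    ∃ C, ∀ v x, 0 < v → |gaussKernel n v x| ≤ C * gaussKernel 0 (2 * v) x := by
  obtain ⟨C, hC⟩ := exists_pow_mul_abs_gaussDeriv_le n 0
  simp only [pow_zero, one_mul] at hC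
  refine ⟨2 * C, fun v x hv => ?_⟩
  calc |gaussKernel n v x| = v⁻¹ * |gaussDeriv n (v⁻¹ * x)| := by
        rw [gaussKernel, abs_mul, abs_of_pos (inv_pos.2 hv)]
    _ ≤ v⁻¹ * (C * gaussDeriv 0 (v⁻¹ * x / 2)) := by gcongr; exact hC _
    _ = 2 * C * gaussKernel 0 (2 * v) x := by
        rw [gaussKernel, mul_inv, show (2 : ℝ)⁻¹ * v⁻¹ * x = v⁻¹ * x / 2 by ring]; ring

/-- A constant for which `|gaussKernel n v| ≤ gaussKernelConst n * gaussKernel 0 (2 * v)`, chosen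
once and for all. -/
def gaussKernelConst (n : ℕ) : ℝ := (exists_abs_gaussKernel_le n).choose

theorem abs_gaussKernel_le (n : ℕ) {v : ℝ} (hv : 0 < v) (x : ℝ) :
    |gaussKernel n v x| ≤ gaussKernelConst n * gaussKernel 0 (2 * v) x :=
  (exists_abs_gaussKernel_le n).choose_spec v x hv

theorem gaussKernelConst_nonneg (n : ℕ) : 0 ≤ gaussKernelConst n :=
  nonneg_of_mul_nonneg_left ((abs_nonneg _).trans (abs_gaussKernel_le n one_pos 0))
    (gaussKernel_zero_pos (by norm_num) 0)

theorem gaussKernel_zero_shift_le {v U a : ℝ} (hv : 0 < v) (hU : 2 ≤ U) (ha : |a| ≤ U) (x : ℝ) :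
    gaussKernel 0 v (x + v * a) ≤ Real.exp (4 * Real.pi) * U * gaussKernel 0 (U * v) x := by
  have : 0 < U := by linarith
  have hshift (y : ℝ) : gaussDeriv 0 (y + a) ≤ Real.exp (4 * Real.pi) * gaussDeriv 0 (U⁻¹ * y) := by
    have hsq : (U⁻¹ * y) ^ 2 ≤ 4 + (y + a) ^ 2 := by
      rw [mul_pow, inv_pow, inv_mul_le_iff₀ (by positivity)]
      nlinarith [sq_nonneg (y + 2 * a), sq_le_sq' (neg_le_of_abs_le ha) (le_of_abs_le ha),
        mul_nonneg (sq_nonneg (y + a)) (by nlinarith : (0 : ℝ) ≤ U ^ 2 - 4)]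
    rw [gaussDeriv_zero, gaussDeriv_zero, ← Real.exp_add, Real.exp_le_exp]
    nlinarith [Real.pi_pos]
  calc gaussKernel 0 v (x + v * a) = v⁻¹ * gaussDeriv 0 (v⁻¹ * x + a) := by
        rw [gaussKernel, mul_add, inv_mul_cancel_left₀ hv.ne']
    _ ≤ v⁻¹ * (Real.exp (4 * Real.pi) * gaussDeriv 0 (U⁻¹ * (v⁻¹ * x))) := by
        gcongr; exact hshift _
    _ = Real.exp (4 * Real.pi) * U * gaussKernel 0 (U * v) x := by
        rw [gaussKernel, mul_inv, mul_assoc U⁻¹ v⁻¹ x]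
        field_simp

/-- In the width, the kernel obeys a heat equation: this is where the orders go up by two. -/
theorem hasDerivAt_gaussKernel_comp (n : ℕ) (x : ℝ) {v b : ℝ → ℝ} {v' b' r : ℝ}
    (hv : HasDerivAt v v' r) (hb : HasDerivAt b b' r) (h0 : 0 < v r) :
    HasDerivAt (fun r => gaussKernel n (v r) (x - b r))
      (v' / v r * (n * gaussKernel n (v r) (x - b r) +
        (2 * Real.pi)⁻¹ * gaussKernel (n + 2) (v r) (x - b r)) -
        b' / v r * gaussKernel (n + 1) (v r) (x - b r)) r := by
  have hinv := hv.inv h0.ne'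
  have hcomp := (hasDerivAt_gaussDeriv n ((v r)⁻¹ * (x - b r))).comp r
    (hinv.mul (hb.const_sub x))
  refine (hinv.mul hcomp).congr_deriv ?_
  simp only [gaussKernel, gaussDeriv_add_two, Pi.inv_apply, Function.comp_apply, Pi.mul_apply]
  field_simp
  ring

theorem hasDerivAt_integral_mul_of_hasCompactSupport {X : Type*} [TopologicalSpace X]
    [MeasurableSpace X] [OpensMeasurableSpace X] [SecondCountableTopology X] {μ : Measure X}
    [IsFiniteMeasureOnCompacts μ] {Ψ : X → ℝ} (hΨ : Continuous Ψ) (hsupp : HasCompactSupport Ψ)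
    {k k' : ℝ → X → ℝ} {O : Set ℝ} (hO : IsOpen O) {r : ℝ} (hr : r ∈ O)
    (hk : ∀ r ∈ O, Continuous (k r)) (hk' : ContinuousOn (Function.uncurry k') (O ×ˢ Set.univ))
    (hderiv : ∀ r ∈ O, ∀ x, HasDerivAt (fun r => k r x) (k' r x) r) :
    HasDerivAt (fun r => ∫ x, Ψ x * k r x ∂μ) (∫ x, Ψ x * k' r x ∂μ) r := by
  obtain ⟨δ, hδ, hball⟩ := Metric.nhds_basis_closedBall.mem_iff.1 (hO.mem_nhds hr)
  obtain ⟨M, hM⟩ := ((isCompact_closedBall r δ).prod hsupp.isCompact).exists_bound_of_continuousOn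
    (hk'.mono (Set.prod_mono hball (Set.subset_univ _)))
  have hint : ∀ r ∈ O, Integrable (fun x => Ψ x * k r x) μ := fun r hr =>
    (hΨ.mul (hk r hr)).integrable_of_hasCompactSupport hsupp.mul_right
  have hk'r : Continuous (k' r) :=
    continuousOn_univ.1 <|
      hk'.comp (by fun_prop : ContinuousOn (Prod.mk r) _) fun _ _ => ⟨hr, trivial⟩
  refine (hasDerivAt_integral_of_dominated_loc_of_deriv_le (s := Metric.closedBall r δ)
    (F := fun r x => Ψ x * k r x) (F' := fun r x => Ψ x * k' r x) (bound := fun x => M * |Ψ x|)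
    (Metric.closedBall_mem_nhds r hδ) ?_ (hint r hr)
    ((hΨ.mul hk'r).integrable_of_hasCompactSupport hsupp.mul_right).1 ?_
    ((hΨ.abs.integrable_of_hasCompactSupport hsupp.abs).const_mul M) ?_).2
  · filter_upwards [hO.mem_nhds hr] with r hr using (hint r hr).1
  · refine .of_forall fun x r' hr' => ?_
    by_cases hx : x ∈ tsupport Ψ
    · rw [norm_mul, mul_comm]
      exact mul_le_mul_of_nonneg_right (hM (r', x) ⟨hr', hx⟩) (norm_nonneg _)
    · simp [image_eq_zero_of_notMem_tsupport hx]
  · exact .of_forall fun x r' hr' => (hderiv r' (hball hr') x).const_mul _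

section GaussPairing

variable {ι : Type*} [Fintype ι]

/-- The product of the one-dimensional kernels of orders `γ`, widths `v` and centres `b`. -/
def gaussProd (γ : ι → ℕ) (v b x : ι → ℝ) : ℝ := ∏ c, gaussKernel (γ c) (v c) (x c - b c)

/-- The pairing of `Ψ` with the product kernel `gaussProd γ v b`. -/
def gaussPairing (Ψ : (ι → ℝ) → ℝ) (γ : ι → ℕ) (v b : ι → ℝ) : ℝ := ∫ x, Ψ x * gaussProd γ v b x

@[fun_prop]
theorem continuous_gaussProd (γ : ι → ℕ) (v b : ι → ℝ) : Continuous (gaussProd γ v b) := by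
  unfold gaussProd; fun_prop

theorem gaussProd_zero_pos {v : ι → ℝ} (hv : ∀ c, 0 < v c) (b x : ι → ℝ) : 0 < gaussProd 0 v b x :=
  Finset.prod_pos fun c _ => gaussKernel_zero_pos (hv c) _

theorem abs_gaussProd_le (γ : ι → ℕ) {v : ι → ℝ} (hv : ∀ c, 0 < v c) (b x : ι → ℝ) :
    |gaussProd γ v b x| ≤ (∏ c, gaussKernelConst (γ c)) * gaussProd 0 (2 • v) b x := by
  simp only [gaussProd, Finset.abs_prod, ← Finset.prod_mul_distrib]
  refine Finset.prod_le_prod (fun _ _ => abs_nonneg _) fun c _ => ?_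
  simpa using abs_gaussKernel_le (γ c) (hv c) (x c - b c)

theorem gaussProd_add_single [DecidableEq ι] (γ : ι → ℕ) (c : ι) (n : ℕ) (v b x : ι → ℝ) :
    gaussProd (γ + Pi.single c n) v b x = (∏ d ∈ Finset.univ.erase c,
      gaussKernel (γ d) (v d) (x d - b d)) * gaussKernel (γ c + n) (v c) (x c - b c) := by
  rw [gaussProd, ← Finset.prod_erase_mul _ _ (Finset.mem_univ c), Pi.add_apply, Pi.single_eq_same]
  refine congrArg (· * _) (Finset.prod_congr rfl fun d hd => ?_)
  rw [Pi.add_apply, Pi.single_eq_of_ne (Finset.ne_of_mem_erase hd), add_zero]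

theorem hasDerivAt_gaussProd [DecidableEq ι] (γ : ι → ℕ) (v v' b b' x : ι → ℝ) {r : ℝ}
    (hr : ∀ c, 0 < (v + r • v') c) :
    HasDerivAt (fun r : ℝ => gaussProd γ (v + r • v') (b + r • b') x)
      (∑ c, (v' c / (v + r • v') c * (γ c * gaussProd γ (v + r • v') (b + r • b') x +
          (2 * Real.pi)⁻¹ * gaussProd (γ + Pi.single c 2) (v + r • v') (b + r • b') x) -
        b' c / (v + r • v') c * gaussProd (γ + Pi.single c 1) (v + r • v') (b + r • b') x)) r := by
  have haff (a a' : ι → ℝ) (c : ι) : HasDerivAt (fun r : ℝ => (a + r • a') c) (a' c) r := by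
    simpa using ((hasDerivAt_id r).mul_const (a' c)).const_add (a c)
  refine (HasDerivAt.fun_finsetProd fun c _ =>
    hasDerivAt_gaussKernel_comp (γ c) (x c) (haff v v' c) (haff b b' c) (hr c)).congr_deriv ?_
  refine Finset.sum_congr rfl fun c _ => ?_
  have hsingle := gaussProd_add_single γ c 0 (v + r • v') (b + r • b') x
  rw [Pi.single_zero, add_zero, add_zero] at hsingle
  rw [hsingle, gaussProd_add_single, gaussProd_add_single, smul_eq_mul]
  ring

theorem continuousOn_gaussProd (γ : ι → ℕ) :
    ContinuousOn (fun z : ((ι → ℝ) × (ι → ℝ)) × (ι → ℝ) => gaussProd γ z.1.1 z.1.2 z.2)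
      ({z | ∀ c, 0 < z.1 c} ×ˢ Set.univ) :=
  continuousOn_finsetProd _ fun c _ => (continuousOn_gaussKernel (γ c)).comp
    (f := fun z : ((ι → ℝ) × (ι → ℝ)) × (ι → ℝ) => (z.1.1 c, z.2 c - z.1.2 c))
    (by fun_prop) fun _ hz => ⟨hz.1 c, trivial⟩

variable {Ψ : (ι → ℝ) → ℝ} (hΨ : Continuous Ψ) (hsupp : HasCompactSupport Ψ)
include hΨ hsupp

theorem integrable_mul_gaussProd (γ : ι → ℕ) (v b : ι → ℝ) :
    Integrable fun x => Ψ x * gaussProd γ v b x :=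
  (hΨ.mul (continuous_gaussProd γ v b)).integrable_of_hasCompactSupport hsupp.mul_right

theorem continuousOn_gaussPairing (γ : ι → ℕ) :
    ContinuousOn (fun z : (ι → ℝ) × (ι → ℝ) => gaussPairing Ψ γ z.1 z.2) {z | ∀ c, 0 < z.1 c} :=
  continuousOn_integral_of_compact_support hsupp.isCompact
    ((hΨ.comp continuous_snd).continuousOn.mul (continuousOn_gaussProd γ)) fun z x _ hx => by
      rw [image_eq_zero_of_notMem_tsupport hx, zero_mul]

theorem hasDerivAt_gaussPairing [DecidableEq ι] (γ : ι → ℕ) (v v' b b' : ι → ℝ) {r : ℝ}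
    (hr : ∀ c, 0 < (v + r • v') c) :
    HasDerivAt (fun r : ℝ => gaussPairing Ψ γ (v + r • v') (b + r • b'))
      (∑ c, (v' c / (v + r • v') c * (γ c * gaussPairing Ψ γ (v + r • v') (b + r • b') +
          (2 * Real.pi)⁻¹ * gaussPairing Ψ (γ + Pi.single c 2) (v + r • v') (b + r • b')) -
        b' c / (v + r • v') c *
          gaussPairing Ψ (γ + Pi.single c 1) (v + r • v') (b + r • b'))) r := by
  have hcont (γ : ι → ℕ) : ContinuousOn (fun z : ℝ × (ι → ℝ) =>
      gaussProd γ (v + z.1 • v') (b + z.1 • b') z.2) ({r | ∀ c, 0 < (v + r • v') c} ×ˢ Set.univ) :=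
    (continuousOn_gaussProd γ).comp
      (f := fun z : ℝ × (ι → ℝ) => ((v + z.1 • v', b + z.1 • b'), z.2)) (by fun_prop)
      fun _ hz => ⟨hz.1, trivial⟩
  have hdiv (c : ι) (a : ℝ) : ContinuousOn (fun z : ℝ × (ι → ℝ) => a / (v + z.1 • v') c)
      ({r | ∀ c, 0 < (v + r • v') c} ×ˢ Set.univ) :=
    continuousOn_const.div (by fun_prop) fun z hz => (hz.1 c).ne'
  have hO : IsOpen {r : ℝ | ∀ c, 0 < (v + r • v') c} := by
    simp only [Set.ofPred_forall]
    exact isOpen_iInter_of_finite fun c => isOpen_lt continuous_const (by fun_prop)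
  refine (hasDerivAt_integral_mul_of_hasCompactSupport (μ := volume) hΨ hsupp hO hr
    (fun r _ => continuous_gaussProd γ _ _) ?_
    fun r hr x => hasDerivAt_gaussProd γ v v' b b' x hr).congr_deriv ?_
  · exact continuousOn_finsetSum _ fun c _ => ((hdiv c _).mul
      ((continuousOn_const.mul (hcont γ)).add (continuousOn_const.mul (hcont _)))).sub
      ((hdiv c _).mul (hcont _))
  · generalize v + r • v' = V, b + r • b' = B
    have hint (γ : ι → ℕ) := integrable_mul_gaussProd hΨ hsupp γ V B
    have hwidth (c : ι) : Integrable fun x => v' c / V c * (γ c * (Ψ x * gaussProd γ V B x) +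
        (2 * Real.pi)⁻¹ * (Ψ x * gaussProd (γ + Pi.single c 2) V B x)) :=
      (((hint γ).const_mul _).add ((hint _).const_mul _)).const_mul _
    have hcenter (c : ι) := (hint (γ + Pi.single c 1)).const_mul (b' c / V c)
    simp only [gaussPairing, ← integral_const_mul]
    simp only [← integral_add ((hint _).const_mul _) ((hint _).const_mul _), ← integral_const_mul]
    simp only [← integral_sub (hwidth _) (hcenter _)]
    refine .trans ?_ (integral_finsetSum _ fun c _ => (hwidth c).sub (hcenter c))
    refine integral_congr_ae (.of_forall fun x => ?_)
    simp only [Finset.mul_sum]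
    exact Finset.sum_congr rfl fun c _ => by ring

end GaussPairing

theorem lintegral_pi_prod_eq_prod {ι : Type*} [Fintype ι] {X : ι → Type*}
    [∀ i, MeasurableSpace (X i)] (μ : ∀ i, Measure (X i)) [∀ i, SigmaFinite (μ i)]
    {f : ∀ i, X i → ℝ≥0∞} (hf : ∀ i, Measurable (f i)) :
    ∫⁻ x, ∏ i, f i (x i) ∂Measure.pi μ = ∏ i, ∫⁻ y, f i y ∂μ i := by
  classical
  suffices h : ∀ (s : Finset ι) x, (∫⋯∫⁻_s, (fun x => ∏ i ∈ s, f i (x i)) ∂μ) x =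
      ∏ i ∈ s, ∫⁻ y, f i y ∂μ i by
    rcases isEmpty_or_nonempty (∀ i, X i) with hX | ⟨⟨x⟩⟩
    · obtain ⟨i, hi⟩ := isEmpty_pi.1 hX
      rw [Finset.prod_eq_zero (Finset.mem_univ i) (by simp)]
      simp [Measure.eq_zero_of_isEmpty]
    · simpa using h Finset.univ x
  intro s
  induction s using Finset.induction_on with
  | empty => simp
  | insert i s hi ih =>
    intro x
    have hinner : (fun x => ∫⁻ y, ∏ k ∈ insert i s, f k (Function.update x i y k) ∂μ i) =
        (∫⁻ y, f i y ∂μ i) • fun x => ∏ k ∈ s, f k (x k) := by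
      funext x
      rw [Pi.smul_apply, smul_eq_mul, ← lintegral_mul_const _ (hf i)]
      refine lintegral_congr fun y => ?_
      rw [Finset.prod_insert hi, Function.update_self]
      refine congrArg (_ * ·) (Finset.prod_congr rfl fun k hk => ?_)
      rw [Function.update_of_ne (ne_of_mem_of_not_mem hk hi)]
    rw [lmarginal_insert' _ (by fun_prop) hi, hinner, Finset.prod_insert hi, ← ih x, lmarginal,
      lmarginal, ← lintegral_const_mul]
    · rfl
    · fun_prop

theorem pi_withDensity {ι : Type*} [Fintype ι] {X : ι → Type*} [∀ i, MeasurableSpace (X i)]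
    (μ : ∀ i, Measure (X i)) [∀ i, SigmaFinite (μ i)] {f : ∀ i, X i → ℝ≥0∞}
    (hf : ∀ i, Measurable (f i)) [∀ i, SigmaFinite ((μ i).withDensity (f i))] :
    Measure.pi (fun i => (μ i).withDensity (f i)) =
      (Measure.pi μ).withDensity fun x => ∏ i, f i (x i) := by
  classical
  refine Measure.pi_eq fun s hs => ?_
  have hbox : (Set.univ.pi s).indicator (fun x => ∏ i, f i (x i)) =
      fun x => ∏ i, (s i).indicator (f i) (x i) := by
    funext x
    by_cases hx : x ∈ Set.univ.pi s
    · rw [Set.indicator_of_mem hx]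
      exact Finset.prod_congr rfl fun i _ => (Set.indicator_of_mem (hx i trivial) _).symm
    · obtain ⟨i, hi⟩ : ∃ i, x i ∉ s i := by simpa using hx
      rw [Set.indicator_of_notMem hx,
        Finset.prod_eq_zero (Finset.mem_univ i) (Set.indicator_of_notMem hi _)]
  rw [withDensity_apply _ (.univ_pi hs), ← lintegral_indicator (.univ_pi hs), hbox,
    lintegral_pi_prod_eq_prod μ fun i => (hf i).indicator (hs i)]
  refine Finset.prod_congr rfl fun i _ => ?_
  rw [withDensity_apply _ (hs i), lintegral_indicator (hs i)]

theorem map_pi_comp_of_injective {ι κ X : Type*} [Fintype ι] [Fintype κ] [MeasurableSpace X]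
    (μ : ι → Measure X) [∀ i, IsProbabilityMeasure (μ i)] {e : κ → ι} (he : e.Injective) :
    (Measure.pi μ).map (fun x k => x (e k)) = Measure.pi fun k => μ (e k) := by
  have hindep := ProbabilityTheory.iIndepFun_pi (μ := μ) (X := fun _ => id)
    fun _ => aemeasurable_id
  rw [(ProbabilityTheory.iIndepFun_iff_map_fun_eq_pi_map
    fun k => (measurable_pi_apply (e k)).aemeasurable).1 (hindep.precomp he)]
  exact congrArg Measure.pi (funext fun k => (measurePreserving_eval μ (e k)).map_eq)

section Finner

variable {ι κ : Type*} [DecidableEq ι] [Fintype κ] {X : ι → Type*} [∀ i, MeasurableSpace (X i)]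
  (μ : ∀ i, Measure (X i)) [∀ i, IsProbabilityMeasure (μ i)]
  {g : κ → (∀ i, X i) → ℝ≥0∞} {p : κ → ℝ} {D : κ → Set ι}

omit [Fintype κ] in
theorem lmarginal_update_of_dependsOn {g : (∀ i, X i) → ℝ≥0∞} (hg : Measurable g) {D : Set ι}
    (hD : DependsOn g D) {c : ι} (hc : c ∉ D) {s : Finset ι} (hs : c ∉ s) (x : ∀ i, X i) (r : X c) :
    (∫⋯∫⁻_s, g ∂μ) (Function.update x c r) = (∫⋯∫⁻_s, g ∂μ) x := by
  have hconst : (g ∘ fun x => Function.update x c r) = g := funext fun y =>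
    hD fun i hi => Function.update_of_ne (ne_of_mem_of_not_mem hi hc) _ _
  rw [lmarginal_update_of_notMem hg hs, hconst]

theorem lintegral_update_prod_rpow_le [∀ j, DecidablePred (· ∈ D j)] {c : ι}
    (hp : ∀ j, 0 ≤ p j) (hsum : ∑ j with c ∈ D j, p j = 1) (hg : ∀ j, Measurable (g j))
    (hc : ∀ j, c ∉ D j → ∀ x r, g j (Function.update x c r) = g j x) (x : ∀ i, X i) :
    ∫⁻ r, ∏ j, g j (Function.update x c r) ^ p j ∂μ c ≤
      ∏ j, (∫⁻ r, g j (Function.update x c r) ∂μ c) ^ p j := by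
  have hmeas (j : κ) : Measurable fun r => g j (Function.update x c r) :=
    (hg j).comp (measurable_update x)
  have hoff (r : X c) : ∏ j with c ∉ D j, g j (Function.update x c r) ^ p j =
      ∏ j with c ∉ D j, g j x ^ p j := Finset.prod_congr rfl fun j hj => by
    rw [hc j (Finset.mem_filter.1 hj).2]
  have hoff' : ∏ j with c ∉ D j, (∫⁻ r, g j (Function.update x c r) ∂μ c) ^ p j =
      ∏ j with c ∉ D j, g j x ^ p j := Finset.prod_congr rfl fun j hj => by
    simp [hc j (Finset.mem_filter.1 hj).2]
  simp only [← Finset.prod_filter_mul_prod_filter_not Finset.univ (fun j => c ∈ D j), hoff, hoff']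
  rw [lintegral_mul_const _ (Finset.measurable_fun_prod _ fun j _ => (hmeas j).pow_const _)]
  gcongr
  exact ENNReal.lintegral_prod_norm_pow_le _ (fun j _ => (hmeas j).aemeasurable) hsum
    fun j _ => hp j

theorem lmarginal_prod_rpow_le [∀ j, DecidablePred (· ∈ D j)] (hp : ∀ j, 0 ≤ p j)
    (hsum : ∀ c, ∑ j with c ∈ D j, p j = 1) (hg : ∀ j, Measurable (g j))
    (hD : ∀ j, DependsOn (g j) (D j)) (s : Finset ι) (x : ∀ i, X i) :
    (∫⋯∫⁻_s, (fun x => ∏ j, g j x ^ p j) ∂μ) x ≤ ∏ j, ((∫⋯∫⁻_s, g j ∂μ) x) ^ p j := by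
  induction s using Finset.induction_on generalizing x with
  | empty => simp
  | insert c s hc ih =>
    simp only [lmarginal_insert _ (hg _) hc]
    rw [lmarginal_insert _ (Finset.measurable_fun_prod _ fun j _ => (hg j).pow_const _) hc]
    exact (lintegral_mono fun r => ih _).trans <|
      lintegral_update_prod_rpow_le μ hp (hsum c) (fun j => (hg j).lmarginal μ)
        (fun j hj => lmarginal_update_of_dependsOn μ (hg j) (hD j) hj hc) x

omit [DecidableEq ι] in
/-- Finner's inequality. -/
theorem lintegral_prod_rpow_le_prod_lintegral_rpow [Fintype ι] [∀ j, DecidablePred (· ∈ D j)]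
    (hp : ∀ j, 0 ≤ p j) (hsum : ∀ c, ∑ j with c ∈ D j, p j = 1) (hg : ∀ j, Measurable (g j))
    (hD : ∀ j, DependsOn (g j) (D j)) :
    ∫⁻ x, ∏ j, g j x ^ p j ∂Measure.pi μ ≤ ∏ j, (∫⁻ x, g j x ∂Measure.pi μ) ^ p j := by
  classical
  obtain ⟨x⟩ : Nonempty (∀ i, X i) := (Measure.pi μ).nonempty_of_neZero
  simpa using lmarginal_prod_rpow_le μ hp hsum hg hD Finset.univ x

end Finner

section GaussMeasure

variable {ι : Type*} [Fintype ι]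

/-- The Gaussian probability measure on `ι → ℝ` with density `gaussProd 0 v b`. -/
def gaussMeasure (v b : ι → ℝ) : Measure (ι → ℝ) :=
  volume.withDensity fun x => ENNReal.ofReal (gaussProd 0 v b x)

theorem gaussMeasure_eq_pi {v : ι → ℝ} (hv : ∀ c, 0 < v c) (b : ι → ℝ) :
    gaussMeasure v b = Measure.pi fun c =>
      ProbabilityTheory.gaussianReal (b c) (v c ^ 2 / (2 * Real.pi)).toNNReal := by
  have hvar (c : ι) : (v c ^ 2 / (2 * Real.pi)).toNNReal ≠ 0 :=
    (Real.toNNReal_pos.2 (div_pos (pow_pos (hv c) 2) Real.two_pi_pos)).ne'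
  have hgauss (c : ι) := ProbabilityTheory.gaussianReal_of_var_ne_zero (b c) (hvar c)
  have (c : ι) : SigmaFinite (volume.withDensity
      (ProbabilityTheory.gaussianPDF (b c) (v c ^ 2 / (2 * Real.pi)).toNNReal)) := by
    rw [← hgauss c]; infer_instance
  simp only [hgauss]
  rw [pi_withDensity _ fun c => ProbabilityTheory.measurable_gaussianPDF _ _, ← volume_pi,
    gaussMeasure]
  refine congrArg _ (funext fun x => ?_)
  simp only [gaussProd, Pi.zero_apply]
  rw [ENNReal.ofReal_prod_of_nonneg fun c _ => (gaussKernel_zero_pos (hv c) _).le]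
  exact Finset.prod_congr rfl fun c _ => by
    rw [gaussKernel_zero_eq_gaussianPDFReal (hv c), ProbabilityTheory.gaussianPDF]

theorem lintegral_gaussMeasure (v b : ι → ℝ) (f : (ι → ℝ) → ℝ≥0∞) :
    ∫⁻ x, f x ∂gaussMeasure v b = ∫⁻ x, f x * ENNReal.ofReal (gaussProd 0 v b x) := by
  rw [gaussMeasure, lintegral_withDensity_eq_lintegral_mul_non_measurable _
    (continuous_gaussProd 0 v b).measurable.ennreal_ofReal (by simp)]
  simp only [Pi.mul_apply, mul_comm]

end GaussMeasure

section Corners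

variable {m : ℕ}

/-- The product `∏_j F_j (Π_j x)`. -/
def cornerProd (F : Corner m → (Fin m → ℝ) → ℝ) (x : Idx m → ℝ) : ℝ := ∏ j, F j (proj j x)

/-- Tuples of continuous compactly supported functions. -/
def IsTestTuple (F : Corner m → (Fin m → ℝ) → ℝ) : Prop :=
  ∀ j, Continuous (F j) ∧ HasCompactSupport (F j)

@[fun_prop]
theorem continuous_proj (j : Corner m) : Continuous (proj j : (Idx m → ℝ) → Fin m → ℝ) := by
  unfold proj; fun_prop

theorem IsTestTuple.continuous_cornerProd {F : Corner m → (Fin m → ℝ) → ℝ} (hF : IsTestTuple F) :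
    Continuous (cornerProd F) :=
  continuous_finsetProd _ fun j _ => (hF j).1.comp (continuous_proj j)

theorem IsTestTuple.hasCompactSupport_cornerProd {F : Corner m → (Fin m → ℝ) → ℝ}
    (hF : IsTestTuple F) : HasCompactSupport (cornerProd F) := by
  have hcont : Continuous fun z : (Fin m → ℝ) × (Fin m → ℝ) => (Sum.elim z.1 z.2 : Idx m → ℝ) :=
    continuous_pi (by rintro (k | k) <;> simp only [Sum.elim_inl, Sum.elim_inr] <;> fun_prop)
  refine .intro (((hF 0).2.isCompact.prod (hF 1).2.isCompact).image hcont) fun x hx => ?_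
  contrapose! hx
  have hne := Finset.prod_ne_zero_iff.1 hx
  refine ⟨(proj 0 x, proj 1 x), ⟨subset_tsupport _ (hne 0 (Finset.mem_univ _)),
    subset_tsupport _ (hne 1 (Finset.mem_univ _))⟩, ?_⟩
  ext (k | k) <;> simp [proj, sel]

/-- The position of a coordinate of `ℝ^{2m}`. -/
def pos : Idx m → Fin m := Sum.elim id id

/-- The upper index of a coordinate of `ℝ^{2m}`. -/
def side : Idx m → Fin 2 := Sum.elim 0 1

/-- The coordinate of `ℝ^{2m}` at position `k` with upper index `ε`. -/
def coord (k : Fin m) (ε : Fin 2) : Idx m := if ε = 0 then Sum.inl k else Sum.inr k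

theorem sel_eq_coord (j : Corner m) (k : Fin m) : sel j k = coord k (j k) := rfl

@[simp] theorem pos_coord (k : Fin m) (ε : Fin 2) : pos (coord k ε) = k := by
  unfold coord; split_ifs <;> rfl

@[simp] theorem side_coord (k : Fin m) (ε : Fin 2) : side (coord k ε) = ε := by
  fin_cases ε <;> rfl

@[simp] theorem coord_pos_side (c : Idx m) : coord (pos c) (side c) = c := by
  rcases c with k | k <;> rfl

@[simp] theorem pos_sel (j : Corner m) (k : Fin m) : pos (sel j k) = k := pos_coord k (j k)

theorem sel_injective (j : Corner m) : Function.Injective (sel j) :=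
  Function.LeftInverse.injective (pos_sel j)

theorem mem_range_sel {j : Corner m} {c : Idx m} : c ∈ Set.range (sel j) ↔ j (pos c) = side c := by
  refine ⟨?_, fun h => ⟨pos c, by rw [sel_eq_coord, h, coord_pos_side]⟩⟩
  rintro ⟨k, rfl⟩
  rw [pos_sel, sel_eq_coord, side_coord]

theorem prod_pos_eq {M : Type*} [CommMonoid M] (k : Fin m) (f : Idx m → M) :
    ∏ c : {c : Idx m // pos c = k}, f c = ∏ ε, f (coord k ε) :=
  Fintype.prod_equiv ⟨fun c => side c.1, fun ε => ⟨coord k ε, pos_coord k ε⟩,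
    fun c => Subtype.ext (by rcases c with ⟨c, rfl⟩; exact coord_pos_side c),
    fun ε => side_coord k ε⟩ _ _ fun c => by rcases c with ⟨c, rfl⟩; simp

theorem card_corner_apply_eq (k : Fin m) (ε : Fin 2) :
    (Finset.univ.filter fun j : Corner m => j k = ε).card = 2 ^ (m - 1) := by
  simpa using Fintype.card_filter_piFinset_const_eq_of_mem (κ := Fin 2) Finset.univ k
    (Finset.mem_univ ε)

/-- The tuple `(F_j)` with the `k`-th upper index of every corner replaced by `ε`. -/
def faceTuple (F : Corner m → (Fin m → ℝ) → ℝ) (k : Fin m) (ε : Fin 2) :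
    Corner m → (Fin m → ℝ) → ℝ := fun j => F (Function.update j k ε)

theorem IsTestTuple.faceTuple {F : Corner m → (Fin m → ℝ) → ℝ} (hF : IsTestTuple F) (k : Fin m)
    (ε : Fin 2) : IsTestTuple (faceTuple F k ε) := fun _ => hF _

/-- The product of the `F_j` with `j k = ε`, their `k`-th argument being set to `r`. -/
def faceProd (F : Corner m → (Fin m → ℝ) → ℝ) (k : Fin m) (ε : Fin 2) (x : Idx m → ℝ) (r : ℝ) : ℝ :=
  ∏ j with j k = ε, F j (Function.update (proj j x) k r)

theorem cornerProd_eq_prod_faceProd (F : Corner m → (Fin m → ℝ) → ℝ) (k : Fin m) (x : Idx m → ℝ) :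
    cornerProd F x = ∏ ε, faceProd F k ε x (x (coord k ε)) := by
  rw [cornerProd, ← Finset.prod_fiberwise Finset.univ (fun j : Corner m => j k)]
  refine Finset.prod_congr rfl fun ε _ => Finset.prod_congr rfl fun j hj => ?_
  rw [← (Finset.mem_filter.1 hj).2, ← sel_eq_coord]
  exact congrArg (F j) (Function.update_eq_self k (proj j x)).symm

theorem faceProd_congr (F : Corner m → (Fin m → ℝ) → ℝ) (k : Fin m) (ε : Fin 2) {x y : Idx m → ℝ}
    (hxy : ∀ c, pos c ≠ k → x c = y c) : faceProd F k ε x = faceProd F k ε y := by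
  funext r
  refine Finset.prod_congr rfl fun j _ => congrArg (F j) (funext fun l => ?_)
  rcases eq_or_ne l k with rfl | hl
  · simp
  · simp [proj, hl, hxy (sel j l)]

theorem faceProd_faceTuple (F : Corner m → (Fin m → ℝ) → ℝ) (k : Fin m) (ε δ : Fin 2) :
    faceProd (faceTuple F k ε) k δ = faceProd F k ε := by
  funext x r
  refine Finset.prod_bij' (fun j _ => Function.update j k ε) (fun j _ => Function.update j k δ)
    (by simp) (by simp) ?_ ?_ fun j _ => congrArg (F _) (funext fun l => ?_)
  · intro j hj; simp [← (Finset.mem_filter.1 hj).2]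
  · intro j hj; simp [← (Finset.mem_filter.1 hj).2]
  · rcases eq_or_ne l k with rfl | hl
    · simp
    · simp [Function.update_of_ne hl, proj, sel]

/-- The point of `ℝ^{2m}` with coordinates `z` at position `k` and `y` at the other positions. -/
def joinAt (k : Fin m) (z : {c : Idx m // pos c = k} → ℝ) (y : {c : Idx m // ¬ pos c = k} → ℝ) :
    Idx m → ℝ :=
  (MeasurableEquiv.piEquivPiSubtypeProd (fun _ => ℝ) fun c : Idx m => pos c = k).symm (z, y)

theorem joinAt_apply (k : Fin m) (z : {c : Idx m // pos c = k} → ℝ)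
    (y : {c : Idx m // ¬ pos c = k} → ℝ) (c : Idx m) :
    joinAt k z y c = if h : pos c = k then z ⟨c, h⟩ else y ⟨c, h⟩ := rfl

theorem cornerProd_mul_prod_joinAt (F : Corner m → (Fin m → ℝ) → ℝ) (k : Fin m)
    (ψ : Idx m → ℝ → ℝ) (z : {c : Idx m // pos c = k} → ℝ) (y : {c : Idx m // ¬ pos c = k} → ℝ) :
    cornerProd F (joinAt k z y) * ∏ c, ψ c (joinAt k z y c) =
      (∏ c : {c : Idx m // ¬ pos c = k}, ψ c (y c)) *
        ∏ c : {c : Idx m // pos c = k},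
          faceProd F k (side c.1) (joinAt k 0 y) (z c) * ψ c (z c) := by
  have hon (c : {c : Idx m // pos c = k}) : joinAt k z y c = z c := by
    rw [joinAt_apply, dif_pos c.2]
  have hoff (c : {c : Idx m // ¬ pos c = k}) : joinAt k z y c = y c := by
    rw [joinAt_apply, dif_neg c.2]
  have hface (ε : Fin 2) : faceProd F k ε (joinAt k z y) = faceProd F k ε (joinAt k 0 y) :=
    faceProd_congr F k ε fun c hc => by rw [joinAt_apply, joinAt_apply, dif_neg hc, dif_neg hc]
  have hcorner : cornerProd F (joinAt k z y) =
      ∏ c : {c : Idx m // pos c = k}, faceProd F k (side c.1) (joinAt k 0 y) (z c) := by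
    simp only [cornerProd_eq_prod_faceProd F k, hface, ← hon]
    rw [prod_pos_eq k fun c => faceProd F k (side c) (joinAt k 0 y) (joinAt k z y c)]
    simp only [side_coord]
  rw [hcorner, ← Fintype.prod_subtype_mul_prod_subtype (fun c => pos c = k),
    Finset.prod_mul_distrib]
  simp only [hon, hoff]
  ring

/-- Fubini for the pair of coordinates at position `k`: for fixed other coordinates, the integrand
is a product of functions of these two. -/
theorem IsTestTuple.integral_cornerProd_mul_prod {F : Corner m → (Fin m → ℝ) → ℝ}
    (hF : IsTestTuple F) (k : Fin m) {ψ : Idx m → ℝ → ℝ} (hψ : ∀ c, Continuous (ψ c)) :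
    Integrable (fun y : {c : Idx m // ¬ pos c = k} → ℝ =>
      (∏ c : {c : Idx m // ¬ pos c = k}, ψ c (y c)) *
        ∏ ε, ∫ r, faceProd F k ε (joinAt k 0 y) r * ψ (coord k ε) r) ∧
    ∫ x, cornerProd F x * ∏ c, ψ c (x c) = ∫ y : {c : Idx m // ¬ pos c = k} → ℝ,
      (∏ c : {c : Idx m // ¬ pos c = k}, ψ c (y c)) *
        ∏ ε, ∫ r, faceProd F k ε (joinAt k 0 y) r * ψ (coord k ε) r := by
  have hmp := (volume_preserving_piEquivPiSubtypeProd (fun _ : Idx m => ℝ)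
    fun c : Idx m => pos c = k).symm
  have hint : Integrable fun x => cornerProd F x * ∏ c, ψ c (x c) :=
    (hF.continuous_cornerProd.mul (by fun_prop)).integrable_of_hasCompactSupport
      hF.hasCompactSupport_cornerProd.mul_right
  have hjoin : Integrable (fun zy : ({c : Idx m // pos c = k} → ℝ) × _ =>
      cornerProd F (joinAt k zy.1 zy.2) * ∏ c, ψ c (joinAt k zy.1 zy.2 c))
      (volume.prod volume) := hmp.integrable_comp_of_integrable hint
  have hinner (y : {c : Idx m // ¬ pos c = k} → ℝ) :
      ∫ z, cornerProd F (joinAt k z y) * ∏ c, ψ c (joinAt k z y c) =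
        (∏ c : {c : Idx m // ¬ pos c = k}, ψ c (y c)) *
          ∏ ε, ∫ r, faceProd F k ε (joinAt k 0 y) r * ψ (coord k ε) r := by
    simp only [cornerProd_mul_prod_joinAt, integral_const_mul]
    rw [integral_fintype_prod_volume_eq_prod fun (c : {c : Idx m // pos c = k}) r =>
      faceProd F k (side c.1) (joinAt k 0 y) r * ψ c r,
      prod_pos_eq k fun c => ∫ r, faceProd F k (side c) (joinAt k 0 y) r * ψ c r]
    simp only [side_coord]
  have hfubini := integral_prod_symm _ hjoin
  simp only [hinner] at hfubini
  refine ⟨by simpa only [hinner] using hjoin.integral_prod_right, ?_⟩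
  rw [← hfubini]
  exact (hmp.integral_comp (MeasurableEquiv.measurableEmbedding _) _).symm

/-- The family `ψ` with the two functions at position `k` replaced by `φ`. -/
def replaceAt (k : Fin m) (φ : ℝ → ℝ) (ψ : Idx m → ℝ → ℝ) : Idx m → ℝ → ℝ :=
  fun c => if pos c = k then φ else ψ c

/-- The Cauchy–Schwarz inequality at position `k`. -/
theorem IsTestTuple.abs_integral_cornerProd_mul_prod_le {F : Corner m → (Fin m → ℝ) → ℝ}
    (hF : IsTestTuple F) (k : Fin m) {ψ ψ' : Idx m → ℝ → ℝ} (hψ : ∀ c, Continuous (ψ c))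
    (hψ' : ∀ c, Continuous (ψ' c)) (hle : ∀ c, pos c ≠ k → ∀ r, |ψ c r| ≤ ψ' c r) :
    |∫ x, cornerProd F x * ∏ c, ψ c (x c)| ≤
      ∑ ε, ∫ x, cornerProd (SBL.faceTuple F k ε) x *
        ∏ c, replaceAt k (ψ (coord k ε)) ψ' c (x c) := by
  obtain ⟨hint, heq⟩ := hF.integral_cornerProd_mul_prod k hψ
  have hcont (ε : Fin 2) (c : Idx m) : Continuous (replaceAt k (ψ (coord k ε)) ψ' c) := by
    unfold replaceAt; split_ifs <;> apply_assumption
  have hface (ε : Fin 2) := (hF.faceTuple k ε).integral_cornerProd_mul_prod k (hcont ε)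
  have hon (φ : ℝ → ℝ) (ε : Fin 2) : replaceAt k φ ψ' (coord k ε) = φ := if_pos (pos_coord k ε)
  have hoff (φ : ℝ → ℝ) (c : {c : Idx m // ¬ pos c = k}) : replaceAt k φ ψ' c = ψ' c := if_neg c.2
  simp only [faceProd_faceTuple, hon, hoff, Finset.prod_const, Finset.card_univ,
    Fintype.card_fin] at hface
  simp only [heq, fun ε => (hface ε).2, ← integral_finsetSum _ fun ε _ => (hface ε).1]
  refine abs_integral_le_integral_abs.trans
    (integral_mono hint.abs (integrable_finsetSum _ fun ε _ => (hface ε).1) fun y => ?_)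
  simp only [abs_mul, Finset.abs_prod, ← Finset.mul_sum]
  have hprod : ∏ c : {c : Idx m // ¬ pos c = k}, |ψ c (y c)| ≤
      ∏ c : {c : Idx m // ¬ pos c = k}, ψ' c (y c) :=
    Finset.prod_le_prod (fun _ _ => abs_nonneg _) fun c _ => hle c c.2 _
  refine mul_le_mul hprod ?_ (by positivity) ((by positivity : (0 : ℝ) ≤ _).trans hprod)
  rw [Fin.prod_univ_two, Fin.sum_univ_two]
  nlinarith [sq_abs (∫ r, faceProd F k 0 (joinAt k 0 y) r * ψ (coord k 0) r),
    sq_abs (∫ r, faceProd F k 1 (joinAt k 0 y) r * ψ (coord k 1) r),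
    abs_nonneg (∫ r, faceProd F k 0 (joinAt k 0 y) r * ψ (coord k 0) r)]

theorem IsTestTuple.integral_cornerProd_mul_prod_nonneg {F : Corner m → (Fin m → ℝ) → ℝ}
    (hF : IsTestTuple F) (k : Fin m) (hsym : ∀ ε, SBL.faceTuple F k ε = F) {ψ : Idx m → ℝ → ℝ}
    (hψ : ∀ c, Continuous (ψ c)) (hk : ψ (coord k 0) = ψ (coord k 1))
    (hpos : ∀ c, pos c ≠ k → ∀ r, 0 ≤ ψ c r) :
    0 ≤ ∫ x, cornerProd F x * ∏ c, ψ c (x c) := by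
  have hface : faceProd F k 1 = faceProd F k 0 := by
    conv_lhs => rw [← hsym 0, faceProd_faceTuple]
  rw [(hF.integral_cornerProd_mul_prod k hψ).2]
  refine integral_nonneg fun y => mul_nonneg (Finset.prod_nonneg fun c _ => hpos c c.2 _) ?_
  rw [Fin.prod_univ_two, hface, hk]
  exact mul_self_nonneg _

/-- Finner's inequality for the projections `Π_j`: every coordinate of `ℝ^{2m}` is seen by exactly
`2^{m-1}` corners. -/
theorem lintegral_prod_proj_rpow_le (μ : Idx m → Measure ℝ) [∀ c, IsProbabilityMeasure (μ c)]
    {f : Corner m → (Fin m → ℝ) → ℝ≥0∞} (hf : ∀ j, Measurable (f j)) :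
    ∫⁻ x, ∏ j, f j (proj j x) ^ (2 ^ (m - 1) : ℝ)⁻¹ ∂Measure.pi μ ≤
      ∏ j, (∫⁻ y, f j y ∂Measure.pi fun k => μ (sel j k)) ^ (2 ^ (m - 1) : ℝ)⁻¹ := by
  classical
  have hdep (j : Corner m) : DependsOn (fun x => f j (proj j x)) (Set.range (sel j)) :=
    fun x y hxy => congrArg (f j) (funext fun k => hxy _ ⟨k, rfl⟩)
  have hsum (c : Idx m) : ∑ j with c ∈ Set.range (sel j), (2 ^ (m - 1) : ℝ)⁻¹ = 1 := by
    simp only [mem_range_sel, Finset.sum_const, card_corner_apply_eq, nsmul_eq_mul]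
    simp
  refine (lintegral_prod_rpow_le_prod_lintegral_rpow μ (fun _ => by positivity) hsum
    (fun j => (hf j).comp (continuous_proj j).measurable) hdep).trans_eq ?_
  refine Finset.prod_congr rfl fun j _ => ?_
  rw [← map_pi_comp_of_injective μ (sel_injective j)]
  exact congrArg (· ^ _) (lintegral_map (hf j) (continuous_proj j).measurable).symm

theorem enorm_finsetProd {ι : Type*} (s : Finset ι) (f : ι → ℝ) :
    ‖∏ i ∈ s, f i‖ₑ = ∏ i ∈ s, ‖f i‖ₑ := by
  simp only [enorm_eq_nnnorm, nnnorm_prod, ENNReal.ofNNReal_finsetProd]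

theorem enorm_gaussPairing_cornerProd_le {F : Corner m → (Fin m → ℝ) → ℝ}
    (hF : ∀ j, Measurable (F j)) (γ : Idx m → ℕ) {v : Idx m → ℝ} (hv : ∀ c, 0 < v c)
    (b : Idx m → ℝ) :
    ‖gaussPairing (cornerProd F) γ v b‖ₑ ≤ ENNReal.ofReal (∏ c, gaussKernelConst (γ c)) *
      ∏ j, (∫⁻ y, ‖F j y‖ₑ ^ 2 ^ (m - 1) ∂gaussMeasure (proj j (2 • v)) (proj j b)) ^
        (2 ^ (m - 1) : ℝ)⁻¹ := by
  have hv2 (c : Idx m) : 0 < (2 • v) c := by simpa using hv c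
  have hroot (a : ℝ) : ‖a‖ₑ = (‖a‖ₑ ^ 2 ^ (m - 1)) ^ (2 ^ (m - 1) : ℝ)⁻¹ := by
    rw [← ENNReal.rpow_natCast, ← ENNReal.rpow_mul]
    simp
  have hpow (j : Corner m) : Measurable fun y => ‖F j y‖ₑ ^ 2 ^ (m - 1) := by
    have := hF j; fun_prop
  have hK : 0 ≤ ∏ c, gaussKernelConst (γ c) :=
    Finset.prod_nonneg fun c _ => gaussKernelConst_nonneg _
  calc ‖gaussPairing (cornerProd F) γ v b‖ₑ
      ≤ ∫⁻ x, ‖cornerProd F x * gaussProd γ v b x‖ₑ := enorm_integral_le_lintegral_enorm _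
    _ ≤ ∫⁻ x, ENNReal.ofReal (∏ c, gaussKernelConst (γ c)) *
          (‖cornerProd F x‖ₑ * ENNReal.ofReal (gaussProd 0 (2 • v) b x)) := by
        refine lintegral_mono fun x => ?_
        rw [enorm_mul, mul_left_comm, ← ENNReal.ofReal_mul hK,
          Real.enorm_eq_ofReal_abs (gaussProd _ _ _ _)]
        gcongr
        exact abs_gaussProd_le γ hv b x
    _ = ENNReal.ofReal (∏ c, gaussKernelConst (γ c)) *
          ∫⁻ x, ∏ j, (‖F j (proj j x)‖ₑ ^ 2 ^ (m - 1)) ^ (2 ^ (m - 1) : ℝ)⁻¹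
            ∂gaussMeasure (2 • v) b := by
        rw [lintegral_const_mul' _ _ ENNReal.ofReal_ne_top, lintegral_gaussMeasure]
        simp only [cornerProd, enorm_finsetProd, ← hroot]
    _ ≤ _ := by
        gcongr
        rw [gaussMeasure_eq_pi hv2]
        refine (lintegral_prod_proj_rpow_le _ hpow).trans_eq (Finset.prod_congr rfl fun j _ => ?_)
        rw [gaussMeasure_eq_pi (v := proj j (2 • v)) fun k => hv2 (sel j k)]
        rfl

end Corners

section Pairing

variable {m : ℕ}

/-- The widths `w` are at most `s`, and `D` controls how small they are. -/
structure WidthBound (w : Fin m → ℝ) (s D : ℝ) : Prop where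
  one_le : 1 ≤ s
  pos : ∀ k, 0 < w k
  le : ∀ k, w k ≤ s
  prod_le : ∏ k, max 1 (w k)⁻¹ ≤ D

theorem WidthBound.one_le_prod {w : Fin m → ℝ} {s D : ℝ} (hw : WidthBound w s D) : 1 ≤ D :=
  (Finset.one_le_prod fun _ _ => le_max_left _ _).trans hw.prod_le

theorem WidthBound.mono {w w' : Fin m → ℝ} {s s' D : ℝ} (hw : WidthBound w s D) (hs : s ≤ s')
    (hww' : w ≤ w') (hs' : ∀ k, w' k ≤ s') : WidthBound w' s' D where
  one_le := hw.one_le.trans hs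
  pos k := (hw.pos k).trans_le (hww' k)
  le := hs'
  prod_le := (Finset.prod_le_prod (fun _ _ => by positivity) fun k _ =>
    max_le_max le_rfl (inv_anti₀ (hw.pos k) (hww' k))).trans hw.prod_le

theorem WidthBound.two_smul {w : Fin m → ℝ} {s D : ℝ} (hw : WidthBound w s D) :
    WidthBound (2 • w) (2 * s) D :=
  hw.mono (by linarith [hw.one_le]) (fun k => by simpa [two_mul] using (hw.pos k).le)
    fun k => by simpa using hw.le k

/-- The pairing of `∏_j F_j ∘ Π_j` with the product kernel centred at `J p`, whose width at
position `k` is `t w_k`. -/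
def scalePairing (J : Matrix (Idx m) (Fin m) ℝ) (F : Corner m → (Fin m → ℝ) → ℝ) (γ : Idx m → ℕ)
    (w p : Fin m → ℝ) (t : ℝ) : ℝ :=
  gaussPairing (cornerProd F) γ (t • (w ∘ pos)) (J *ᵥ p)

/-- The Euler operator `v_c ∂/∂v_c` in the width at the coordinate `c`, acting on quantities
indexed by the orders of the kernels. -/
def eulerOp (N : (Idx m → ℕ) → ℝ) (γ : Idx m → ℕ) (c : Idx m) : ℝ :=
  γ c * N γ + (2 * Real.pi)⁻¹ * N (γ + Pi.single c 2)

/-- Normalised data: the Gaussian averages of the `F_j` at the points above the graph of `ρ / 2`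
grow at most like the power `α` of the eccentricity. -/
structure Admissible (α : ℝ) (ρ : (Fin m → ℝ) → ℝ) (J : Matrix (Idx m) (Fin m) ℝ)
    (F : Corner m → (Fin m → ℝ) → ℝ) : Prop where
  isTestTuple : IsTestTuple F
  lintegral_le : ∀ (j : Corner m) (p w : Fin m → ℝ) (t s D : ℝ), 0 < t → ρ p ≤ 2 * t →
    WidthBound w s D → ∫⁻ y, ‖F j y‖ₑ ^ 2 ^ (m - 1) ∂gaussMeasure (t • w) (proj j (J *ᵥ p)) ≤
      ENNReal.ofReal (D * s ^ α)

/-- The constant in the pointwise bound for `scalePairing`. -/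
def pairingConst (α : ℝ) (γ : Idx m → ℕ) : ℝ := 4 ^ α * ∏ c, gaussKernelConst (γ c)

theorem pairingConst_nonneg (α : ℝ) (γ : Idx m → ℕ) : 0 ≤ pairingConst α γ :=
  mul_nonneg (by positivity) (Finset.prod_nonneg fun _ _ => gaussKernelConst_nonneg _)

theorem prod_corner_const_rpow [NeZero m] (x : ℝ≥0∞) :
    ∏ _j : Corner m, x ^ (2 ^ (m - 1) : ℝ)⁻¹ = x ^ 2 := by
  obtain ⟨n, rfl⟩ := Nat.exists_eq_succ_of_ne_zero (NeZero.ne m)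
  simp only [Finset.prod_const, Finset.card_univ, Fintype.card_fun, Fintype.card_fin]
  rw [← ENNReal.rpow_natCast, ← ENNReal.rpow_mul, ← ENNReal.rpow_natCast, Nat.succ_sub_one]
  congr 1
  push_cast
  rw [pow_succ]
  field_simp

variable {α : ℝ} {ρ : (Fin m → ℝ) → ℝ} {J : Matrix (Idx m) (Fin m) ℝ}
  {F : Corner m → (Fin m → ℝ) → ℝ}

theorem Admissible.abs_scalePairing_le [NeZero m] (h : Admissible α ρ J F) (γ : Idx m → ℕ)
    {w p : Fin m → ℝ} {s D t : ℝ} (hw : WidthBound w s D) (ht : 0 < t) (hp : ρ p ≤ 2 * t) :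
    |scalePairing J F γ w p t| ≤ pairingConst α γ * (D ^ 2 * s ^ (2 * α)) := by
  have hs := hw.one_le
  have hD := hw.one_le_prod
  have hwidth (j : Corner m) : proj j (2 • t • (w ∘ pos)) = t • (2 • w) := by
    funext k
    simp only [proj, Pi.smul_apply, Function.comp_apply, pos_sel]
    exact smul_comm _ _ _
  have havg (j : Corner m) := h.lintegral_le j p (2 • w) t (2 * s) D ht hp hw.two_smul
  have hK : 0 ≤ ∏ c, gaussKernelConst (γ c) :=
    Finset.prod_nonneg fun _ _ => gaussKernelConst_nonneg _
  have hsq : pairingConst α γ * (D ^ 2 * s ^ (2 * α)) =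
      (∏ c, gaussKernelConst (γ c)) * (D * (2 * s) ^ α) ^ 2 := by
    rw [pairingConst, Real.mul_rpow two_pos.le (by linarith), two_mul α,
      Real.rpow_add (by linarith), show (4 : ℝ) = 2 * 2 by norm_num,
      Real.mul_rpow two_pos.le two_pos.le]
    ring
  rw [hsq, ← ENNReal.ofReal_le_ofReal_iff (by positivity), ← Real.enorm_eq_ofReal_abs,
    ENNReal.ofReal_mul hK, ENNReal.ofReal_pow (by positivity), ← prod_corner_const_rpow (m := m)]
  refine (enorm_gaussPairing_cornerProd_le (fun j => (h.isTestTuple j).1.measurable) γ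
    (v := t • (w ∘ pos)) (fun c => mul_pos ht (hw.pos _)) _).trans ?_
  simp only [hwidth]
  gcongr with j
  exact havg j

theorem IsTestTuple.continuousOn_scalePairing (hF : IsTestTuple F) (γ : Idx m → ℕ)
    {w : Fin m → ℝ} (hw : ∀ k, 0 < w k) :
    ContinuousOn (fun z : (Fin m → ℝ) × ℝ => scalePairing J F γ w z.1 z.2)
      (Set.univ ×ˢ Set.Ioi 0) :=
  (continuousOn_gaussPairing hF.continuous_cornerProd hF.hasCompactSupport_cornerProd γ).comp
    (f := fun z : (Fin m → ℝ) × ℝ => (z.2 • (w ∘ pos), J *ᵥ z.1))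
    (by fun_prop) fun _ hz c => mul_pos hz.2 (hw _)

theorem IsTestTuple.hasDerivAt_scalePairing_scale (hF : IsTestTuple F) (γ : Idx m → ℕ)
    {w : Fin m → ℝ} (hw : ∀ k, 0 < w k) (p : Fin m → ℝ) {t : ℝ} (ht : 0 < t) :
    HasDerivAt (fun t => scalePairing J F γ w p t)
      (t⁻¹ * ∑ c, eulerOp (scalePairing J F · w p t) γ c) t := by
  have h := hasDerivAt_gaussPairing hF.continuous_cornerProd hF.hasCompactSupport_cornerProd γ
    0 (w ∘ pos) (J *ᵥ p) 0 (r := t) fun c => by simpa using mul_pos ht (hw _)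
  simp only [zero_add, smul_zero, add_zero, Pi.zero_apply, zero_div, zero_mul, sub_zero] at h
  refine h.congr_deriv ?_
  rw [Finset.mul_sum]
  refine Finset.sum_congr rfl fun c _ => ?_
  rw [Pi.smul_apply, smul_eq_mul, Function.comp_apply, div_mul_cancel_right₀ (hw _).ne']
  rfl

theorem IsTestTuple.measurable_scalePairing (hF : IsTestTuple F) (J : Matrix (Idx m) (Fin m) ℝ)
    (γ : Idx m → ℕ) (w : Fin m → ℝ) :
    Measurable fun z : (Fin m → ℝ) × ℝ => scalePairing J F γ w z.1 z.2 := by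
  have hderiv (n : ℕ) : Measurable (gaussDeriv n) := Continuous.measurable (by fun_prop)
  have hcorner : Measurable (cornerProd F) := hF.continuous_cornerProd.measurable
  refine (StronglyMeasurable.integral_prod_right (f := fun (z : (Fin m → ℝ) × ℝ) x =>
    cornerProd F x * gaussProd γ (z.2 • (w ∘ pos)) (J *ᵥ z.1) x)
    (Measurable.stronglyMeasurable ?_)).measurable
  unfold Function.uncurry gaussProd gaussKernel mulVec dotProduct
  fun_prop

/-- The derivative of `scalePairing` when the widths move in the direction `w'` and the base
point moves in the direction `q`. -/
def scalePairingDeriv (J : Matrix (Idx m) (Fin m) ℝ) (F : Corner m → (Fin m → ℝ) → ℝ)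
    (γ : Idx m → ℕ) (w w' p q : Fin m → ℝ) (t : ℝ) : ℝ :=
  ∑ c, (w' (pos c) / w (pos c) * eulerOp (scalePairing J F · w p t) γ c -
    (J *ᵥ q) c / w (pos c) * (t⁻¹ * scalePairing J F (γ + Pi.single c 1) w p t))

theorem IsTestTuple.hasDerivAt_scalePairing (hF : IsTestTuple F) (γ : Idx m → ℕ)
    (w w' p q : Fin m → ℝ) {r t : ℝ} (hr : ∀ k, 0 < (w + r • w') k) (ht : 0 < t) :
    HasDerivAt (fun r : ℝ => scalePairing J F γ (w + r • w') (p + r • q) t)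
      (scalePairingDeriv J F γ (w + r • w') w' (p + r • q) q t) r := by
  have hwidth (r : ℝ) :
      t • ((w + r • w') ∘ pos) = t • (w ∘ pos) + r • t • (w' ∘ (pos (m := m))) := by
    rw [smul_comm r t, ← smul_add]; rfl
  have h := hasDerivAt_gaussPairing hF.continuous_cornerProd hF.hasCompactSupport_cornerProd γ
    (t • (w ∘ pos)) (t • (w' ∘ pos)) (J *ᵥ p) (J *ᵥ q) (r := r) fun c => by
      rw [← hwidth]; exact mul_pos ht (hr _)
  simp only [← hwidth, ← mulVec_smul, ← mulVec_add] at h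
  refine h.congr_deriv (Finset.sum_congr rfl fun c _ => ?_)
  simp only [Pi.smul_apply, smul_eq_mul, Function.comp_apply]
  rw [mul_div_mul_left _ _ ht.ne', mul_comm t, ← div_div]
  simp only [eulerOp, scalePairing, div_eq_mul_inv, mul_assoc]

end Pairing

section DominatedDerivative

open Filter Asymptotics Topology

variable {X : Type*} [MeasurableSpace X] {μ : Measure X} {A : Set X}

theorem integrableOn_of_isBigO_one (hA : MeasurableSet A) (hμA : μ A < ∞) {f : X → ℝ}
    (hf : AEStronglyMeasurable f (μ.restrict A)) (hbd : f =O[𝓟 A] fun _ => (1 : ℝ)) :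
    IntegrableOn f A μ := by
  obtain ⟨C, hC⟩ := isBigO_principal.1 hbd
  refine IntegrableOn.of_bound hμA hf C ?_
  filter_upwards [ae_restrict_mem hA] with z hz
  simpa using hC z hz

theorem hasDerivAt_setIntegral_of_isBigO_one (hA : MeasurableSet A) (hμA : μ A < ∞)
    {f f' : ℝ → X → ℝ} {r₀ : ℝ} (hf : ∀ᶠ r in 𝓝 r₀, AEStronglyMeasurable (f r) (μ.restrict A))
    (hint : IntegrableOn (f r₀) A μ) (hf' : AEStronglyMeasurable (f' r₀) (μ.restrict A))
    (hbd : (fun x : ℝ × X => f' x.1 x.2) =O[𝓝 r₀ ×ˢ 𝓟 A] fun _ => (1 : ℝ))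
    (hderiv : ∀ᶠ r in 𝓝 r₀, ∀ z ∈ A, HasDerivAt (f · z) (f' r z) r) :
    HasDerivAt (fun r => ∫ z in A, f r z ∂μ) (∫ z in A, f' r₀ z ∂μ) r₀ := by
  obtain ⟨C, hC⟩ := hbd.bound
  have hC' := eventually_prod_principal_iff.1 hC
  refine (hasDerivAt_integral_of_dominated_loc_of_deriv_le (bound := fun _ => C)
    (hC'.and hderiv) hf hint hf' ?_ (integrableOn_const hμA.ne) ?_).2
  · filter_upwards [ae_restrict_mem hA] with z hz r hr
    simpa using hr.1 z hz
  · filter_upwards [ae_restrict_mem hA] with z hz r hr using hr.2 z hz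

end DominatedDerivative

section Sawtooth

variable {m : ℕ}

/-- The region between the graph of `ρ` and the height `ℓ`. -/
def sawtooth (ρ : (Fin m → ℝ) → ℝ) (ℓ : ℝ) : Set ((Fin m → ℝ) × ℝ) :=
  {z | z.2 ∈ Set.Ioo (ρ z.1) ℓ}

/-- A Lipschitz lower boundary for a region below the height `ℓ`. -/
structure IsStoppingHeight (ℓ : ℝ) (ρ : (Fin m → ℝ) → ℝ) : Prop where
  lipschitzWith : LipschitzWith 1 ρ
  exists_pos_le : ∃ τ > 0, ∀ p, τ ≤ ρ p
  volume_lt_top : volume {p | ρ p < 2 * ℓ} < ∞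

/-- The measure of the enlarged base of `sawtooth ρ ℓ`. -/
def baseVolume (ρ : (Fin m → ℝ) → ℝ) (ℓ : ℝ) : ℝ := volume.real {p | ρ p < 2 * ℓ}

theorem baseVolume_nonneg (ρ : (Fin m → ℝ) → ℝ) (ℓ : ℝ) : 0 ≤ baseVolume ρ ℓ :=
  measureReal_nonneg

theorem measurableSet_sawtooth {ρ : (Fin m → ℝ) → ℝ} (hρ : Measurable ρ) (ℓ : ℝ) :
    MeasurableSet (sawtooth ρ ℓ) :=
  (measurableSet_lt (hρ.comp measurable_fst) measurable_snd).inter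
    (measurableSet_lt measurable_snd measurable_const)

theorem integrable_and_integral_sawtooth {ρ : (Fin m → ℝ) → ℝ} {ℓ : ℝ} (hρ : Measurable ρ)
    {f : (Fin m → ℝ) × ℝ → ℝ} (hf : IntegrableOn f (sawtooth ρ ℓ)) :
    Integrable (fun p => ∫ t in Set.Ioo (ρ p) ℓ, f (p, t)) ∧
      ∫ z in sawtooth ρ ℓ, f z = ∫ p, ∫ t in Set.Ioo (ρ p) ℓ, f (p, t) := by
  have hA := measurableSet_sawtooth hρ ℓ
  have hf' : Integrable ((sawtooth ρ ℓ).indicator f) (volume.prod volume) :=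
    (integrable_indicator_iff hA).2 hf
  have hslice (p : Fin m → ℝ) :
      ∫ t in Set.Ioo (ρ p) ℓ, f (p, t) = ∫ t, (sawtooth ρ ℓ).indicator f (p, t) := by
    rw [← integral_indicator measurableSet_Ioo]
    rfl
  simp only [hslice]
  exact ⟨hf'.integral_prod_left, by
    rw [← integral_indicator hA, Measure.volume_eq_prod, integral_prod _ hf']⟩

variable {ℓ : ℝ} {ρ : (Fin m → ℝ) → ℝ}

namespace IsStoppingHeight

theorem measurableSet_sawtooth (hρ : IsStoppingHeight ℓ ρ) : MeasurableSet (sawtooth ρ ℓ) :=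
  SBL.measurableSet_sawtooth hρ.lipschitzWith.continuous.measurable ℓ

theorem pos (hρ : IsStoppingHeight ℓ ρ) (p : Fin m → ℝ) : 0 < ρ p :=
  let ⟨_, hτ, hle⟩ := hρ.exists_pos_le
  hτ.trans_le (hle p)

theorem abs_sub_le (hρ : IsStoppingHeight ℓ ρ) (p q : Fin m → ℝ) : |ρ p - ρ q| ≤ ‖p - q‖ := by
  simpa [Real.dist_eq, dist_eq_norm] using hρ.lipschitzWith.dist_le_mul p q

theorem sawtooth_subset_Ioi (hρ : IsStoppingHeight ℓ ρ) :
    sawtooth ρ ℓ ⊆ Set.univ ×ˢ Set.Ioi 0 :=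
  fun z hz => ⟨trivial, (hρ.pos z.1).trans hz.1⟩

theorem volume_sawtooth_lt_top (hρ : IsStoppingHeight ℓ ρ) : volume (sawtooth ρ ℓ) < ∞ := by
  have hsub : sawtooth ρ ℓ ⊆ {p | ρ p < 2 * ℓ} ×ˢ Set.Ioo 0 ℓ := fun z hz => by
    have := hρ.pos z.1
    exact ⟨show ρ z.1 < 2 * ℓ by linarith [hz.1, hz.2], this.trans hz.1, hz.2⟩
  refine (measure_mono hsub).trans_lt ?_
  rw [Measure.volume_eq_prod, Measure.prod_prod]
  exact ENNReal.mul_lt_top hρ.volume_lt_top measure_Ioo_lt_top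

theorem abs_integral_le_mul_baseVolume (hρ : IsStoppingHeight ℓ ρ) {f : (Fin m → ℝ) → ℝ} {C : ℝ}
    (hle : ∀ p, ρ p < 2 * ℓ → |f p| ≤ C) (hzero : ∀ p, 2 * ℓ ≤ ρ p → f p = 0) :
    |∫ p, f p| ≤ C * baseVolume ρ ℓ := by
  rw [← setIntegral_eq_integral_of_forall_compl_eq_zero (s := {p | ρ p < 2 * ℓ})
    fun p hp => hzero p (not_lt.1 hp)]
  exact norm_setIntegral_le_of_norm_le_const (f := f) hρ.volume_lt_top hle

end IsStoppingHeight

/-- The localised form: the pairings `scalePairing` integrated over a sawtooth region. -/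
def localForm (ρ : (Fin m → ℝ) → ℝ) (ℓ : ℝ) (J : Matrix (Idx m) (Fin m) ℝ)
    (F : Corner m → (Fin m → ℝ) → ℝ) (γ : Idx m → ℕ) (w : Fin m → ℝ) : ℝ :=
  ∫ z in sawtooth ρ ℓ, z.2⁻¹ * scalePairing J F γ w z.1 z.2

variable {α s D : ℝ} {J : Matrix (Idx m) (Fin m) ℝ} {F : Corner m → (Fin m → ℝ) → ℝ}
  {w : Fin m → ℝ}

open Filter Asymptotics Topology

theorem WidthBound.eventually (hw : WidthBound w s D) :
    ∀ᶠ w' in 𝓝 w, WidthBound w' (s + 1) (D + 1) := by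
  have hcoord (k : Fin m) : ∀ᶠ w' in 𝓝 w, 0 < w' k ∧ w' k < s + 1 :=
    (continuous_apply k).continuousAt.eventually
      (Ioo_mem_nhds (hw.pos k) (by linarith [hw.le k]))
  have hprod : ContinuousAt (fun w' : Fin m → ℝ => ∏ k, max 1 (w' k)⁻¹) w :=
    tendsto_finsetProd _ fun k _ =>
      continuousAt_const.max ((continuous_apply k).continuousAt.inv₀ (hw.pos k).ne')
  filter_upwards [eventually_all.2 hcoord, hprod.eventually_lt_const
    (hw.prod_le.trans_lt (lt_add_one D))] with w' hw' hD
  exact ⟨by linarith [hw.one_le], fun k => (hw' k).1, fun k => (hw' k).2.le, hD.le⟩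

theorem WidthBound.eventually_add_smul (hw : WidthBound w s D) (w' : Fin m → ℝ) :
    ∀ᶠ r : ℝ in 𝓝 0, WidthBound (w + r • w') (s + 1) (D + 1) :=
  (show ContinuousAt (fun r : ℝ => w + r • w') 0 by fun_prop).eventually
    (by simpa using hw.eventually)

theorem IsStoppingHeight.eventually_forall_le (hρ : IsStoppingHeight ℓ ρ) (q : Fin m → ℝ) :
    ∀ᶠ r : ℝ in 𝓝 0, ∀ z ∈ sawtooth ρ ℓ, ρ (z.1 + r • q) ≤ 2 * z.2 := by
  obtain ⟨τ, hτ, hle⟩ := hρ.exists_pos_le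
  have hsmall : ∀ᶠ r : ℝ in 𝓝 0, ‖r • q‖ < τ :=
    (show ContinuousAt (fun r : ℝ => ‖r • q‖) 0 by fun_prop).eventually_lt_const (by simpa)
  filter_upwards [hsmall] with r hr z hz
  have hshift := (abs_le.1 (hρ.abs_sub_le (z.1 + r • q) z.1)).2
  rw [add_sub_cancel_left] at hshift
  linarith [hle z.1, hz.1]

theorem IsStoppingHeight.isBigO_one_of_continuousOn (hρ : IsStoppingHeight ℓ ρ) {k : ℝ → ℝ}
    (hk : ContinuousOn k (Set.Ioi 0)) :
    (fun z : (Fin m → ℝ) × ℝ => k z.2) =O[𝓟 (sawtooth ρ ℓ)] fun _ => (1 : ℝ) := by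
  obtain ⟨τ, hτ, hle⟩ := hρ.exists_pos_le
  obtain ⟨C, hC⟩ := (isCompact_Icc (a := τ) (b := ℓ)).exists_bound_of_continuousOn
    (hk.mono fun t ht => hτ.trans_le ht.1)
  refine isBigO_principal.2 ⟨C, fun z hz => ?_⟩
  simpa using hC z.2 ⟨(hle _).trans hz.1.le, hz.2.le⟩

theorem IsStoppingHeight.continuousOn_scalePairing (hρ : IsStoppingHeight ℓ ρ) (hF : IsTestTuple F)
    (γ : Idx m → ℕ) (hw : ∀ k, 0 < w k) (q : Fin m → ℝ) :
    ContinuousOn (fun z => scalePairing J F γ w (z.1 + q) z.2) (sawtooth ρ ℓ) :=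
  (hF.continuousOn_scalePairing γ hw).comp (f := fun z : (Fin m → ℝ) × ℝ => (z.1 + q, z.2))
    (by fun_prop) fun _ hz => ⟨trivial, (hρ.sawtooth_subset_Ioi hz).2⟩

theorem IsStoppingHeight.continuousOn_scalePairingDeriv (hρ : IsStoppingHeight ℓ ρ)
    (hF : IsTestTuple F) (γ : Idx m → ℕ) (hw : ∀ k, 0 < w k) (w' q : Fin m → ℝ) :
    ContinuousOn (fun z => scalePairingDeriv J F γ w w' z.1 q z.2) (sawtooth ρ ℓ) := by
  have hinv : ContinuousOn (fun z : (Fin m → ℝ) × ℝ => z.2⁻¹) (sawtooth ρ ℓ) :=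
    continuousOn_snd.inv₀ fun z hz => ne_of_gt (hρ.sawtooth_subset_Ioi hz).2
  have hcont (γ) := hρ.continuousOn_scalePairing (J := J) hF γ hw 0
  simp only [add_zero] at hcont
  unfold scalePairingDeriv eulerOp
  fun_prop

variable [NeZero m]

namespace Admissible

theorem exists_abs_localForm_le (h : Admissible α ρ J F) (hρ : IsStoppingHeight ℓ ρ)
    (γ : Idx m → ℕ) : ∃ B, ∀ {w : Fin m → ℝ} {s D : ℝ}, WidthBound w s D →
      |localForm ρ ℓ J F γ w| ≤ B * (D ^ 2 * s ^ (2 * α)) := by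
  obtain ⟨τ, hτ, hle⟩ := hρ.exists_pos_le
  refine ⟨τ⁻¹ * pairingConst α γ * volume.real (sawtooth ρ ℓ), fun {w s D} hw => ?_⟩
  refine (norm_setIntegral_le_of_norm_le_const (f := fun z => z.2⁻¹ * scalePairing J F γ w z.1 z.2)
    (C := τ⁻¹ * (pairingConst α γ * (D ^ 2 * s ^ (2 * α)))) hρ.volume_sawtooth_lt_top
    fun z hz => ?_).trans_eq ?_
  · have hz0 : 0 < z.2 := (hρ.sawtooth_subset_Ioi hz).2
    rw [norm_mul, norm_inv, Real.norm_of_nonneg hz0.le]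
    gcongr
    · exact (hle _).trans hz.1.le
    · exact h.abs_scalePairing_le γ hw hz0 (by linarith [hz.1])
  · ring

theorem isBigO_scalePairing_add_smul (h : Admissible α ρ J F) (hρ : IsStoppingHeight ℓ ρ)
    (γ : Idx m → ℕ) (hw : WidthBound w s D) (w' q : Fin m → ℝ) :
    (fun x : ℝ × ((Fin m → ℝ) × ℝ) =>
        scalePairing J F γ (w + x.1 • w') (x.2.1 + x.1 • q) x.2.2)
      =O[𝓝 0 ×ˢ 𝓟 (sawtooth ρ ℓ)] fun _ => (1 : ℝ) := by
  refine IsBigO.of_bound (pairingConst α γ * ((D + 1) ^ 2 * (s + 1) ^ (2 * α))) ?_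
  rw [eventually_prod_principal_iff]
  filter_upwards [hw.eventually_add_smul w', hρ.eventually_forall_le q] with r hwr hρr z hz
  simpa using h.abs_scalePairing_le γ hwr (hρ.sawtooth_subset_Ioi hz).2 (hρr z hz)

theorem integrableOn_mul_scalePairing (h : Admissible α ρ J F) (hρ : IsStoppingHeight ℓ ρ)
    (γ : Idx m → ℕ) (hw : WidthBound w s D) {k : ℝ → ℝ} (hk : ContinuousOn k (Set.Ioi 0)) :
    IntegrableOn (fun z => k z.2 * scalePairing J F γ w z.1 z.2) (sawtooth ρ ℓ) := by
  have hcont := (hk.comp continuousOn_snd fun z hz => (hρ.sawtooth_subset_Ioi hz).2).mul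
    (hρ.continuousOn_scalePairing (J := J) h.isTestTuple γ hw.pos 0)
  simp only [add_zero] at hcont
  refine integrableOn_of_isBigO_one hρ.measurableSet_sawtooth hρ.volume_sawtooth_lt_top
    (hcont.aestronglyMeasurable hρ.measurableSet_sawtooth) ?_
  have hbd : (fun z : (Fin m → ℝ) × ℝ => scalePairing J F γ w z.1 z.2)
      =O[𝓟 (sawtooth ρ ℓ)] fun _ => (1 : ℝ) := by
    refine isBigO_principal.2 ⟨pairingConst α γ * (D ^ 2 * s ^ (2 * α)), fun z hz => ?_⟩
    have hz0 : 0 < z.2 := (hρ.sawtooth_subset_Ioi hz).2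
    simpa using h.abs_scalePairing_le γ hw hz0 (by linarith [hz.1])
  simpa using (hρ.isBigO_one_of_continuousOn hk).mul hbd

theorem isBigO_scalePairingDeriv (h : Admissible α ρ J F) (hρ : IsStoppingHeight ℓ ρ)
    (γ : Idx m → ℕ) (hw : WidthBound w s D) (w' q : Fin m → ℝ) :
    (fun x : ℝ × ((Fin m → ℝ) × ℝ) =>
        scalePairingDeriv J F γ (w + x.1 • w') w' (x.2.1 + x.1 • q) q x.2.2)
      =O[𝓝 0 ×ˢ 𝓟 (sawtooth ρ ℓ)] fun _ => (1 : ℝ) := by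
  have hratio (a : ℝ) (k : Fin m) : (fun x : ℝ × ((Fin m → ℝ) × ℝ) => a / (w + x.1 • w') k)
      =O[𝓝 0 ×ˢ 𝓟 (sawtooth ρ ℓ)] fun _ => (1 : ℝ) := by
    have hcont : ContinuousAt (fun r : ℝ => a / (w + r • w') k) 0 :=
      continuousAt_const.div (by simp only [Pi.add_apply, Pi.smul_apply]; fun_prop)
        (by simpa using (hw.pos k).ne')
    exact IsBigO.comp_fst _ (hcont.isBigO_one ℝ)
  have hinv : (fun x : ℝ × ((Fin m → ℝ) × ℝ) => x.2.2⁻¹)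
      =O[𝓝 0 ×ˢ 𝓟 (sawtooth ρ ℓ)] fun _ => (1 : ℝ) :=
    (hρ.isBigO_one_of_continuousOn (continuousOn_inv₀.mono fun _ ht => ne_of_gt ht)).comp_snd _
  have hbd (γ) := h.isBigO_scalePairing_add_smul hρ γ hw w' q
  have hinv_mul (γ) := hinv.mul (hbd γ)
  simp only [mul_one] at hinv_mul
  refine IsBigO.fun_sum fun c _ => ?_
  have hterm := ((hratio (w' (pos c)) (pos c)).mul
    (((hbd γ).const_mul_left (γ c : ℝ)).add
      ((hbd (γ + Pi.single c 2)).const_mul_left (2 * Real.pi)⁻¹))).sub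
    ((hratio ((J *ᵥ q) c) (pos c)).mul (hinv_mul (γ + Pi.single c 1)))
  simpa only [mul_one, eulerOp] using hterm

theorem hasDerivAt_integral_mul_scalePairing (h : Admissible α ρ J F)
    (hρ : IsStoppingHeight ℓ ρ) (γ : Idx m → ℕ) (hw : WidthBound w s D) (w' q : Fin m → ℝ)
    {k : ℝ → ℝ} (hk : ContinuousOn k (Set.Ioi 0)) :
    HasDerivAt (fun r : ℝ => ∫ z in sawtooth ρ ℓ,
        k z.2 * scalePairing J F γ (w + r • w') (z.1 + r • q) z.2)
      (∫ z in sawtooth ρ ℓ, k z.2 * scalePairingDeriv J F γ w w' z.1 q z.2) 0 := by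
  have hA := hρ.measurableSet_sawtooth
  have hpos {z} (hz : z ∈ sawtooth ρ ℓ) : 0 < z.2 := (hρ.sawtooth_subset_Ioi hz).2
  have hk' : ContinuousOn (fun z : (Fin m → ℝ) × ℝ => k z.2) (sawtooth ρ ℓ) :=
    hk.comp continuousOn_snd fun _ => hpos
  have hderiv := hasDerivAt_setIntegral_of_isBigO_one (μ := volume) hA hρ.volume_sawtooth_lt_top
    (f := fun r z => k z.2 * scalePairing J F γ (w + r • w') (z.1 + r • q) z.2)
    (f' := fun r z => k z.2 * scalePairingDeriv J F γ (w + r • w') w' (z.1 + r • q) q z.2)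
    (r₀ := 0) ?_ ?_ ?_ ?_ ?_
  · simpa using hderiv
  · filter_upwards [hw.eventually_add_smul w'] with r hwr
    exact (hk'.mul (hρ.continuousOn_scalePairing h.isTestTuple γ hwr.pos _)).aestronglyMeasurable hA
  · simpa using h.integrableOn_mul_scalePairing hρ γ hw hk
  · simp only [zero_smul, add_zero]
    exact (hk'.mul
      (hρ.continuousOn_scalePairingDeriv h.isTestTuple γ hw.pos w' q)).aestronglyMeasurable hA
  · simpa using ((hρ.isBigO_one_of_continuousOn hk).comp_snd _).mul
      (h.isBigO_scalePairingDeriv hρ γ hw w' q)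
  · filter_upwards [hw.eventually_add_smul w'] with r hwr z hz
    exact (h.isTestTuple.hasDerivAt_scalePairing γ w w' z.1 q hwr.pos (hpos hz)).const_mul _

end Admissible

end Sawtooth

section Identities

open Filter Asymptotics Topology

variable {m : ℕ} {α s D ℓ : ℝ} {ρ : (Fin m → ℝ) → ℝ} {J : Matrix (Idx m) (Fin m) ℝ}
  {F : Corner m → (Fin m → ℝ) → ℝ} {w : Fin m → ℝ}

theorem setIntegral_Ioo_eq_intervalIntegral (φ : ℝ → ℝ) (a b : ℝ) :
    ∫ t in Set.Ioo a b, φ t = ∫ t in (min a b)..b, φ t := by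
  rcases le_or_gt b a with h | h
  · simp [Set.Ioo_eq_empty (not_lt.2 h), min_eq_right h]
  · rw [min_eq_left h.le, intervalIntegral.integral_of_le h.le, integral_Ioc_eq_integral_Ioo]

theorem abs_setIntegral_Ioo_sub_setIntegral_Ioo_le {φ : ℝ → ℝ} {a a' b B : ℝ} (hB : 0 ≤ B)
    (hint : IntegrableOn φ (Set.Ioc (min a a') b)) (hle : ∀ t ∈ Set.Ioc (min a a') b, |φ t| ≤ B) :
    |(∫ t in Set.Ioo a' b, φ t) - ∫ t in Set.Ioo a b, φ t| ≤ B * |a' - a| := by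
  have hmem {c : ℝ} (hc : min a a' ≤ c) : Set.uIoc (min c b) b ⊆ Set.Ioc (min a a') b := by
    rw [Set.uIoc_of_le (min_le_right _ _)]
    intro t ht
    exact ⟨hc.trans_lt ((min_lt_iff.1 ht.1).resolve_right ht.2.not_gt), ht.2⟩
  have hii {c : ℝ} (hc : min a a' ≤ c) : IntervalIntegrable φ volume (min c b) b :=
    (intervalIntegrable_iff.2 (hint.mono_set (hmem hc)))
  have ha := hii (min_le_left a a')
  have ha' := hii (min_le_right a a')
  rw [setIntegral_Ioo_eq_intervalIntegral, setIntegral_Ioo_eq_intervalIntegral,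
    ← intervalIntegral.integral_add_adjacent_intervals (ha'.trans ha.symm) ha,
    add_sub_cancel_right]
  refine (intervalIntegral.norm_integral_le_of_norm_le_const (f := φ)
    fun t ht => hle t ?_).trans ?_
  · have hle' (c : ℝ) : min c b ≤ b := min_le_right c b
    rcases Set.uIoc_eq_union.subset ht with ht | ht
    exacts [hmem (min_le_right a a') (Set.uIoc_of_le (hle' a') ▸ ⟨ht.1, ht.2.trans (hle' a)⟩),
      hmem (min_le_left a a') (Set.uIoc_of_le (hle' a) ▸ ⟨ht.1, ht.2.trans (hle' a')⟩)]
  · refine mul_le_mul_of_nonneg_left ((abs_min_sub_min_le_max a b a' b).trans_eq ?_) hB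
    rw [sub_self, abs_zero, max_eq_left (abs_nonneg _), abs_sub_comm]

variable [NeZero m]

namespace Admissible

theorem integrableOn_inv_mul_eulerOp (h : Admissible α ρ J F) (hρ : IsStoppingHeight ℓ ρ)
    (γ : Idx m → ℕ) (hw : WidthBound w s D) (c : Idx m) :
    IntegrableOn (fun z => z.2⁻¹ * eulerOp (scalePairing J F · w z.1 z.2) γ c)
      (sawtooth ρ ℓ) := by
  have hint (γ) := h.integrableOn_mul_scalePairing hρ γ hw
    (continuousOn_inv₀.mono fun _ ht => ne_of_gt ht)
  refine (((hint γ).const_mul (γ c : ℝ)).add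
    ((hint (γ + Pi.single c 2)).const_mul (2 * Real.pi)⁻¹)).congr (.of_forall fun z => ?_)
  simp only [eulerOp, Pi.add_apply]
  ring

theorem eulerOp_localForm (h : Admissible α ρ J F) (hρ : IsStoppingHeight ℓ ρ)
    (γ : Idx m → ℕ) (hw : WidthBound w s D) (c : Idx m) :
    eulerOp (localForm ρ ℓ J F · w) γ c =
      ∫ z in sawtooth ρ ℓ, z.2⁻¹ * eulerOp (scalePairing J F · w z.1 z.2) γ c := by
  have hint (γ) := h.integrableOn_mul_scalePairing hρ γ hw
    (continuousOn_inv₀.mono fun _ ht => ne_of_gt ht)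
  simp only [eulerOp, localForm]
  rw [← integral_const_mul, ← integral_const_mul,
    ← integral_add ((hint _).const_mul _) ((hint _).const_mul _)]
  exact integral_congr_ae (.of_forall fun z => by ring)

theorem abs_setIntegral_inv_mul_sum_eulerOp_le (h : Admissible α ρ J F) (γ : Idx m → ℕ)
    (hw : WidthBound w s D) {p : Fin m → ℝ} (hpos : 0 < ρ p) (ℓ : ℝ) :
    |∫ t in Set.Ioo (ρ p) ℓ, ∑ c, t⁻¹ * eulerOp (scalePairing J F · w p t) γ c| ≤
      2 * (pairingConst α γ * (D ^ 2 * s ^ (2 * α))) := by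
  rcases le_or_gt ℓ (ρ p) with hℓ | hℓ
  · have := h.abs_scalePairing_le γ hw hpos (p := p) (by linarith)
    rw [Set.Ioo_eq_empty (not_lt.2 hℓ), Measure.restrict_empty, integral_zero_measure, abs_zero]
    linarith [abs_nonneg (scalePairing J F γ w p (ρ p))]
  have hIcc {t} (ht : t ∈ Set.Icc (ρ p) ℓ) : 0 < t := hpos.trans_le ht.1
  have hcont (γ) : ContinuousOn (fun t => scalePairing J F γ w p t) (Set.Icc (ρ p) ℓ) :=
    (h.isTestTuple.continuousOn_scalePairing γ hw.pos).comp (f := fun t => (p, t))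
      (by fun_prop) fun t ht => ⟨trivial, hIcc ht⟩
  have hinv : ContinuousOn (fun t : ℝ => t⁻¹) (Set.Icc (ρ p) ℓ) :=
    continuousOn_inv₀.mono fun t ht => (hIcc ht).ne'
  rw [← integral_Ioc_eq_integral_Ioo, ← intervalIntegral.integral_of_le hℓ.le,
    intervalIntegral.integral_eq_sub_of_hasDerivAt (f := fun t => scalePairing J F γ w p t)]
  · have htop := h.abs_scalePairing_le γ hw (hpos.trans hℓ) (p := p) (by linarith)
    have hbot := h.abs_scalePairing_le γ hw hpos (p := p) (by linarith)
    exact (abs_sub _ _).trans (by linarith)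
  · rw [Set.uIcc_of_le hℓ.le]
    intro t ht
    rw [← Finset.mul_sum]
    exact h.isTestTuple.hasDerivAt_scalePairing_scale γ hw.pos p (hIcc ht)
  · refine ContinuousOn.intervalIntegrable ?_
    rw [Set.uIcc_of_le hℓ.le]
    exact continuousOn_finsetSum _ fun c _ =>
      hinv.mul ((continuousOn_const.mul (hcont _)).add (continuousOn_const.mul (hcont _)))

/-- By `IsTestTuple.hasDerivAt_scalePairing_scale`, the integrand is `∂/∂t` of `scalePairing`, so
only the boundary of the region contributes. -/
theorem abs_sum_eulerOp_localForm_le (h : Admissible α ρ J F) (hρ : IsStoppingHeight ℓ ρ)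
    (γ : Idx m → ℕ) (hw : WidthBound w s D) :
    |∑ c, eulerOp (localForm ρ ℓ J F · w) γ c| ≤
      2 * (pairingConst α γ * (D ^ 2 * s ^ (2 * α))) * baseVolume ρ ℓ := by
  have hint := integrable_finsetSum Finset.univ fun c _ =>
    h.integrableOn_inv_mul_eulerOp hρ γ hw c
  have hsum : ∑ c, eulerOp (localForm ρ ℓ J F · w) γ c =
      ∫ z in sawtooth ρ ℓ, ∑ c, z.2⁻¹ * eulerOp (scalePairing J F · w z.1 z.2) γ c := by
    rw [integral_finsetSum _ fun c _ => h.integrableOn_inv_mul_eulerOp hρ γ hw c]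
    exact Finset.sum_congr rfl fun c _ => h.eulerOp_localForm hρ γ hw c
  rw [hsum, (integrable_and_integral_sawtooth hρ.lipschitzWith.continuous.measurable hint).2]
  refine hρ.abs_integral_le_mul_baseVolume
    (fun p _ => h.abs_setIntegral_inv_mul_sum_eulerOp_le γ hw (hρ.pos p) ℓ) fun p hp => ?_
  have := hρ.pos p
  rw [Set.Ioo_eq_empty (by linarith), Measure.restrict_empty, integral_zero_measure]

theorem hasDerivAt_localForm (h : Admissible α ρ J F) (hρ : IsStoppingHeight ℓ ρ)
    (γ : Idx m → ℕ) (hw : WidthBound w s D) (w' : Fin m → ℝ) :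
    HasDerivAt (fun r : ℝ => localForm ρ ℓ J F γ (w + r • w'))
      (∑ c, w' (pos c) / w (pos c) * eulerOp (localForm ρ ℓ J F · w) γ c) 0 := by
  have hderiv := h.hasDerivAt_integral_mul_scalePairing hρ γ hw w' 0
    (continuousOn_inv₀.mono fun _ ht => ne_of_gt ht)
  simp only [smul_zero, add_zero] at hderiv
  refine hderiv.congr_deriv ?_
  simp only [h.eulerOp_localForm hρ γ hw, scalePairingDeriv, mulVec_zero, Pi.zero_apply, zero_div,
    zero_mul, sub_zero, Finset.mul_sum, ← integral_const_mul]
  rw [← integral_finsetSum _ fun c _ => (h.integrableOn_inv_mul_eulerOp hρ γ hw c).const_mul _]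
  exact integral_congr_ae (.of_forall fun z => Finset.sum_congr rfl fun c _ => by ring)

theorem hasDerivAt_integral_scalePairing_shift (h : Admissible α ρ J F)
    (hρ : IsStoppingHeight ℓ ρ) (γ : Idx m → ℕ) (hw : WidthBound w s D) (q : Fin m → ℝ) :
    HasDerivAt (fun r : ℝ => ∫ z in sawtooth ρ ℓ, scalePairing J F γ w (z.1 + r • q) z.2)
      (-∑ c, (J *ᵥ q) c / w (pos c) * localForm ρ ℓ J F (γ + Pi.single c 1) w) 0 := by
  have hderiv := h.hasDerivAt_integral_mul_scalePairing hρ γ hw 0 q (k := 1) continuousOn_const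
  simp only [smul_zero, add_zero, Pi.one_apply, one_mul] at hderiv
  refine hderiv.congr_deriv ?_
  simp only [scalePairingDeriv, Pi.zero_apply, zero_div, zero_mul, zero_sub, localForm,
    Finset.sum_neg_distrib, ← integral_const_mul]
  rw [integral_neg, integral_finsetSum _ fun c _ => (h.integrableOn_mul_scalePairing hρ _ hw
    (continuousOn_inv₀.mono fun _ ht => ne_of_gt ht)).const_mul _]

theorem integrableOn_scalePairing_add (h : Admissible α ρ J F) (hρ : IsStoppingHeight ℓ ρ)
    (γ : Idx m → ℕ) (hw : WidthBound w s D) {q : Fin m → ℝ} (hq : ∀ p, ‖q‖ ≤ ρ p) :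
    IntegrableOn (fun z => scalePairing J F γ w (z.1 + q) z.2) (sawtooth ρ ℓ) := by
  refine IntegrableOn.of_bound hρ.volume_sawtooth_lt_top
    ((hρ.continuousOn_scalePairing h.isTestTuple γ hw.pos q).aestronglyMeasurable
      hρ.measurableSet_sawtooth) (pairingConst α γ * (D ^ 2 * s ^ (2 * α))) ?_
  filter_upwards [ae_restrict_mem hρ.measurableSet_sawtooth] with z hz
  have hshift := (abs_le.1 (hρ.abs_sub_le (z.1 + q) z.1)).2
  rw [add_sub_cancel_left] at hshift
  exact h.abs_scalePairing_le γ hw (hρ.sawtooth_subset_Ioi hz).2 (by linarith [hq z.1, hz.1])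

/-- After translating the base, only the lower boundary has moved, and by at most `‖q‖` since `ρ`
is 1-Lipschitz. -/
theorem abs_integral_scalePairing_shift_sub_le (h : Admissible α ρ J F)
    (hρ : IsStoppingHeight ℓ ρ) (γ : Idx m → ℕ) (hw : WidthBound w s D) {q : Fin m → ℝ}
    (hq : ∀ p, ‖q‖ ≤ ρ p) :
    |(∫ z in sawtooth ρ ℓ, scalePairing J F γ w (z.1 + q) z.2) -
        ∫ z in sawtooth ρ ℓ, scalePairing J F γ w z.1 z.2| ≤
      pairingConst α γ * (D ^ 2 * s ^ (2 * α)) * ‖q‖ * baseVolume ρ ℓ := by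
  have hmeas := hρ.lipschitzWith.continuous.measurable
  have hlip (p) := hρ.abs_sub_le (p - q) p
  simp only [sub_sub_cancel_left, norm_neg] at hlip
  have hint' := h.integrableOn_scalePairing_add hρ γ hw hq
  have hint := h.integrableOn_mul_scalePairing hρ γ hw (k := 1) continuousOn_const
  simp only [Pi.one_apply, one_mul] at hint
  obtain ⟨hslice', hfubini'⟩ := integrable_and_integral_sawtooth hmeas hint'
  obtain ⟨hslice, hfubini⟩ := integrable_and_integral_sawtooth hmeas hint
  rw [hfubini', hfubini, ← integral_sub_right_eq_self _ q,
    ← integral_sub (hslice'.comp_sub_right q) hslice]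
  simp only [sub_add_cancel]
  refine hρ.abs_integral_le_mul_baseVolume (fun p _ => ?_) fun p hp => ?_
  · have hlow := (abs_le.1 (hlip p)).1
    have hmin : ρ p ≤ 2 * min (ρ p) (ρ (p - q)) := by
      rcases min_choice (ρ p) (ρ (p - q)) with hmin | hmin <;> rw [hmin] <;>
        linarith [hρ.pos p, hq (p - q)]
    have hbd {t} (ht : min (ρ p) (ρ (p - q)) ≤ t) :=
      h.abs_scalePairing_le γ hw ((lt_min (hρ.pos _) (hρ.pos _)).trans_le ht) (p := p)
        (hmin.trans (by gcongr))
    have hC := (abs_nonneg _).trans (hbd le_rfl)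
    refine (abs_setIntegral_Ioo_sub_setIntegral_Ioo_le hC ?_ fun t ht => hbd ht.1.le).trans
      (by gcongr; exact hlip p)
    refine (ContinuousOn.integrableOn_Icc ?_).mono_set Set.Ioc_subset_Icc_self
    exact (h.isTestTuple.continuousOn_scalePairing γ hw.pos).comp (f := fun t => (p, t))
      (by fun_prop) fun t ht => ⟨trivial, (lt_min (hρ.pos _) (hρ.pos _)).trans_le ht.1⟩
  · have := hρ.pos p
    have := (abs_le.1 (hlip p)).1
    rw [Set.Ioo_eq_empty (by linarith [hq (p - q)]),
      Set.Ioo_eq_empty (by linarith), Measure.restrict_empty, integral_zero_measure, sub_zero]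

theorem abs_sum_mulVec_mul_localForm_le (h : Admissible α ρ J F) (hρ : IsStoppingHeight ℓ ρ)
    (γ : Idx m → ℕ) (hw : WidthBound w s D) (q : Fin m → ℝ) :
    |∑ c, (J *ᵥ q) c / w (pos c) * localForm ρ ℓ J F (γ + Pi.single c 1) w| ≤
      pairingConst α γ * (D ^ 2 * s ^ (2 * α)) * baseVolume ρ ℓ * ‖q‖ := by
  obtain ⟨τ, hτ, hle⟩ := hρ.exists_pos_le
  have hC : 0 ≤ pairingConst α γ * (D ^ 2 * s ^ (2 * α)) := by
    have := hw.one_le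
    have := pairingConst_nonneg α γ
    positivity
  have hsmall : ∀ᶠ r : ℝ in 𝓝 0, ‖r • q‖ < τ :=
    (show ContinuousAt (fun r : ℝ => ‖r • q‖) 0 by fun_prop).eventually_lt_const (by simpa)
  rw [← abs_neg]
  refine (h.hasDerivAt_integral_scalePairing_shift hρ γ hw q).le_of_lip'
    (mul_nonneg (mul_nonneg hC (baseVolume_nonneg ρ ℓ)) (norm_nonneg q)) ?_
  filter_upwards [hsmall] with r hr
  simp only [zero_smul, add_zero, sub_zero]
  refine (h.abs_integral_scalePairing_shift_sub_le hρ γ hw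
    fun p => hr.le.trans (hle p)).trans_eq ?_
  rw [norm_smul]
  ring

end Admissible

end Identities

section Descent

open Filter Asymptotics Topology

theorem abs_le_of_abs_deriv_le_rpow {f f' : ℝ → ℝ} {s K e : ℝ} (hs : 0 < s) (he : 0 < e)
    (hd : ∀ r, s ≤ r → HasDerivAt f (f' r) r) (hb : ∀ r, s ≤ r → |f' r| ≤ K * r ^ (-e - 1))
    (hf : Tendsto f atTop (𝓝 0)) : |f s| ≤ K / e * s ^ (-e) := by
  have upper {f f' : ℝ → ℝ} (hd : ∀ r, s ≤ r → HasDerivAt f (f' r) r)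
      (hb : ∀ r, s ≤ r → |f' r| ≤ K * r ^ (-e - 1)) (hf : Tendsto f atTop (𝓝 0)) :
      f s ≤ K / e * s ^ (-e) := by
    have hg (r) (hr : s ≤ r) : HasDerivAt (fun r => f r - K / e * r ^ (-e))
        (f' r + K * r ^ (-e - 1)) r := by
      refine ((hd r hr).sub ((Real.hasDerivAt_rpow_const
        (Or.inl (hs.trans_le hr).ne')).const_mul (K / e))).congr_deriv ?_
      field_simp
      ring
    have hmono : MonotoneOn (fun r => f r - K / e * r ^ (-e)) (Set.Ici s) :=
      monotoneOn_of_hasDerivWithinAt_nonneg (convex_Ici s)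
        (fun r hr => (hg r hr).continuousAt.continuousWithinAt)
        (fun r hr => (hg r (interior_subset hr)).hasDerivWithinAt)
        fun r hr => by linarith [(abs_le.1 (hb r (interior_subset hr))).1]
    have hlim : Tendsto (fun r => f r - K / e * r ^ (-e)) atTop (𝓝 0) := by
      simpa using hf.sub ((tendsto_rpow_neg_atTop he).const_mul (K / e))
    have := ge_of_tendsto hlim ((eventually_ge_atTop s).mono fun r hr =>
      hmono Set.self_mem_Ici hr hr)
    linarith
  refine abs_le.2 ⟨?_, upper hd hb hf⟩
  have := upper (f := -f) (fun r hr => (hd r hr).neg) (fun r hr => (abs_neg _).trans_le (hb r hr))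
    (by rw [← neg_zero]; exact hf.neg)
  simp only [Pi.neg_apply] at this
  linarith

/-- The function `r ↦ r ^ (-d) f r` has derivative `r ^ (-d - 1) g r` and vanishes at infinity. -/
theorem abs_le_of_hasDerivAt_euler {f g : ℝ → ℝ} {s K d β β' : ℝ} (hs : 0 < s) (hβ : β < d)
    (hβ' : β' < d) (hd : ∀ r, s ≤ r → HasDerivAt f (r⁻¹ * (d * f r + g r)) r)
    (hg : ∀ r, s ≤ r → |g r| ≤ K * r ^ β) (hf : f =O[atTop] fun r => r ^ β') :
    |f s| ≤ K / (d - β) * s ^ β := by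
  have h := abs_le_of_abs_deriv_le_rpow (f := fun r => r ^ (-d) * f r)
    (f' := fun r => r ^ (-d - 1) * g r) (K := K) hs (sub_pos.2 hβ) ?_ ?_ ?_
  · rw [abs_mul, abs_of_pos (by positivity), show -(d - β) = -d + β by ring,
      Real.rpow_add hs, mul_left_comm] at h
    exact le_of_mul_le_mul_left h (by positivity)
  · intro r hr
    have hr0 : 0 < r := hs.trans_le hr
    refine ((Real.hasDerivAt_rpow_const (p := -d) (Or.inl hr0.ne')).mul (hd r hr)).congr_deriv ?_
    rw [Real.rpow_sub_one hr0.ne']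
    field_simp
    ring
  · intro r hr
    have hr0 : 0 < r := hs.trans_le hr
    rw [abs_mul, abs_of_pos (by positivity), show -(d - β) - 1 = (-d - 1) + β by ring,
      Real.rpow_add hr0, mul_left_comm]
    gcongr
    exact hg r hr
  · refine IsBigO.trans_tendsto ?_ (tendsto_rpow_neg_atTop (sub_pos.2 hβ'))
    refine ((isBigO_refl (fun r : ℝ => r ^ (-d)) atTop).mul hf).congr' .rfl ?_
    filter_upwards [eventually_gt_atTop 0] with r hr
    rw [← Real.rpow_add hr]
    ring_nf

variable {m : ℕ} {α s D ℓ : ℝ} {ρ : (Fin m → ℝ) → ℝ} {J : Matrix (Idx m) (Fin m) ℝ}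
  {F : Corner m → (Fin m → ℝ) → ℝ} {w : Fin m → ℝ}

theorem abs_sum_le_two_mul {A : Finset (Idx m)} {f : Idx m → ℝ} {K : ℝ} (hK : 0 ≤ K)
    (hf : ∀ c ∈ A, |f c| ≤ K) : |∑ c ∈ A, f c| ≤ 2 * m * K := by
  have hcard : (A.card : ℝ) ≤ 2 * m := by
    refine (Nat.cast_le.2 (Finset.card_le_univ A)).trans_eq ?_
    simp [two_mul]
  calc |∑ c ∈ A, f c| ≤ ∑ c ∈ A, |f c| := Finset.abs_sum_le_sum_abs _ _
    _ ≤ A.card • K := Finset.sum_le_card_nsmul _ _ _ hf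
    _ ≤ 2 * m * K := by
      rw [nsmul_eq_mul]
      gcongr

theorem WidthBound.piecewise_const (hw : WidthBound w s D) (S : Finset (Fin m)) {r : ℝ}
    (hr : s ≤ r) : WidthBound (S.piecewise w fun _ => r) r D :=
  hw.mono hr (fun k => by by_cases hk : k ∈ S <;> simp [hk, (hw.le k).trans hr])
    fun k => by by_cases hk : k ∈ S <;> simp [hk, (hw.le k).trans hr]

variable [NeZero m]

namespace Admissible

theorem hasDerivAt_localForm_piecewise_const (h : Admissible α ρ J F)
    (hρ : IsStoppingHeight ℓ ρ) (γ : Idx m → ℕ) (S : Finset (Fin m)) {r : ℝ}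
    (hw : WidthBound (S.piecewise w fun _ => r) s D) :
    HasDerivAt (fun r : ℝ => localForm ρ ℓ J F γ (S.piecewise w fun _ => r))
      (r⁻¹ * ∑ c with pos c ∉ S,
        eulerOp (localForm ρ ℓ J F · (S.piecewise w fun _ => r)) γ c) r := by
  have hline (r' : ℝ) : S.piecewise w (fun _ => r) + (r' - r) • S.piecewise 0 1 =
      S.piecewise w fun _ => r' := by
    funext k
    by_cases hk : k ∈ S <;> simp [hk]
  have hderiv := HasDerivAt.comp_sub_const r r (by
    rw [sub_self]; exact h.hasDerivAt_localForm hρ γ hw (S.piecewise 0 1))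
  simp only [hline] at hderiv
  refine hderiv.congr_deriv ?_
  rw [Finset.mul_sum, Finset.sum_filter]
  refine Finset.sum_congr rfl fun c _ => ?_
  by_cases hc : pos c ∈ S <;> simp [hc]

/-- Integrating the width derivative from infinity trades `γ` for the orders `γ + 2 e_c`. -/
theorem abs_localForm_le_of_higher (h : Admissible α ρ J F) (hρ : IsStoppingHeight ℓ ρ)
    (hα : 2 * α < 1) (γ : Idx m → ℕ) {S : Finset (Fin m)} (hw : WidthBound w s D)
    (hwS : ∀ k ∉ S, w k = s) (hγ : 2 ≤ ∑ c with pos c ∉ S, γ c) {K : ℝ}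
    (hK : ∀ r, s ≤ r → ∀ c, pos c ∉ S →
      |localForm ρ ℓ J F (γ + Pi.single c 2) (S.piecewise w fun _ => r)| ≤ K * r ^ (1 + 2 * α)) :
    |localForm ρ ℓ J F γ w| ≤
      2 * m * (2 * Real.pi)⁻¹ / (1 - 2 * α) * K * s ^ (1 + 2 * α) := by
  set d := ∑ c with pos c ∉ S, γ c with hd
  have hd2 : (2 : ℝ) ≤ d := by exact_mod_cast hγ
  have hs0 : 0 < s := by linarith [hw.one_le]
  have hwidth {r} (hr : s ≤ r) := hw.piecewise_const S hr
  have hself : S.piecewise w (fun _ => s) = w := by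
    funext k
    by_cases hk : k ∈ S <;> simp [hk, hwS]
  obtain ⟨B, hB⟩ := h.exists_abs_localForm_le hρ γ
  have hK0 : 0 ≤ K := by
    obtain ⟨c, hc, -⟩ := Finset.exists_ne_zero_of_sum_ne_zero (by lia : d ≠ 0)
    exact nonneg_of_mul_nonneg_left
      ((abs_nonneg _).trans (hK s le_rfl c (Finset.mem_filter.1 hc).2)) (by positivity)
  have key := abs_le_of_hasDerivAt_euler (β := 1 + 2 * α) (β' := 2 * α) (d := d)
    (f := fun r => localForm ρ ℓ J F γ (S.piecewise w fun _ => r))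
    (g := fun r => (2 * Real.pi)⁻¹ * ∑ c with pos c ∉ S,
      localForm ρ ℓ J F (γ + Pi.single c 2) (S.piecewise w fun _ => r))
    (K := 2 * m * (2 * Real.pi)⁻¹ * K) hs0 (by linarith) (by linarith) ?_ ?_ ?_
  · rw [hself] at key
    refine key.trans ?_
    rw [mul_div_right_comm]
    have : 1 - 2 * α ≤ d - (1 + 2 * α) := by linarith
    have : 0 < 1 - 2 * α := by linarith
    gcongr
  · intro r hr
    refine (h.hasDerivAt_localForm_piecewise_const hρ γ S (hwidth hr)).congr_deriv ?_
    simp only [eulerOp, Finset.sum_add_distrib, ← Finset.sum_mul, ← Finset.mul_sum, hd,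
      Nat.cast_sum]
  · intro r hr
    have hr0 : 0 < r := hs0.trans_le hr
    rw [abs_mul, abs_of_pos (by positivity)]
    calc (2 * Real.pi)⁻¹ * _ ≤ (2 * Real.pi)⁻¹ * (2 * m * (K * r ^ (1 + 2 * α))) := by
          gcongr
          exact abs_sum_le_two_mul (by positivity) fun c hc => hK r hr c (Finset.mem_filter.1 hc).2
      _ = 2 * m * (2 * Real.pi)⁻¹ * K * r ^ (1 + 2 * α) := by ring
  · refine IsBigO.of_bound (B * D ^ 2) ((eventually_ge_atTop s).mono fun r hr => ?_)
    have hr0 : 0 < r := hs0.trans_le hr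
    rw [Real.norm_of_nonneg (by positivity : 0 ≤ r ^ (2 * α)), mul_assoc]
    exact hB (hwidth hr)

end Admissible

end Descent

section SymmetricData

variable {m : ℕ}

open Filter Asymptotics

/-- Every standard basis vector has, for every corner, a bounded preimage under `Π_j J` whose
image under `J` is also bounded. -/
def HasBoundedPreimages (Γ : ℝ) (J : Matrix (Idx m) (Fin m) ℝ) : Prop :=
  ∀ (j : Corner m) (i : Fin m), ∃ q, ‖q‖ ≤ Γ ∧ ‖J *ᵥ q‖ ≤ Γ ∧ proj j (J *ᵥ q) = Pi.single i 1

/-- The matrix whose two rows at position `k` are replaced by the one with upper index `ε`. -/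
def faceMatrix (J : Matrix (Idx m) (Fin m) ℝ) (k : Fin m) (ε : Fin 2) :
    Matrix (Idx m) (Fin m) ℝ := fun c => if pos c = k then J (coord k ε) else J c

theorem faceMatrix_mulVec (J : Matrix (Idx m) (Fin m) ℝ) (k : Fin m) (ε : Fin 2) (q : Fin m → ℝ)
    (c : Idx m) :
    (faceMatrix J k ε *ᵥ q) c = if pos c = k then (J *ᵥ q) (coord k ε) else (J *ᵥ q) c := by
  by_cases hc : pos c = k <;> simp [faceMatrix, mulVec, hc]

theorem faceMatrix_faceMatrix_self (J : Matrix (Idx m) (Fin m) ℝ) (k : Fin m) (ε δ : Fin 2) :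
    faceMatrix (faceMatrix J k ε) k δ = faceMatrix J k ε := by
  funext c
  by_cases hc : pos c = k <;> simp [faceMatrix, hc]

theorem faceMatrix_comm (J : Matrix (Idx m) (Fin m) ℝ) {k l : Fin m} (hkl : k ≠ l) (ε δ : Fin 2) :
    faceMatrix (faceMatrix J k ε) l δ = faceMatrix (faceMatrix J l δ) k ε := by
  funext c
  by_cases hc : pos c = k <;> simp [faceMatrix, hc, hkl, hkl.symm]

theorem proj_faceMatrix_mulVec (J : Matrix (Idx m) (Fin m) ℝ) (k : Fin m) (ε : Fin 2)
    (q : Fin m → ℝ) (j : Corner m) :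
    proj j (faceMatrix J k ε *ᵥ q) = proj (Function.update j k ε) (J *ᵥ q) := by
  funext l
  simp only [proj, faceMatrix_mulVec, sel_eq_coord]
  rcases eq_or_ne l k with rfl | hl <;> simp [*]

theorem HasBoundedPreimages.faceMatrix {Γ : ℝ} {J : Matrix (Idx m) (Fin m) ℝ}
    (h : HasBoundedPreimages Γ J) (k : Fin m) (ε : Fin 2) :
    HasBoundedPreimages Γ (faceMatrix J k ε) := fun j i => by
  obtain ⟨q, hq, hJq, hproj⟩ := h (Function.update j k ε) i
  refine ⟨q, hq, (pi_norm_le_iff_of_nonneg ((norm_nonneg _).trans hq)).2 fun c => ?_, ?_⟩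
  · rw [faceMatrix_mulVec]
    split_ifs <;> exact (norm_le_pi_norm _ _).trans hJq
  · rw [proj_faceMatrix_mulVec, hproj]

theorem Admissible.face {α : ℝ} {ρ : (Fin m → ℝ) → ℝ} {J : Matrix (Idx m) (Fin m) ℝ}
    {F : Corner m → (Fin m → ℝ) → ℝ} (h : Admissible α ρ J F) (k : Fin m) (ε : Fin 2) :
    Admissible α ρ (faceMatrix J k ε) (faceTuple F k ε) where
  isTestTuple := h.isTestTuple.faceTuple k ε
  lintegral_le j p w t s D ht hp hw := by
    rw [proj_faceMatrix_mulVec]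
    exact h.lintegral_le (Function.update j k ε) p w t s D ht hp hw

theorem faceTuple_faceTuple_self (F : Corner m → (Fin m → ℝ) → ℝ) (k : Fin m) (ε δ : Fin 2) :
    faceTuple (faceTuple F k ε) k δ = faceTuple F k ε := by
  funext j
  simp [faceTuple]

theorem faceTuple_comm (F : Corner m → (Fin m → ℝ) → ℝ) {k l : Fin m} (hkl : k ≠ l)
    (ε δ : Fin 2) : faceTuple (faceTuple F k ε) l δ = faceTuple (faceTuple F l δ) k ε := by
  funext j
  exact congrArg F (Function.update_comm hkl.symm _ _ _)

/-- The orders equal to `a` at both coordinates of position `k` and to `0` elsewhere. -/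
def pairOrder (k : Fin m) (a : ℕ) : Idx m → ℕ := fun c => if pos c = k then a else 0

theorem IsTestTuple.abs_scalePairing_le_face {F : Corner m → (Fin m → ℝ) → ℝ}
    (hF : IsTestTuple F) (J : Matrix (Idx m) (Fin m) ℝ) (γ : Idx m → ℕ) (k : Fin m)
    {w : Fin m → ℝ} (hw : ∀ k, 0 < w k) (p : Fin m → ℝ) {t : ℝ} (ht : 0 < t) :
    |scalePairing J F γ w p t| ≤ (∏ c with pos c ≠ k, gaussKernelConst (γ c)) *
      ∑ ε, scalePairing (faceMatrix J k ε) (SBL.faceTuple F k ε) (pairOrder k (γ (coord k ε)))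
        (Function.update (2 • w) k (w k)) p t := by
  refine (hF.abs_integral_cornerProd_mul_prod_le k
    (ψ := fun c r => gaussKernel (γ c) (t * w (pos c)) (r - (J *ᵥ p) c))
    (ψ' := fun c r => gaussKernelConst (γ c) *
      gaussKernel 0 (2 * (t * w (pos c))) (r - (J *ᵥ p) c))
    (fun c => by fun_prop) (fun c => by fun_prop)
    fun c _ r => abs_gaussKernel_le _ (mul_pos ht (hw _)) _).trans_eq ?_
  rw [Finset.mul_sum]
  refine Finset.sum_congr rfl fun ε _ => ?_
  rw [scalePairing, gaussPairing, ← integral_const_mul]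
  refine integral_congr_ae (.of_forall fun x => ?_)
  simp only [gaussProd]
  rw [mul_left_comm, Finset.prod_filter, ← Finset.prod_mul_distrib]
  congr 1
  refine Finset.prod_congr rfl fun c _ => ?_
  simp only [replaceAt, pairOrder, faceMatrix_mulVec, Pi.smul_apply, Function.comp_apply,
    smul_eq_mul]
  by_cases hc : pos c = k
  · simp [hc]
  · simp [hc, mul_left_comm]

variable (α Γ : ℝ) (S : Finset (Fin m))

/-- The data of a localised form, symmetric at the positions in `S`; the widths at the other
positions are equal to their bound `s`. -/
structure SymmetricDatum where
  ℓ : ℝ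
  ρ : (Fin m → ℝ) → ℝ
  J : Matrix (Idx m) (Fin m) ℝ
  F : Corner m → (Fin m → ℝ) → ℝ
  w : Fin m → ℝ
  s : ℝ
  D : ℝ
  isStoppingHeight : IsStoppingHeight ℓ ρ
  admissible : Admissible α ρ J F
  hasBoundedPreimages : HasBoundedPreimages Γ J
  faceMatrix_eq : ∀ k ∈ S, ∀ ε, faceMatrix J k ε = J
  faceTuple_eq : ∀ k ∈ S, ∀ ε, faceTuple F k ε = F
  widthBound : WidthBound w s D
  width_eq : ∀ k ∉ S, w k = s

variable {α Γ S}

namespace SymmetricDatum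

/-- The localised form of the datum with kernels of orders `γ`. -/
def form (X : SymmetricDatum α Γ S) (γ : Idx m → ℕ) : ℝ := localForm X.ρ X.ℓ X.J X.F γ X.w

/-- The size to which the forms of the datum are compared. -/
def size (X : SymmetricDatum α Γ S) : ℝ := X.D ^ 2 * X.s ^ (1 + 2 * α) * baseVolume X.ρ X.ℓ

theorem s_pos (X : SymmetricDatum α Γ S) : 0 < X.s := one_pos.trans_le X.widthBound.one_le

theorem size_nonneg (X : SymmetricDatum α Γ S) : 0 ≤ X.size := by
  have := X.s_pos
  have := baseVolume_nonneg X.ρ X.ℓ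
  unfold size
  positivity

theorem mulVec_coord (X : SymmetricDatum α Γ S) {k : Fin m} (hk : k ∈ S) (ε : Fin 2)
    (q : Fin m → ℝ) : (X.J *ᵥ q) (coord k ε) = (X.J *ᵥ q) (coord k 0) := by
  conv_lhs => rw [← X.faceMatrix_eq k hk 0, faceMatrix_mulVec, if_pos (pos_coord k ε)]

/-- The datum symmetrised at position `k`, with doubled widths at the other positions. -/
def face (X : SymmetricDatum α Γ S) (k : Fin m) (ε : Fin 2) :
    SymmetricDatum α Γ (insert k S) where
  ℓ := X.ℓ
  ρ := X.ρ
  J := faceMatrix X.J k ε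
  F := faceTuple X.F k ε
  w := Function.update (2 • X.w) k (X.w k)
  s := 2 * X.s
  D := X.D
  isStoppingHeight := X.isStoppingHeight
  admissible := X.admissible.face k ε
  hasBoundedPreimages := X.hasBoundedPreimages.faceMatrix k ε
  faceMatrix_eq l hl δ := by
    rcases eq_or_ne l k with rfl | hlk
    · exact faceMatrix_faceMatrix_self _ _ _ _
    · rw [faceMatrix_comm _ hlk.symm,
        X.faceMatrix_eq l (Finset.mem_of_mem_insert_of_ne hl hlk)]
  faceTuple_eq l hl δ := by
    rcases eq_or_ne l k with rfl | hlk
    · exact faceTuple_faceTuple_self _ _ _ _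
    · rw [faceTuple_comm _ hlk.symm,
        X.faceTuple_eq l (Finset.mem_of_mem_insert_of_ne hl hlk)]
  widthBound := by
    have hpos := X.widthBound.pos
    refine X.widthBound.mono (by linarith [X.s_pos]) (fun l => ?_) fun l => ?_ <;>
    rcases eq_or_ne l k with rfl | hl
    · simp
    · simpa [hl] using by linarith [hpos l]
    · simpa using by linarith [X.widthBound.le l, X.s_pos]
    · simpa [hl] using X.widthBound.le l
  width_eq l hl := by
    rw [Finset.mem_insert, not_or] at hl
    simp [hl.1, X.width_eq l hl.2]

theorem size_face (X : SymmetricDatum α Γ S) (k : Fin m) (ε : Fin 2) :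
    (X.face k ε).size = 2 ^ (1 + 2 * α) * X.size := by
  simp only [size, face, Real.mul_rpow two_pos.le X.s_pos.le]
  ring

theorem scalePairing_pairOrder_nonneg (X : SymmetricDatum α Γ S) {k : Fin m} (hk : k ∈ S) (a : ℕ)
    (p : Fin m → ℝ) {t : ℝ} (ht : 0 < t) :
    0 ≤ scalePairing X.J X.F (pairOrder k a) X.w p t := by
  refine X.admissible.isTestTuple.integral_cornerProd_mul_prod_nonneg k (X.faceTuple_eq k hk)
    (ψ := fun c r => gaussKernel (pairOrder k a c) (t * X.w (pos c)) (r - (X.J *ᵥ p) c))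
    (fun c => by fun_prop) ?_ fun c hc r => ?_
  · simp only [pairOrder, pos_coord, X.mulVec_coord hk 1]
  · simp only [pairOrder, if_neg hc]
    exact (gaussKernel_zero_pos (mul_pos ht (X.widthBound.pos _)) _).le

theorem inv_mul_scalePairing_pairOrder_nonneg (X : SymmetricDatum α Γ S) {k : Fin m} (hk : k ∈ S)
    (a : ℕ) {z : (Fin m → ℝ) × ℝ} (hz : z ∈ sawtooth X.ρ X.ℓ) :
    0 ≤ z.2⁻¹ * scalePairing X.J X.F (pairOrder k a) X.w z.1 z.2 := by
  have hz0 : 0 < z.2 := (X.isStoppingHeight.sawtooth_subset_Ioi hz).2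
  exact mul_nonneg (inv_pos.2 hz0).le (X.scalePairing_pairOrder_nonneg hk a _ hz0)

theorem form_pairOrder_nonneg (X : SymmetricDatum α Γ S) {k : Fin m} (hk : k ∈ S) (a : ℕ) :
    0 ≤ X.form (pairOrder k a) :=
  setIntegral_nonneg X.isStoppingHeight.measurableSet_sawtooth fun _ hz =>
    X.inv_mul_scalePairing_pairOrder_nonneg hk a hz

variable [NeZero m]

/-- Cauchy–Schwarz at position `k` reduces a form to the two symmetrised data. -/
theorem abs_form_le_face (X : SymmetricDatum α Γ S) (γ : Idx m → ℕ) (k : Fin m) :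
    |X.form γ| ≤ (∏ c with pos c ≠ k, gaussKernelConst (γ c)) *
      ∑ ε, (X.face k ε).form (pairOrder k (γ (coord k ε))) := by
  have hint (ε : Fin 2) : Integrable (fun z => z.2⁻¹ * scalePairing (faceMatrix X.J k ε)
      (faceTuple X.F k ε) (pairOrder k (γ (coord k ε))) (Function.update (2 • X.w) k (X.w k))
      z.1 z.2) (volume.restrict (sawtooth X.ρ X.ℓ)) :=
    (X.face k ε).admissible.integrableOn_mul_scalePairing X.isStoppingHeight _
      (X.face k ε).widthBound (k := fun t => t⁻¹) (continuousOn_inv₀.mono fun t ht => ht.ne')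
  simp only [form, localForm, face]
  rw [← integral_finsetSum _ fun ε _ => hint ε, ← integral_const_mul, ← Real.norm_eq_abs]
  refine norm_integral_le_of_norm_le ((integrable_finsetSum _ fun ε _ => hint ε).const_mul _)
    ((ae_restrict_iff' X.isStoppingHeight.measurableSet_sawtooth).2 (.of_forall fun z hz => ?_))
  have hz0 : 0 < z.2 := (X.isStoppingHeight.sawtooth_subset_Ioi hz).2
  rw [norm_mul, Real.norm_of_nonneg (inv_pos.2 hz0).le, ← Finset.mul_sum, mul_left_comm]
  exact mul_le_mul_of_nonneg_left (X.admissible.isTestTuple.abs_scalePairing_le_face X.J γ k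
    X.widthBound.pos z.1 hz0) (inv_pos.2 hz0).le

end SymmetricDatum

end SymmetricData

section BoundedForms

variable {m : ℕ} {α Γ : ℝ} {S : Finset (Fin m)}

open Asymptotics SymmetricDatum

/-- The forms with kernels of orders `γ` are bounded by the size, uniformly in the data. -/
abbrev IsFormBounded (α Γ : ℝ) (S : Finset (Fin m)) (γ : Idx m → ℕ) : Prop :=
  (fun X : SymmetricDatum α Γ S => X.form γ) =O[⊤] size

/-- The total order at the positions outside `S`. -/
def orderOff (S : Finset (Fin m)) (γ : Idx m → ℕ) : ℕ := ∑ c with pos c ∉ S, γ c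

theorem sum_eq_sum_coord {M : Type*} [AddCommMonoid M] (f : Idx m → M) :
    ∑ c, f c = ∑ k, ∑ ε, f (coord k ε) := by
  simp only [Fintype.sum_sum_type, Fin.sum_univ_two, Finset.sum_add_distrib]
  rfl

theorem sum_filter_pos_notMem {M : Type*} [AddCommMonoid M] (S : Finset (Fin m)) (f : Idx m → M) :
    ∑ c with pos c ∉ S, f c = ∑ k with k ∉ S, ∑ ε, f (coord k ε) := by
  simp only [Finset.sum_filter, sum_eq_sum_coord fun c => if pos c ∉ S then f c else 0, pos_coord]
  exact Finset.sum_congr rfl fun k _ => by split_ifs <;> simp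

theorem orderOff_add_single (S : Finset (Fin m)) (γ : Idx m → ℕ) {c : Idx m} (hc : pos c ∉ S)
    (n : ℕ) : orderOff S (γ + Pi.single c n) = orderOff S γ + n := by
  simp only [orderOff, Pi.add_apply, Finset.sum_add_distrib, Finset.sum_pi_single']
  simp [hc]

theorem exists_two_le_of_card_lt_orderOff {γ : Idx m → ℕ} (h : Sᶜ.card < orderOff S γ) :
    ∃ k ∉ S, 2 ≤ ∑ ε, γ (coord k ε) := by
  rw [orderOff, sum_filter_pos_notMem, Finset.filter_notMem_eq_sdiff,
    ← Finset.compl_eq_univ_sdiff, Finset.card_eq_sum_ones] at h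
  obtain ⟨k, hk, hlt⟩ := Finset.exists_lt_of_sum_lt h
  exact ⟨k, Finset.mem_compl.1 hk, hlt⟩

namespace IsFormBounded

theorem of_forall_le {f : SymmetricDatum α Γ S → ℝ} (C : ℝ) (h : ∀ X, |f X| ≤ C * X.size) :
    f =O[⊤] size :=
  isBigO_top.2 ⟨C, fun X => by simpa [abs_of_nonneg X.size_nonneg] using h X⟩

variable [NeZero m]

theorem of_face {γ : Idx m → ℕ} (k : Fin m)
    (h : ∀ ε, IsFormBounded α Γ (insert k S) (pairOrder k (γ (coord k ε)))) :
    IsFormBounded α Γ S γ := by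
  have hface (ε : Fin 2) : (fun X : SymmetricDatum α Γ S =>
      (X.face k ε).form (pairOrder k (γ (coord k ε)))) =O[⊤] size := by
    refine ((h ε).comp_tendsto (k := (face · k ε)) Filter.tendsto_top).trans ?_
    simp only [Function.comp_def, size_face]
    exact (isBigO_refl _ _).const_mul_left _
  refine .trans (.of_bound' <| .of_forall fun X => ?_)
    ((IsBigO.sum fun ε (_ : ε ∈ Finset.univ) => hface ε).const_mul_left
      (∏ c with pos c ≠ k, gaussKernelConst (γ c)))
  exact (X.abs_form_le_face γ k).trans (le_abs_self _)

theorem of_higher (hα : 2 * α < 1) {γ : Idx m → ℕ} (hγ : 2 ≤ orderOff S γ)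
    (h : ∀ c, pos c ∉ S → IsFormBounded α Γ S (γ + Pi.single c 2)) : IsFormBounded α Γ S γ := by
  have hpi : (fun (X : SymmetricDatum α Γ S) (c : {c : Idx m // pos c ∉ S}) =>
      X.form (γ + Pi.single c.1 2)) =O[⊤] size := isBigO_pi.2 fun c => h c.1 c.2
  obtain ⟨C, hC⟩ := isBigO_top.1 hpi
  refine of_forall_le (2 * m * (2 * Real.pi)⁻¹ / (1 - 2 * α) * C) fun X => ?_
  refine (X.admissible.abs_localForm_le_of_higher X.isStoppingHeight hα γ X.widthBound X.width_eq
    hγ (K := C * X.D ^ 2 * baseVolume X.ρ X.ℓ) fun r hr c hc => ?_).trans_eq ?_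
  · let Y : SymmetricDatum α Γ S := { X with
      w := S.piecewise X.w fun _ => r
      s := r
      widthBound := X.widthBound.piecewise_const S hr
      width_eq := fun k hk => by simp [hk] }
    refine ((norm_le_pi_norm _ (⟨c, hc⟩ : {c : Idx m // pos c ∉ S})).trans (hC Y)).trans_eq ?_
    rw [Real.norm_of_nonneg Y.size_nonneg]
    simp only [size, Y]
    ring
  · rw [size]; ring

end IsFormBounded

section Shift

theorem one_sub_eq_of_ne : ∀ {a b : Fin 2}, a ≠ b → 1 - b = a := by decide

theorem one_sub_ne_self : ∀ a : Fin 2, 1 - a ≠ a := by decide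

theorem isBigO_mulVec_mul {q : SymmetricDatum α Γ S → Fin m → ℝ} (hq : ∀ X, ‖X.J *ᵥ q X‖ ≤ Γ)
    (c : Idx m) {f : SymmetricDatum α Γ S → ℝ} (hf : f =O[⊤] size) :
    (fun X => (X.J *ᵥ q X) c * f X) =O[⊤] size := by
  have hbd : (fun X => (X.J *ᵥ q X) c) =O[⊤] fun _ => (1 : ℝ) :=
    isBigO_top.2 ⟨Γ, fun X => by simpa using (norm_le_pi_norm _ c).trans (hq X)⟩
  simpa using hbd.mul hf

variable [NeZero m]

theorem isBigO_sum_mulVec_mul_form {q : SymmetricDatum α Γ S → Fin m → ℝ} (hq : ∀ X, ‖q X‖ ≤ Γ)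
    (β : Idx m → ℕ) :
    (fun X => X.s * ∑ c, (X.J *ᵥ q X) c / X.w (pos c) * X.form (β + Pi.single c 1)) =O[⊤] size := by
  refine IsFormBounded.of_forall_le (pairingConst α β * Γ) fun X => ?_
  have hs := X.s_pos
  have hC := pairingConst_nonneg α β
  have hV := baseVolume_nonneg X.ρ X.ℓ
  have hD := X.widthBound.one_le_prod
  rw [abs_mul, abs_of_pos hs, size, Real.rpow_add hs, Real.rpow_one]
  calc X.s * _ ≤ X.s * (pairingConst α β * (X.D ^ 2 * X.s ^ (2 * α)) * baseVolume X.ρ X.ℓ * Γ) := by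
        gcongr
        refine (X.admissible.abs_sum_mulVec_mul_localForm_le X.isStoppingHeight β X.widthBound
          (q X)).trans ?_
        gcongr
        exact hq X
    _ = _ := by ring

/-- By symmetry and since `w k = s` for `k ∉ S`, the integration by parts in the direction `q`
separates the positions in `S` from the others. -/
theorem isBigO_shift {q : SymmetricDatum α Γ S → Fin m → ℝ} (hq : ∀ X, ‖q X‖ ≤ Γ)
    (β : Idx m → ℕ) :
    (fun X => ∑ k ∈ S, X.s / X.w k * (X.J *ᵥ q X) (coord k 0) *
        ∑ ε, X.form (β + Pi.single (coord k ε) 1) +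
      ∑ c with pos c ∉ S, (X.J *ᵥ q X) c * X.form (β + Pi.single c 1)) =O[⊤] size := by
  refine (isBigO_sum_mulVec_mul_form hq β).congr_left fun X => ?_
  rw [sum_eq_sum_coord, sum_filter_pos_notMem, Finset.mul_sum,
    ← Finset.sum_filter_add_sum_filter_not Finset.univ (· ∈ S), Finset.filter_univ_mem]
  congr 1 <;> refine Finset.sum_congr rfl fun k hk => ?_ <;> simp only [Finset.mul_sum] <;>
    refine Finset.sum_congr rfl fun ε _ => ?_ <;> rw [pos_coord]
  · rw [X.mulVec_coord hk ε]
    ring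
  · rw [X.width_eq k (Finset.mem_filter.1 hk).2]
    field_simp [X.s_pos.ne']

theorem IsFormBounded.of_shift (β : Idx m → ℕ) (j : Corner m) {c₀ : Idx m} (hc₀ : pos c₀ ∉ S)
    (hside : side c₀ ≠ j (pos c₀))
    (h : ∀ k ∉ S, IsFormBounded α Γ S (β + Pi.single (sel j k) 1)) :
    IsFormBounded α Γ S (β + Pi.single c₀ 1) := by
  choose q hq hJq hproj using fun X : SymmetricDatum α Γ S =>
    X.hasBoundedPreimages (fun k => 1 - j k) (pos c₀)
  have hrow (X : SymmetricDatum α Γ S) (c : Idx m) (hc : side c ≠ j (pos c)) :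
      (X.J *ᵥ q X) c = Pi.single (M := fun _ => ℝ) (pos c₀) 1 (pos c) := by
    rw [← hproj X, proj, sel_eq_coord, one_sub_eq_of_ne hc, coord_pos_side]
  have hrest (c : Idx m) (hc : pos c ∉ S) (hne : c ≠ c₀) :
      (fun X => (X.J *ᵥ q X) c * X.form (β + Pi.single c 1)) =O[⊤] size := by
    by_cases hcj : side c = j (pos c)
    · refine isBigO_mulVec_mul hJq c ?_
      simpa [sel_eq_coord, ← hcj] using h (pos c) hc
    · have hpos : pos c ≠ pos c₀ := fun hpos => hne (by
        rw [← coord_pos_side c, ← coord_pos_side c₀, ← one_sub_eq_of_ne hcj,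
          ← one_sub_eq_of_ne hside, hpos])
      refine (isBigO_zero size ⊤).congr_left fun X => ?_
      rw [hrow X c hcj, Pi.single_eq_of_ne hpos, zero_mul]
  have hmem : c₀ ∈ Finset.univ.filter fun c => pos c ∉ S := by simpa using hc₀
  refine ((isBigO_shift hq β).sub (IsBigO.sum (A := fun c X => (X.J *ᵥ q X) c *
    X.form (β + Pi.single c 1)) (s := (Finset.univ.filter fun c => pos c ∉ S).erase c₀)
    fun c hc => hrest c (by simpa using Finset.mem_of_mem_erase hc)
      (Finset.ne_of_mem_erase hc))).congr_left fun X => ?_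
  have hzero (k : Fin m) (hk : k ∈ S) : (X.J *ᵥ q X) (coord k 0) = 0 := by
    rw [← X.mulVec_coord hk (1 - j k), hrow X _ (by simpa using one_sub_ne_self (j k)), pos_coord,
      Pi.single_eq_of_ne (ne_of_mem_of_not_mem hk hc₀)]
  rw [Finset.sum_eq_zero fun k hk => by rw [hzero k hk]; ring, zero_add,
    ← Finset.add_sum_erase _ _ hmem, hrow X c₀ hside]
  simp

theorem isBigO_sum_form_add_single {i : Fin m} (hi : i ∈ S) {ι : Type*} (A : Finset ι)
    (β : ι → Idx m → ℕ)
    (h : ∀ c, pos c ∉ S →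
      (fun X : SymmetricDatum α Γ S => ∑ d ∈ A, X.form (β d + Pi.single c 1)) =O[⊤] size) :
    (fun X : SymmetricDatum α Γ S =>
      ∑ d ∈ A, ∑ ε, X.form (β d + Pi.single (coord i ε) 1)) =O[⊤] size := by
  choose q hq hJq hproj using fun X : SymmetricDatum α Γ S => X.hasBoundedPreimages 0 i
  have hrow (X : SymmetricDatum α Γ S) (k : Fin m) :
      (X.J *ᵥ q X) (coord k 0) = Pi.single (M := fun _ => ℝ) i 1 k := congrFun (hproj X) k
  have hoff := IsBigO.sum (s := Finset.univ.filter fun c => pos c ∉ S) fun c hc =>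
    isBigO_mulVec_mul hJq c (h c (Finset.mem_filter.1 hc).2)
  have hmain : (fun X => X.s / X.w i * ∑ d ∈ A, ∑ ε, X.form (β d + Pi.single (coord i ε) 1))
      =O[⊤] (size (α := α) (Γ := Γ) (S := S)) := by
    refine ((IsBigO.sum (s := A) fun d _ => isBigO_shift hq (β d)).sub hoff).congr_left fun X => ?_
    simp only [Finset.sum_apply, hrow, Finset.sum_add_distrib, Finset.mul_sum (s := A)]
    rw [Finset.sum_comm (s := A) (t := Finset.univ.filter _), add_sub_cancel_right]
    refine Finset.sum_congr rfl fun d _ => ?_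
    rw [Finset.sum_eq_single_of_mem i hi fun k _ hk => by simp [hk]]
    simp
  have hratio : (fun X : SymmetricDatum α Γ S => X.w i / X.s) =O[⊤] fun _ => (1 : ℝ) := by
    refine isBigO_top.2 ⟨1, fun X => ?_⟩
    have hs := X.s_pos
    have := X.widthBound.pos i
    rw [Real.norm_of_nonneg (by positivity), norm_one, mul_one, div_le_one hs]
    exact X.widthBound.le i
  refine (hratio.mul hmain).congr (fun X => ?_) fun X => one_mul _
  have := X.s_pos
  have := X.widthBound.pos i
  field_simp

end Shift

end BoundedForms

section Induction

variable {m : ℕ} {α Γ : ℝ} {S : Finset (Fin m)}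

open Asymptotics SymmetricDatum

theorem sum_fin_two_eq_add_one_sub {M : Type*} [AddCommMonoid M] (f : Fin 2 → M) (a : Fin 2) :
    ∑ ε, f ε = f a + f (1 - a) := by
  fin_cases a <;> simp [add_comm]

theorem exists_eq_add_single {γ : Idx m → ℕ} {j : Corner m} (hj : ∀ k ∉ S, γ (coord k (j k)) = 0)
    (hγ : Sᶜ.card < orderOff S γ) : ∃ (c : Idx m) (β : Idx m → ℕ), pos c ∉ S ∧ side c ≠ j (pos c) ∧
      γ = β + Pi.single c 1 ∧ ∀ d, γ d ≠ 0 → β d ≠ 0 := by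
  obtain ⟨k, hk, h2⟩ := exists_two_le_of_card_lt_orderOff hγ
  rw [sum_fin_two_eq_add_one_sub _ (j k), hj k hk, zero_add] at h2
  set c := coord k (1 - j k)
  have hcancel (d : Idx m) : γ d = (γ - Pi.single c 1 : Idx m → ℕ) d +
      (Pi.single c 1 : Idx m → ℕ) d ∧ (γ d ≠ 0 → (γ - Pi.single c 1 : Idx m → ℕ) d ≠ 0) := by
    rcases eq_or_ne d c with rfl | hd
    · simp only [Pi.sub_apply, Pi.single_eq_same]
      omega
    · simp [hd]
  exact ⟨c, γ - Pi.single c 1, by simpa [c] using hk, by simpa [c] using one_sub_ne_self (j k),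
    funext fun d => (hcancel d).1, fun d => (hcancel d).2⟩

/-- The positions outside `S` at which both orders vanish. -/
def emptyPositions (S : Finset (Fin m)) (γ : Idx m → ℕ) : Finset (Fin m) :=
  {k | k ∉ S ∧ ∀ ε, γ (coord k ε) = 0}

theorem emptyPositions_add_single_ssubset {γ β : Idx m → ℕ} (hβ : ∀ d, γ d ≠ 0 → β d ≠ 0)
    {k : Fin m} (hk : k ∈ emptyPositions S γ) (a : Fin 2) :
    emptyPositions S (β + Pi.single (coord k a) 1) ⊂ emptyPositions S γ := by
  refine (Finset.ssubset_iff_of_subset fun l hl => ?_).2 ⟨k, hk, fun hk' => ?_⟩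
  · simp only [emptyPositions, Finset.mem_filter_univ, Pi.add_apply, add_eq_zero] at hl ⊢
    exact ⟨hl.1, fun ε => by_contra fun h => hβ _ h (hl.2 ε).1⟩
  · have := ((Finset.mem_filter_univ _).1 hk').2 a
    simp at this

theorem single_coord_add_single_coord (i : Fin m) :
    (Pi.single (coord i 0) 1 + Pi.single (coord i 1) 1 : Idx m → ℕ) = pairOrder i 1 := by
  funext c
  rcases c with k | k <;> by_cases hk : k = i <;> simp [pairOrder, pos, coord, hk]

variable [NeZero m]

/-- Summation by parts moves an order from a position with order at least two to another
position. Either that position now has nonzero orders on both sides, which Cauchy–Schwarz handles,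
or the number of empty positions has decreased. -/
theorem isFormBounded_of_card_lt_orderOff
    (hface : ∀ k ∉ S, ∀ a, a ≠ 0 → IsFormBounded α Γ (insert k S) (pairOrder k a))
    (γ : Idx m → ℕ) (hγ : Sᶜ.card < orderOff S γ) : IsFormBounded α Γ S γ := by
  induction hn : (emptyPositions S γ).card using Nat.strong_induction_on generalizing γ with
  | _ n ih =>
  subst hn
  by_cases hfull : ∃ k ∉ S, ∀ ε, γ (coord k ε) ≠ 0
  · obtain ⟨k, hk, hne⟩ := hfull
    exact .of_face k fun ε => hface k hk _ (hne ε)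
  push Not at hfull
  choose! j hj using hfull
  obtain ⟨c, β, hc, hside, hγβ, hβ⟩ := exists_eq_add_single hj hγ
  rw [hγβ]
  refine .of_shift β j hc hside fun k hk => ?_
  rw [sel_eq_coord]
  by_cases hempty : k ∈ emptyPositions S γ
  · refine ih _ (Finset.card_lt_card (emptyPositions_add_single_ssubset hβ hempty _)) _ ?_ rfl
    rwa [orderOff_add_single S β (by simpa), ← orderOff_add_single S β hc, ← hγβ]
  · simp only [emptyPositions, Finset.mem_filter_univ, not_and, not_forall] at hempty
    obtain ⟨ε, hε⟩ := hempty hk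
    refine .of_face k fun δ => hface k hk _ ?_
    rcases eq_or_ne δ (j k) with rfl | hδ
    · simp
    · have hεj : ε ≠ j k := fun h => hε (h ▸ hj k hk)
      rw [← one_sub_eq_of_ne hδ, one_sub_eq_of_ne hεj, Pi.add_apply]
      exact (Nat.add_pos_left (Nat.pos_of_ne_zero (hβ _ hε)) _).ne'

theorem isFormBounded_of_two_le_orderOff (hα : 2 * α < 1)
    (hface : ∀ k ∉ S, ∀ a, a ≠ 0 → IsFormBounded α Γ (insert k S) (pairOrder k a))
    {γ : Idx m → ℕ} (hγ : 2 ≤ orderOff S γ) : IsFormBounded α Γ S γ := by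
  obtain ⟨n, hn⟩ : ∃ n, Sᶜ.card < orderOff S γ + n := ⟨Sᶜ.card + 1, by omega⟩
  induction n generalizing γ with
  | zero => exact isFormBounded_of_card_lt_orderOff hface γ hn
  | succ n ih =>
    refine .of_higher hα hγ fun c hc => ?_
    have := orderOff_add_single S γ hc 2
    exact ih (by omega) (by omega)

theorem isBigO_sum_form_add_single_two {i : Fin m} (hi : i ∈ S) (γ : Idx m → ℕ)
    (h : ∀ c d, pos c ∉ S → pos d ∉ S →
      IsFormBounded α Γ S (γ + Pi.single c 1 + Pi.single d 1)) :
    (fun X : SymmetricDatum α Γ S => ∑ ε, X.form (γ + Pi.single (coord i ε) 2) +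
      2 * X.form (γ + pairOrder i 1)) =O[⊤] size := by
  have hone (c : Idx m) (hc : pos c ∉ S) : (fun X : SymmetricDatum α Γ S =>
      ∑ ε, X.form (γ + Pi.single (coord i ε) 1 + Pi.single c 1)) =O[⊤] size := by
    refine (isBigO_sum_form_add_single hi (Finset.univ : Finset Unit)
      (fun _ => γ + Pi.single c 1) fun d hd => ?_).congr_left fun X => ?_
    · simpa only [Finset.univ_unique, Finset.sum_singleton] using h c d hc hd
    · rw [Fintype.sum_unique]
      exact Finset.sum_congr rfl fun ε _ => by rw [add_right_comm]
  refine (isBigO_sum_form_add_single hi Finset.univ (fun ε => γ + Pi.single (coord i ε) 1)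
    hone).congr_left fun X => ?_
  have hdouble (ε : Fin 2) : (Pi.single (coord i ε) 2 : Idx m → ℕ) =
      Pi.single (coord i ε) 1 + Pi.single (coord i ε) 1 := (Pi.single_add _ 1 1)
  simp only [Fin.sum_univ_two, add_assoc, ← single_coord_add_single_coord, hdouble,
    add_comm (Pi.single (coord i 1) 1 : Idx m → ℕ) (Pi.single (coord i 0) 1)]
  ring

/-- The scale derivative telescopes; the second derivatives at the positions in `S` which it
produces are traded for mixed ones by two integrations by parts. -/
theorem isBigO_sum_form_add_pairOrder {γ : Idx m → ℕ} (hγ : γ = 0 ∨ IsFormBounded α Γ S γ)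
    (h : ∀ γ : Idx m → ℕ, 2 ≤ orderOff S γ → IsFormBounded α Γ S γ) :
    (fun X : SymmetricDatum α Γ S => ∑ k ∈ S, X.form (γ + pairOrder k 1)) =O[⊤] size := by
  have htwo (k : Fin m) (hk : k ∈ S) := isBigO_sum_form_add_single_two (α := α) (Γ := Γ) hk γ
    fun c d hc hd => h _ (by rw [orderOff_add_single S _ hd, orderOff_add_single S _ hc]; omega)
  have hoff := IsBigO.sum (s := Finset.univ.filter fun c => pos c ∉ S) fun c hc =>
    h (γ + Pi.single c 2) (by
      rw [orderOff_add_single S _ (Finset.mem_filter.1 hc).2]; omega)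
  have heuler : (fun X : SymmetricDatum α Γ S => ∑ c, eulerOp X.form γ c) =O[⊤] size := by
    refine IsFormBounded.of_forall_le (2 * pairingConst α γ) fun X => ?_
    refine (X.admissible.abs_sum_eulerOp_localForm_le X.isStoppingHeight γ X.widthBound).trans ?_
    have := pairingConst_nonneg α γ
    have := baseVolume_nonneg X.ρ X.ℓ
    rw [size, ← mul_assoc (2 : ℝ)]
    refine mul_le_mul_of_nonneg_right ?_ this |>.trans_eq (mul_assoc _ _ _)
    have hs := X.widthBound.one_le
    gcongr
    linarith
  have horder : (fun X : SymmetricDatum α Γ S => ∑ c, (γ c : ℝ) * X.form γ) =O[⊤] size := by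
    refine (IsBigO.sum (s := Finset.univ) (A := fun c X => (γ c : ℝ) * X.form γ)
      fun c _ => ?_).congr_left fun X => Finset.sum_apply _ _ _
    rcases hγ with rfl | hγ
    · exact (isBigO_zero size ⊤).congr_left fun X => by simp
    · exact hγ.const_mul_left _
  refine ((((IsBigO.sum htwo).add hoff).sub
    ((heuler.sub horder).const_mul_left (2 * Real.pi))).const_mul_left 2⁻¹).congr_left fun X => ?_
  have hsplit : ∑ c, X.form (γ + Pi.single c 2) = ∑ k ∈ S, ∑ ε, X.form (γ + Pi.single (coord k ε) 2)
      + ∑ c with pos c ∉ S, X.form (γ + Pi.single c 2) := by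
    rw [sum_eq_sum_coord, sum_filter_pos_notMem,
      ← Finset.sum_filter_add_sum_filter_not Finset.univ (· ∈ S), Finset.filter_univ_mem]
  have hlap : 2 * Real.pi * (∑ c, eulerOp X.form γ c - ∑ c, (γ c : ℝ) * X.form γ) =
      ∑ c, X.form (γ + Pi.single c 2) := by
    simp only [eulerOp, Finset.sum_add_distrib, add_sub_cancel_left, ← Finset.mul_sum]
    field_simp
  simp only [Finset.sum_apply]
  rw [hlap, hsplit, Finset.sum_add_distrib, ← Finset.mul_sum]
  ring

theorem isFormBounded_pairOrder (hα : 2 * α < 1) {i : Fin m} (hi : i ∈ S) {a : ℕ} (ha : a ≠ 0) :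
    IsFormBounded α Γ S (pairOrder i a) := by
  induction S using WellFoundedGT.induction generalizing i a with
  | _ S ih =>
  have htwo (γ : Idx m → ℕ) (hγ : 2 ≤ orderOff S γ) : IsFormBounded α Γ S γ :=
    isFormBounded_of_two_le_orderOff hα (fun k hk a ha =>
      ih _ (Finset.ssubset_insert hk) (Finset.mem_insert_self k S) ha) hγ
  have hone (i : Fin m) (hi : i ∈ S) : IsFormBounded α Γ S (pairOrder i 1) := by
    refine .trans (.of_bound' <| .of_forall fun X => ?_)
      (isBigO_sum_form_add_pairOrder (.inl rfl) htwo)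
    simp only [zero_add]
    exact (abs_of_nonneg (X.form_pairOrder_nonneg hi 1)).trans_le <|
      (Finset.single_le_sum (fun k hk => X.form_pairOrder_nonneg hk 1) hi).trans (le_abs_self _)
  induction a, Nat.one_le_iff_ne_zero.2 ha using Nat.le_induction with
  | base => exact hone i hi
  | succ a _ iha =>
    have hmixed := IsBigO.sum (s := S.erase i) fun k hk =>
      IsFormBounded.of_face (α := α) (Γ := Γ) (S := S) (γ := pairOrder i a + pairOrder k 1) k
        fun ε => by
          rw [Finset.insert_eq_of_mem (Finset.mem_of_mem_erase hk)]
          simpa [pairOrder, Finset.ne_of_mem_erase hk] using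
            hone k (Finset.mem_of_mem_erase hk)
    have hadd : pairOrder i (a + 1) = pairOrder i a + pairOrder i 1 := by
      funext c
      simp only [pairOrder, Pi.add_apply]
      split_ifs <;> rfl
    refine ((isBigO_sum_form_add_pairOrder (.inr (iha (by omega))) htwo).sub hmixed).congr_left
      fun X => ?_
    rw [Finset.sum_apply, ← Finset.add_sum_erase _ _ hi, add_sub_cancel_right, hadd]

end Induction

section Regularity

variable {m : ℕ}

open scoped Matrix.Norms.Operator in
theorem exists_norm_mulVec_le_of_isCompact {ι κ : Type*} [Fintype ι] [Fintype κ]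
    {K : Set (Matrix ι κ ℝ)} (hK : IsCompact K) :
    ∃ B, ∀ A ∈ K, ∀ x : κ → ℝ, ‖A *ᵥ x‖ ≤ B * ‖x‖ := by
  obtain ⟨B, hKB⟩ := hK.isBounded.exists_norm_le
  exact ⟨B, fun A hA x => (linfty_opNorm_mulVec A x).trans <| by gcongr; exact hKB A hA⟩

open scoped Matrix.Norms.L2Operator in
theorem isCompact_setOf_opNorm_le (Δ : ℝ) :
    IsCompact {A : Matrix (Fin m) (Fin m) ℝ | opNorm A ≤ Δ} := by
  have : ProperSpace (Matrix (Fin m) (Fin m) ℝ) := FiniteDimensional.proper ℝ _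
  have h : {A : Matrix (Fin m) (Fin m) ℝ | opNorm A ≤ Δ} = Metric.closedBall 0 Δ := by
    ext A
    exact (mem_closedBall_zero_iff (a := A)).symm
  rw [h]
  exact isCompact_closedBall 0 Δ

theorem IsReg.exists_mulVec_eq {Δ B : ℝ} {A : Matrix (Fin m) (Fin m) ℝ} (hA : IsReg Δ A)
    (hB : ∀ v, ‖A.adjugate *ᵥ v‖ ≤ B * ‖v‖) (v : Fin m → ℝ) :
    ∃ q, ‖q‖ ≤ Δ * B * ‖v‖ ∧ A *ᵥ q = v := by
  refine ⟨A⁻¹ *ᵥ v, ?_, by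
    rw [mulVec_mulVec, mul_nonsing_inv A (isUnit_iff_ne_zero.2 hA.2.1), one_mulVec]⟩
  rw [inv_def, smul_mulVec, norm_smul, Ring.inverse_eq_inv', norm_inv, Real.norm_eq_abs, mul_assoc]
  exact mul_le_mul hA.2.2 (hB v) (norm_nonneg _) ((inv_nonneg.2 (abs_nonneg _)).trans hA.2.2)

/-- `B` bounds `J` and the inverses of all the matrices `A_j`, with respect to the supremum
norms. -/
structure IsBoundedBy (B : ℝ) (J : Matrix (Idx m) (Fin m) ℝ) : Prop where
  one_le : 1 ≤ B
  norm_mulVec_le : ∀ x, ‖J *ᵥ x‖ ≤ B * ‖x‖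
  exists_proj_mulVec_eq : ∀ j v, ∃ q, ‖q‖ ≤ B * ‖v‖ ∧ proj j (J *ᵥ q) = v

theorem exists_isBoundedBy_of_isReg (m : ℕ) (Δ : ℝ) :
    ∃ B, 1 ≤ B ∧
      ∀ J : Matrix (Idx m) (Fin m) ℝ, (∀ j, IsReg Δ (Amat J j)) → IsBoundedBy B J := by
  have hK := isCompact_setOf_opNorm_le (m := m) Δ
  obtain ⟨B, hB⟩ := exists_norm_mulVec_le_of_isCompact hK
  obtain ⟨B', hB'⟩ := exists_norm_mulVec_le_of_isCompact
    (hK.image (continuous_id.matrix_adjugate))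
  refine ⟨max 1 (max B (Δ * B')), le_max_left _ _, fun J hJ =>
    ⟨le_max_left _ _, fun x => ?_, fun j v => ?_⟩⟩
  · refine (pi_norm_le_iff_of_nonneg (by positivity)).2 fun c => ?_
    rw [← coord_pos_side c]
    calc ‖(J *ᵥ x) (coord (pos c) (side c))‖
        = ‖(J *ᵥ x) (sel (fun _ => side c) (pos c))‖ := by rw [sel_eq_coord]
      _ ≤ ‖Amat J (fun _ => side c) *ᵥ x‖ :=
          norm_le_pi_norm (Amat J (fun _ => side c) *ᵥ x) (pos c)
      _ ≤ B * ‖x‖ := hB _ (hJ _).1 x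
      _ ≤ _ := by gcongr; exact (le_max_left _ _).trans (le_max_right _ _)
  · obtain ⟨q, hq, hqv⟩ := (hJ j).exists_mulVec_eq
      (fun v => hB' _ (Set.mem_image_of_mem _ (hJ j).1) v) v
    exact ⟨q, hq.trans (by gcongr; exact (le_max_right _ _).trans (le_max_right _ _)), hqv⟩

theorem IsBoundedBy.hasBoundedPreimages {B : ℝ} {J : Matrix (Idx m) (Fin m) ℝ}
    (hJ : IsBoundedBy B J) : HasBoundedPreimages (B * B) J := fun j i => by
  obtain ⟨q, hq, hqi⟩ := hJ.exists_proj_mulVec_eq j (Pi.single i 1)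
  have hB := hJ.one_le
  have hqB : ‖q‖ ≤ B := hq.trans_eq (by simp [Pi.norm_single])
  exact ⟨q, hqB.trans (by nlinarith), (hJ.norm_mulVec_le q).trans (by gcongr), hqi⟩

end Regularity

theorem gaussDeriv_zero_le_one (x : ℝ) : gaussDeriv 0 x ≤ 1 := by
  rw [gaussDeriv_zero, Real.exp_le_one_iff]
  nlinarith [mul_nonneg Real.pi_pos.le (sq_nonneg x)]

theorem setLIntegral_Ioc_sqrt_div (C : ℝ) :
    ∫⁻ r in Set.Ioc (0 : ℝ) 1, ENNReal.ofReal √(C / r) = ENNReal.ofReal (2 * √C) := by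
  have heq : Set.EqOn (fun r : ℝ => ENNReal.ofReal √(C / r))
      (fun r => ENNReal.ofReal (√C * r ^ (-(1 / 2) : ℝ))) (Set.Ioc 0 1) := fun r hr => by
    simp only [Real.sqrt_div' C hr.1.le, div_eq_mul_inv √C, Real.rpow_neg hr.1.le,
      ← Real.sqrt_eq_rpow]
  have hint : IntegrableOn (fun r : ℝ => √C * r ^ (-(1 / 2) : ℝ)) (Set.Ioc 0 1) :=
    (intervalIntegral.intervalIntegrable_rpow' (a := 0) (b := 1) (by norm_num)).1.const_mul _
  rw [setLIntegral_congr_fun measurableSet_Ioc heq, ← ofReal_integral_eq_lintegral_ofReal hint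
      ((ae_restrict_iff' measurableSet_Ioc).2 (.of_forall fun r hr =>
        mul_nonneg (Real.sqrt_nonneg _) (Real.rpow_nonneg hr.1.le _))),
    ← intervalIntegral.integral_of_le zero_le_one, intervalIntegral.integral_const_mul,
    integral_rpow (.inl (by norm_num))]
  norm_num [mul_comm]

theorem lintegral_mul_ofReal_le_of_superlevel {X : Type*} [MeasurableSpace X] {μ : Measure X}
    {f : X → ℝ≥0∞} (hf : Measurable f) {g : X → ℝ} (hg : Measurable g) (hg0 : 0 ≤ g) (hg1 : g ≤ 1)
    {C : ℝ} {P : ℝ≥0∞}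
    (h : ∀ r ∈ Set.Ioc (0 : ℝ) 1, ∫⁻ x in {x | r ≤ g x}, f x ∂μ ≤ P * ENNReal.ofReal √(C / r)) :
    ∫⁻ x, f x * ENNReal.ofReal (g x) ∂μ ≤ ENNReal.ofReal (2 * √C) * P := by
  have hlevel (r : ℝ) : MeasurableSet {x | r ≤ g x} := measurableSet_le measurable_const hg
  have hle : ∀ r ∈ Set.Ioi (0 : ℝ), μ.withDensity f {x | r ≤ g x} ≤
      (Set.Ioc 0 1).indicator (fun r => P * ENNReal.ofReal √(C / r)) r := fun r hr => by
    rcases le_or_gt r 1 with hr1 | hr1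
    · rw [Set.indicator_of_mem (show r ∈ Set.Ioc 0 1 from ⟨hr, hr1⟩),
        withDensity_apply _ (hlevel r)]
      exact h r ⟨hr, hr1⟩
    · have hempty : {x | r ≤ g x} = ∅ :=
        Set.eq_empty_of_forall_notMem fun x hx => (hx.trans (hg1 x)).not_gt hr1
      simp [hempty]
  calc ∫⁻ x, f x * ENNReal.ofReal (g x) ∂μ
      = ∫⁻ x, ENNReal.ofReal (g x) ∂μ.withDensity f :=
        (lintegral_withDensity_eq_lintegral_mul _ hf hg.ennreal_ofReal).symm
    _ = ∫⁻ r in Set.Ioi 0, μ.withDensity f {x | r ≤ g x} :=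
        lintegral_eq_lintegral_meas_le _ (.of_forall hg0) hg.aemeasurable
    _ ≤ ∫⁻ r in Set.Ioi 0, (Set.Ioc 0 1).indicator (fun r => P * ENNReal.ofReal √(C / r)) r :=
        setLIntegral_mono' measurableSet_Ioi hle
    _ = ∫⁻ r in Set.Ioc 0 1, P * ENNReal.ofReal √(C / r) := by
        rw [lintegral_indicator measurableSet_Ioc,
          Measure.restrict_restrict_of_subset Set.Ioc_subset_Ioi_self]
    _ = ENNReal.ofReal (2 * √C) * P := by
        rw [lintegral_const_mul _ (by fun_prop), setLIntegral_Ioc_sqrt_div, mul_comm]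

section LayerCake

variable {ι : Type*} [Fintype ι]

theorem gaussProd_zero_eq (v b x : ι → ℝ) :
    gaussProd 0 v b x = (∏ c, (v c)⁻¹) * ∏ c, gaussDeriv 0 ((v c)⁻¹ * (x c - b c)) := by
  simp only [gaussProd, gaussKernel, Pi.zero_apply, Finset.prod_mul_distrib]

theorem prod_gaussDeriv_zero_le (z : ι → ℝ) (c : ι) :
    ∏ c, gaussDeriv 0 (z c) ≤ gaussDeriv 0 (z c) := by
  classical
  rw [← Finset.mul_prod_erase _ _ (Finset.mem_univ c)]
  exact mul_le_of_le_one_right (gaussDeriv_zero_pos _).le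
    (Finset.prod_le_one (fun _ _ => (gaussDeriv_zero_pos _).le) fun _ _ => gaussDeriv_zero_le_one _)

theorem setOf_le_prod_gaussDeriv_zero_subset_Icc {v : ι → ℝ} (hv : ∀ c, 0 < v c) (b : ι → ℝ)
    {r R : ℝ} (hR : ∀ x, r ≤ gaussDeriv 0 x → |x| ≤ R) :
    {y : ι → ℝ | r ≤ ∏ c, gaussDeriv 0 ((v c)⁻¹ * (y c - b c))} ⊆
      Set.Icc (b - R • v) (b + R • v) := fun y hy => by
  have h (c : ι) : |y c - b c| ≤ R * v c := by
    have hc := hR _ (le_trans hy (prod_gaussDeriv_zero_le _ c))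
    rwa [abs_mul, abs_of_pos (inv_pos.2 (hv c)), inv_mul_le_iff₀' (hv c)] at hc
  exact ⟨fun c => by simpa using by linarith [(abs_le.1 (h c)).1],
    fun c => by simpa using by linarith [(abs_le.1 (h c)).2]⟩

/-- The superlevel sets of the Gaussian are contained in boxes of slowly growing size. -/
theorem exists_lintegral_gaussMeasure_le {n : ℕ} (hn : n ≠ 0) :
    ∃ K, 0 ≤ K ∧ ∀ {v : ι → ℝ} (_ : ∀ c, 0 < v c) (b : ι → ℝ) {f : (ι → ℝ) → ℝ≥0∞}
      (_ : Measurable f) {P : ℝ≥0∞} (_ : ∀ R : ℝ, 1 ≤ R →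
        ∫⁻ y in Set.Icc (b - R • v) (b + R • v), f y ≤ P * ENNReal.ofReal (R ^ n)),
      ∫⁻ y, f y ∂gaussMeasure v b ≤ ENNReal.ofReal (K * ∏ c, (v c)⁻¹) * P := by
  obtain ⟨C, hC1, hC⟩ : ∃ C, 1 ≤ C ∧ ∀ x, |x| ^ (2 * n) * gaussDeriv 0 x ≤ C := by
    obtain ⟨C, hC⟩ := exists_pow_mul_gaussDeriv_zero_le (2 * n)
    refine ⟨max 1 C, le_max_left _ _, fun x => (hC x).trans ?_⟩
    refine (mul_le_mul_of_nonneg_right (le_max_right 1 C) (gaussDeriv_zero_pos _).le).trans ?_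
    exact mul_le_of_le_one_right (by positivity) (gaussDeriv_zero_le_one _)
  refine ⟨2 * √C, by positivity, fun {v} hv b {f} hf {P} hP => ?_⟩
  set g : (ι → ℝ) → ℝ := fun y => ∏ c, gaussDeriv 0 ((v c)⁻¹ * (y c - b c))
  have hlevel : ∀ r ∈ Set.Ioc (0 : ℝ) 1,
      ∫⁻ y in {y | r ≤ g y}, f y ≤ P * ENNReal.ofReal √(C / r) := fun r hr => by
    have hCr : 1 ≤ C / r := (one_le_div hr.1).2 (hr.2.trans hC1)
    set R : ℝ := √(C / r) ^ (n : ℝ)⁻¹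
    have hRn : R ^ n = √(C / r) := Real.rpow_inv_natCast_pow (Real.sqrt_nonneg _) hn
    have hR : 1 ≤ R := Real.one_le_rpow (Real.one_le_sqrt.2 hCr) (by positivity)
    rw [← hRn]
    refine (lintegral_mono_set <|
      setOf_le_prod_gaussDeriv_zero_subset_Icc hv b fun x hrx => ?_).trans (hP R hR)
    refine (pow_le_pow_iff_left₀ (abs_nonneg x) (by linarith) hn).1 ?_
    rw [hRn]
    refine Real.le_sqrt_of_sq_le ?_
    rw [← pow_mul, mul_comm n, le_div_iff₀ hr.1]
    exact (mul_le_mul_of_nonneg_left hrx (by positivity)).trans (hC x)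
  rw [lintegral_gaussMeasure]
  have hv' : 0 ≤ ∏ c, (v c)⁻¹ := Finset.prod_nonneg fun c _ => (inv_pos.2 (hv c)).le
  simp only [gaussProd_zero_eq, ENNReal.ofReal_mul hv', mul_left_comm (f _)]
  rw [lintegral_const_mul' _ _ ENNReal.ofReal_ne_top, mul_comm (2 * √C), ENNReal.ofReal_mul hv',
    mul_assoc]
  gcongr
  exact lintegral_mul_ofReal_le_of_superlevel hf
    (continuous_finsetProd _ fun c _ => by fun_prop).measurable
    (fun y => Finset.prod_nonneg fun _ _ => (gaussDeriv_zero_pos _).le)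
    (fun y => Finset.prod_le_one (fun _ _ => (gaussDeriv_zero_pos _).le)
      fun _ _ => gaussDeriv_zero_le_one _) hlevel

end LayerCake

section MaximalFunction

variable {m : ℕ}

theorem box_eq_Icc (a b : Fin m → ℝ) : box a b = Set.Icc a b := by
  ext x
  simp only [box, Set.mem_ofPred_eq, Set.mem_Icc, Pi.le_def, forall_and]

theorem WidthBound.prod_mul_max_one_le {w : Fin m → ℝ} {s D : ℝ} (hw : WidthBound w s D) {a t : ℝ}
    (ha : 0 ≤ a) (ht : 0 ≤ t) :
    ∏ k, a * t * max 1 (w k) ≤ a ^ m * D * ∏ k, t * w k := by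
  have hfactor (k : Fin m) : a * t * max 1 (w k) = a * (t * w k) * max 1 (w k)⁻¹ := by
    have hk := hw.pos k
    have : max 1 (w k) = w k * max 1 (w k)⁻¹ := by
      rw [mul_max_of_nonneg _ _ hk.le, mul_one, mul_inv_cancel₀ hk.ne', max_comm]
    rw [this]
    ring
  have htw : 0 ≤ ∏ k, t * w k := Finset.prod_nonneg fun k _ => mul_nonneg ht (hw.pos k).le
  calc ∏ k, a * t * max 1 (w k) = a ^ m * (∏ k, t * w k) * ∏ k, max 1 (w k)⁻¹ := by
        rw [Finset.prod_congr rfl fun k _ => hfactor k, Finset.prod_mul_distrib,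
          Finset.prod_mul_distrib, Finset.prod_const, Finset.card_univ, Fintype.card_fin]
    _ ≤ a ^ m * (∏ k, t * w k) * D := by
        gcongr
        exact hw.prod_le
    _ = a ^ m * D * ∏ k, t * w k := by ring

variable [NeZero m]

theorem rpow_two_zpow_pow {x : ℝ} (hx : 0 ≤ x) :
    (x ^ ((2 : ℝ) ^ ((1 : ℤ) - (m : ℤ)))) ^ 2 ^ (m - 1) = x := by
  have h : (2 : ℝ) ^ ((1 : ℤ) - (m : ℤ)) * ((2 ^ (m - 1) : ℕ) : ℝ) = 1 := by
    have hm := NeZero.pos m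
    rw [Nat.cast_pow, Nat.cast_two, ← zpow_natCast, ← zpow_add₀ two_ne_zero,
      show (1 : ℤ) - m + ((m - 1 : ℕ) : ℤ) = 0 by omega, zpow_zero]
  rw [← Real.rpow_natCast, ← Real.rpow_mul hx, h, Real.rpow_one]

theorem ofReal_mul_lintegral_box_le {α : ℝ} {F : (Fin m → ℝ) → ℝ} (hF : Continuous F)
    {a b : Fin m → ℝ} (hab : ∀ i, a i < b i) {S : Set (Fin m → ℝ)} (hS : S ⊆ box a b)
    (hecc : 0 ≤ ecc a b) :
    ENNReal.ofReal (ecc a b ^ α * (∏ k, (b k - a k))⁻¹) *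
      ∫⁻ y in box a b, ‖F y‖ₑ ^ 2 ^ (m - 1) ≤ Mal α F S ^ 2 ^ (m - 1) := by
  have hV : (volume (box a b)).toReal = ∏ k, (b k - a k) := by
    rw [box_eq_Icc, Real.volume_Icc_pi_toReal fun i => (hab i).le]
  have hV0 : 0 ≤ (∏ k, (b k - a k))⁻¹ :=
    inv_nonneg.2 (Finset.prod_nonneg fun k _ => (sub_pos.2 (hab k)).le)
  have hlintegral : ∫⁻ y in box a b, ‖F y‖ₑ ^ 2 ^ (m - 1) =
      ENNReal.ofReal (∫ y in box a b, |F y| ^ 2 ^ (m - 1)) := by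
    have hint : IntegrableOn (fun y => |F y| ^ 2 ^ (m - 1)) (box a b) := by
      rw [box_eq_Icc]
      exact (hF.abs.pow _).continuousOn.integrableOn_compact isCompact_Icc
    rw [ofReal_integral_eq_lintegral_ofReal hint (.of_forall fun y => by positivity)]
    simp only [Real.enorm_eq_ofReal_abs, ENNReal.ofReal_pow (abs_nonneg _)]
  have hMal : ENNReal.ofReal ((ecc a b ^ α) ^ ((2 : ℝ) ^ ((1 : ℤ) - (m : ℤ))) *
      avg (box a b) F) ≤ Mal α F S :=
    le_iSup_of_le a (le_iSup_of_le b (le_iSup_of_le hab (le_iSup_of_le hS le_rfl)))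
  have hecc' : 0 ≤ ecc a b ^ α := Real.rpow_nonneg hecc α
  refine le_trans (le_of_eq ?_) (pow_le_pow_left' hMal (2 ^ (m - 1)))
  rw [avg, hV, ← Real.mul_rpow hecc' (by positivity), ← ENNReal.ofReal_pow (by positivity),
    rpow_two_zpow_pow (by positivity), hlintegral, ← ENNReal.ofReal_mul (by positivity), mul_assoc]

theorem div_le_ecc {b r : Fin m → ℝ} {lo hi : ℝ} (hlo : 0 < lo) (hr : ∀ k, lo ≤ r k)
    (hr' : ∀ k, r k ≤ hi) : lo / hi ≤ ecc (b - r) (b + r) := by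
  have hwidth : ∀ k, (b + r) k - (b - r) k = 2 * r k := fun k => by
    simp only [Pi.add_apply, Pi.sub_apply]; ring
  simp only [ecc, hwidth]
  have hinf : 2 * lo ≤ ⨅ k, 2 * r k := le_ciInf fun k => by linarith [hr k]
  have hsup : ⨆ k, 2 * r k ≤ 2 * hi := ciSup_le fun k => by linarith [hr' k]
  have hsup_pos : 0 < ⨆ k, 2 * r k := lt_of_lt_of_le (by linarith [hr 0] : 0 < 2 * r 0)
    (le_ciSup (f := fun k => 2 * r k) (Set.finite_range _).bddAbove 0)
  rw [← mul_div_mul_left lo hi two_ne_zero]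
  exact div_le_div₀ (le_trans (by positivity) hinf) hinf hsup_pos hsup

theorem setLIntegral_box_le {α : ℝ} (hα : 0 ≤ α) {F : (Fin m → ℝ) → ℝ} (hF : Continuous F)
    {b r : Fin m → ℝ} {lo hi : ℝ} (hlo : 0 < lo) (hr : ∀ k, lo ≤ r k) (hr' : ∀ k, r k ≤ hi)
    {S : Set (Fin m → ℝ)} (hS : S ⊆ Set.Icc (b - r) (b + r)) :
    ∫⁻ y in Set.Icc (b - r) (b + r), ‖F y‖ₑ ^ 2 ^ (m - 1) ≤
      ENNReal.ofReal ((∏ k, 2 * r k) * (hi / lo) ^ α) * Mal α F S ^ 2 ^ (m - 1) := by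
  have hr0 : ∀ k, 0 < r k := fun k => hlo.trans_le (hr k)
  have hhi : 0 < hi := (hr0 0).trans_le (hr' 0)
  have hecc : (lo / hi) ^ α ≤ ecc (b - r) (b + r) ^ α :=
    Real.rpow_le_rpow (by positivity) (div_le_ecc hlo hr hr') hα
  have hprod : ∏ k, ((b + r) k - (b - r) k) = ∏ k, 2 * r k :=
    Finset.prod_congr rfl fun k _ => by simp only [Pi.add_apply, Pi.sub_apply]; ring
  have hprod_pos : 0 < ∏ k, 2 * r k := Finset.prod_pos fun k _ => mul_pos two_pos (hr0 k)
  have hMal := ofReal_mul_lintegral_box_le (α := α) hF (a := b - r) (b := b + r)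
    (fun k => by simp only [Pi.add_apply, Pi.sub_apply]; linarith [hr0 k])
    (hS.trans (box_eq_Icc _ _).superset)
    (le_trans (by positivity) (div_le_ecc hlo hr hr'))
  rw [hprod, box_eq_Icc] at hMal
  calc ∫⁻ y in Set.Icc (b - r) (b + r), ‖F y‖ₑ ^ 2 ^ (m - 1)
      ≤ ENNReal.ofReal (((∏ k, 2 * r k) * (hi / lo) ^ α) *
          (ecc (b - r) (b + r) ^ α * (∏ k, 2 * r k)⁻¹)) *
          ∫⁻ y in Set.Icc (b - r) (b + r), ‖F y‖ₑ ^ 2 ^ (m - 1) := by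
        refine le_mul_of_one_le_left' (ENNReal.one_le_ofReal.2 ?_)
        calc 1 = ((∏ k, 2 * r k) * (hi / lo) ^ α) * ((lo / hi) ^ α * (∏ k, 2 * r k)⁻¹) := by
              rw [← inv_div hi lo, Real.inv_rpow (by positivity)]
              have : 0 < (hi / lo) ^ α := by positivity
              field_simp
          _ ≤ _ := by gcongr
    _ ≤ _ := by
        rw [ENNReal.ofReal_mul (by positivity), mul_assoc]
        gcongr

/-- The box of half-widths `C * R * t * max 1 (w k)` contains both the set `S` and the box of
half-widths `R * t * w k`, and its eccentricity is at least `1 / s`. -/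
theorem setLIntegral_Icc_smul_le {α : ℝ} (hα : 0 ≤ α) {C : ℝ} (hC : 1 ≤ C)
    {F : (Fin m → ℝ) → ℝ} (hF : Continuous F) {S : Set (Fin m → ℝ)} {b : Fin m → ℝ} {t : ℝ}
    (ht : 0 < t) (hS : ∀ y ∈ S, ∀ k, |y k - b k| ≤ C * t) {w : Fin m → ℝ} {s D : ℝ}
    (hw : WidthBound w s D) {R : ℝ} (hR : 1 ≤ R) :
    ∫⁻ y in Set.Icc (b - R • t • w) (b + R • t • w), ‖F y‖ₑ ^ 2 ^ (m - 1) ≤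
      ENNReal.ofReal ((2 * C) ^ m * (D * s ^ α) * ∏ k, t * w k) * Mal α F S ^ 2 ^ (m - 1) *
        ENNReal.ofReal (R ^ m) := by
  have hs : 0 ≤ s := zero_le_one.trans hw.one_le
  have hD : 0 ≤ D := zero_le_one.trans hw.one_le_prod
  have htw : 0 < ∏ k, t * w k := Finset.prod_pos fun k _ => mul_pos ht (hw.pos k)
  set r : Fin m → ℝ := fun k => C * R * t * max 1 (w k)
  have hCt : C * t ≤ C * R * t := by
    gcongr
    exact le_mul_of_one_le_right (by positivity) hR
  have hr : ∀ k, C * R * t ≤ r k := fun k =>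
    le_mul_of_one_le_right (by positivity) (le_max_left _ _)
  have hr' : ∀ k, r k ≤ C * R * t * s := fun k =>
    mul_le_mul_of_nonneg_left (max_le hw.one_le (hw.le k)) (by positivity)
  have hRw : R • t • w ≤ r := fun k => by
    calc R * (t * w k) ≤ C * (R * (t * max 1 (w k))) := by
          have := (hw.pos k).le
          exact (le_mul_of_one_le_left (by positivity) hC).trans (by gcongr; exact le_max_right _ _)
      _ = r k := by ring
  have hSr : S ⊆ Set.Icc (b - r) (b + r) := fun y hy => by
    have hyk := fun k => abs_le.1 ((hS y hy k).trans (hCt.trans (hr k)))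
    exact ⟨fun k => by simpa using by linarith [(hyk k).1],
      fun k => by simpa using by linarith [(hyk k).2]⟩
  have hvol : (∏ k, 2 * r k) * s ^ α ≤ (2 * C) ^ m * (D * s ^ α) * (∏ k, t * w k) * R ^ m := by
    have hprod := hw.prod_mul_max_one_le (a := 2 * C * R) (by positivity) ht.le
    calc (∏ k, 2 * r k) * s ^ α = (∏ k, 2 * C * R * t * max 1 (w k)) * s ^ α := by
          simp only [r, ← mul_assoc]
      _ ≤ (2 * C * R) ^ m * D * (∏ k, t * w k) * s ^ α := by gcongr
      _ = _ := by rw [mul_pow]; ring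
  calc _ ≤ ∫⁻ y in Set.Icc (b - r) (b + r), ‖F y‖ₑ ^ 2 ^ (m - 1) :=
        lintegral_mono_set (Set.Icc_subset_Icc (sub_le_sub_left hRw b) (add_le_add_right hRw b))
    _ ≤ _ := setLIntegral_box_le hα hF (by positivity) hr hr' hSr
    _ ≤ ENNReal.ofReal ((2 * C) ^ m * (D * s ^ α) * (∏ k, t * w k) * R ^ m) *
          Mal α F S ^ 2 ^ (m - 1) := by
        rw [mul_div_cancel_left₀ s (by positivity : C * R * t ≠ 0)]
        gcongr
    _ = _ := by rw [ENNReal.ofReal_mul (by positivity), mul_right_comm]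

theorem exists_lintegral_gaussMeasure_le_Mal {α : ℝ} (hα : 0 ≤ α) {C : ℝ} (hC : 1 ≤ C) :
    ∃ K, ∀ {F : (Fin m → ℝ) → ℝ} (_ : Continuous F) {S : Set (Fin m → ℝ)}
      {b : Fin m → ℝ} {t : ℝ} (_ : 0 < t) (_ : ∀ y ∈ S, ∀ k, |y k - b k| ≤ C * t)
      {w : Fin m → ℝ} {s D : ℝ} (_ : WidthBound w s D),
      ∫⁻ y, ‖F y‖ₑ ^ 2 ^ (m - 1) ∂gaussMeasure (t • w) b ≤
        ENNReal.ofReal (K * (D * s ^ α)) * Mal α F S ^ 2 ^ (m - 1) := by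
  obtain ⟨K, hK, hgauss⟩ := exists_lintegral_gaussMeasure_le (ι := Fin m) (NeZero.ne m)
  refine ⟨K * (2 * C) ^ m, fun {F} hF {S b t} ht hS {w s D} hw => ?_⟩
  have : 0 ≤ s := zero_le_one.trans hw.one_le
  have : 0 ≤ D := zero_le_one.trans hw.one_le_prod
  have htw : 0 < ∏ k, t * w k := Finset.prod_pos fun k _ => mul_pos ht (hw.pos k)
  refine (hgauss (fun k => mul_pos ht (hw.pos k)) b (hF.enorm.measurable.pow_const _)
    fun R hR => setLIntegral_Icc_smul_le hα hC hF ht hS hw hR).trans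
    (le_of_eq ?_)
  rw [← mul_assoc, ← ENNReal.ofReal_mul
    (mul_nonneg hK (Finset.prod_nonneg fun k _ => (inv_pos.2 (mul_pos ht (hw.pos k))).le))]
  congr 2
  change K * (∏ k, (t * w k)⁻¹) * _ = _
  rw [Finset.prod_inv_distrib]
  field_simp

end MaximalFunction

section Tree

variable {m : ℕ} {T : Set (ℤ × (Fin m → ℤ))} {Q Qt : ℤ × (Fin m → ℤ)}

theorem dC_eq_pi (Q : ℤ × (Fin m → ℤ)) : dC Q = Set.univ.pi fun k =>
    Set.Ico ((2 : ℝ) ^ Q.1 * Q.2 k) ((2 : ℝ) ^ Q.1 * (Q.2 k + 1)) := by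
  ext x
  simp only [dC, Set.mem_ofPred_eq, Set.mem_pi, Set.mem_univ, true_imp_iff, Set.mem_Ico]

theorem measurableSet_dC (Q : ℤ × (Fin m → ℤ)) : MeasurableSet (dC Q) := by
  rw [dC_eq_pi]
  exact MeasurableSet.univ_pi fun _ => measurableSet_Ico

theorem volume_dC (Q : ℤ × (Fin m → ℤ)) : volume (dC Q) = ENNReal.ofReal (((2 : ℝ) ^ Q.1) ^ m) := by
  have hside : ∀ k, (2 : ℝ) ^ Q.1 * ((Q.2 k : ℝ) + 1) - (2 : ℝ) ^ Q.1 * (Q.2 k : ℝ) = 2 ^ Q.1 :=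
    fun k => by ring
  rw [dC_eq_pi, Real.volume_pi_Ico, ENNReal.ofReal_pow (by positivity)]
  simp only [hside, Finset.prod_const, Finset.card_univ, Fintype.card_fin]

theorem side_le_of_dC_subset [NeZero m] (h : dC Q ⊆ dC Qt) : (2 : ℝ) ^ Q.1 ≤ 2 ^ Qt.1 := by
  have hvol := measure_mono (μ := volume) h
  rw [volume_dC, volume_dC, ENNReal.ofReal_le_ofReal_iff (by positivity)] at hvol
  exact (pow_le_pow_iff_left₀ (by positivity) (by positivity) (NeZero.ne m)).1 hvol

theorem corner_mem_dC (Q : ℤ × (Fin m → ℤ)) : (fun k => (2 : ℝ) ^ Q.1 * Q.2 k) ∈ dC Q := fun k =>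
  ⟨le_rfl, mul_lt_mul_of_pos_left (lt_add_one _) (by positivity)⟩

theorem dist_le_of_mem_dC {p q : Fin m → ℝ} (hp : p ∈ dC Q) (hq : q ∈ dC Q) :
    dist p q ≤ 2 ^ Q.1 := by
  refine (dist_pi_le_iff (by positivity)).2 fun k => ?_
  rw [Real.dist_eq, abs_le]
  constructor <;> linarith [(hp k).1, (hp k).2, (hq k).1, (hq k).2]

/-- The distance of a point from a collection of dyadic cubes, where reaching a cube costs in
addition `U` times its side length. -/
def treeDist (T : Set (ℤ × (Fin m → ℤ))) (U : ℝ) (p : Fin m → ℝ) : ℝ :=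
  ⨅ Q : T, (U * (2 : ℝ) ^ Q.1.1 + Metric.infDist p (dC Q.1))

/-- The lower boundary, cut off at height `τ`, of the sawtooth region attached to a tree. -/
def stoppingHeight (T : Set (ℤ × (Fin m → ℤ))) (U τ : ℝ) (p : Fin m → ℝ) : ℝ :=
  max τ (treeDist T U p / 4)

theorem treeDist_le {U : ℝ} (hU : 0 ≤ U) (hQ : Q ∈ T) {p₀ : Fin m → ℝ} (hp₀ : p₀ ∈ dC Q)
    (p : Fin m → ℝ) : treeDist T U p ≤ U * 2 ^ Q.1 + dist p p₀ := by
  have hbdd : BddBelow (Set.range fun Q : T => U * (2 : ℝ) ^ Q.1.1 + Metric.infDist p (dC Q.1)) :=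
    ⟨0, by rintro _ ⟨Q, rfl⟩; have := Metric.infDist_nonneg (x := p) (s := dC Q.1); positivity⟩
  exact (ciInf_le hbdd ⟨Q, hQ⟩).trans (by gcongr; exact Metric.infDist_le_dist_of_mem hp₀)

theorem exists_of_treeDist_lt (hT : T.Nonempty) {U r : ℝ} {p : Fin m → ℝ}
    (h : treeDist T U p < r) : ∃ Q ∈ T, ∃ p₀ ∈ dC Q, U * 2 ^ Q.1 + dist p p₀ < r := by
  have := hT.to_subtype
  obtain ⟨⟨Q, hQ⟩, hQr⟩ := exists_lt_of_ciInf_lt h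
  obtain ⟨p₀, hp₀, hpr⟩ :=
    (Metric.infDist_lt_iff ⟨_, corner_mem_dC Q⟩).1 (lt_sub_iff_add_lt'.2 hQr)
  exact ⟨Q, hQ, p₀, hp₀, lt_sub_iff_add_lt'.1 hpr⟩

theorem lipschitzWith_treeDist (hT : T.Nonempty) {U : ℝ} (hU : 0 ≤ U) :
    LipschitzWith 1 (treeDist T U) :=
  LipschitzWith.of_le_add fun p q => le_of_forall_pos_lt_add fun ε hε => by
    obtain ⟨Q, hQ, p₀, hp₀, h⟩ := exists_of_treeDist_lt hT (lt_add_of_pos_right (treeDist T U q) hε)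
    linarith [treeDist_le hU hQ hp₀ p, dist_triangle p q p₀]

theorem lipschitzWith_stoppingHeight (hT : T.Nonempty) {U : ℝ} (hU : 0 ≤ U) (τ : ℝ) :
    LipschitzWith 1 (stoppingHeight T U τ) :=
  LipschitzWith.const_max (LipschitzWith.of_le_add fun p q => by
    have hle := (lipschitzWith_treeDist hT hU).le_add_mul p q
    rw [NNReal.coe_one, one_mul] at hle
    linarith [dist_nonneg (x := p) (y := q)]) τ

theorem volume_stoppingHeight_lt_le (hT : ConvexTree T Qt) {U : ℝ} (hU : 1 ≤ U) (τ : ℝ) :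
    volume {p | stoppingHeight T U τ p < 2 * (U * 2 ^ Qt.1)} ≤
      ENNReal.ofReal ((18 * U) ^ m) * volume (dC Qt) := by
  have hsub : {p | stoppingHeight T U τ p < 2 * (U * 2 ^ Qt.1)} ⊆
      Metric.closedBall (fun k => (2 : ℝ) ^ Qt.1 * Qt.2 k) (9 * U * 2 ^ Qt.1) := fun p hp => by
    have hlt : treeDist T U p < 8 * (U * 2 ^ Qt.1) := by
      linarith [(le_max_right τ (treeDist T U p / 4)).trans_lt hp]
    obtain ⟨Q, hQ, p₀, hp₀, h⟩ := exists_of_treeDist_lt ⟨Qt, hT.1⟩ hlt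
    have hUQ : 0 < U * (2 : ℝ) ^ Q.1 := by positivity
    have hUQt : (2 : ℝ) ^ Qt.1 ≤ U * 2 ^ Qt.1 := le_mul_of_one_le_left (by positivity) hU
    have hcorner := dist_le_of_mem_dC (hT.2.1 Q hQ hp₀) (corner_mem_dC Qt)
    rw [Metric.mem_closedBall]
    linarith [dist_triangle p p₀ fun k => (2 : ℝ) ^ Qt.1 * Qt.2 k]
  refine (measure_mono hsub).trans (le_of_eq ?_)
  rw [Real.volume_pi_closedBall _ (by positivity), volume_dC, ← ENNReal.ofReal_mul (by positivity),
    Fintype.card_fin, ← mul_pow]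
  congr 2
  ring

theorem isStoppingHeight_stoppingHeight (hT : ConvexTree T Qt) {U τ : ℝ} (hU : 1 ≤ U)
    (hτ : 0 < τ) : IsStoppingHeight (U * 2 ^ Qt.1) (stoppingHeight T U τ) where
  lipschitzWith := lipschitzWith_stoppingHeight ⟨Qt, hT.1⟩ (by linarith) τ
  exists_pos_le := ⟨τ, hτ, fun _ => le_max_left _ _⟩
  volume_lt_top := (volume_stoppingHeight_lt_le hT hU τ).trans_lt
    (ENNReal.mul_lt_top ENNReal.ofReal_lt_top (by rw [volume_dC]; exact ENNReal.ofReal_lt_top))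

theorem baseVolume_stoppingHeight_le (hT : ConvexTree T Qt) {U : ℝ} (hU : 1 ≤ U) (τ : ℝ) :
    ENNReal.ofReal (baseVolume (stoppingHeight T U τ) (U * 2 ^ Qt.1)) ≤
      ENNReal.ofReal ((18 * U) ^ m) * volume (dC Qt) :=
  ENNReal.ofReal_toReal_le.trans (volume_stoppingHeight_lt_le hT hU τ)

section Averages

variable [NeZero m] {α : ℝ} {B : ℝ} {J : Matrix (Idx m) (Fin m) ℝ}

theorem exists_lintegral_gaussMeasure_le_MalTree (hα : 0 ≤ α) (hB : 1 ≤ B) {C : ℝ} (hC : 1 ≤ C) :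
    ∃ K, ∀ {J : Matrix (Idx m) (Fin m) ℝ} (_ : IsBoundedBy B J)
      {T : Set (ℤ × (Fin m → ℤ))} {Q : ℤ × (Fin m → ℤ)} (_ : Q ∈ T) {F : (Fin m → ℝ) → ℝ}
      (_ : Continuous F) (j : Corner m) {p : Fin m → ℝ} {t : ℝ} (_ : 0 < t)
      (_ : ∀ q ∈ dC Q, dist q p ≤ C * t) {w : Fin m → ℝ} {s D : ℝ} (_ : WidthBound w s D),
      ∫⁻ y, ‖F y‖ₑ ^ 2 ^ (m - 1) ∂gaussMeasure (t • w) (proj j (J *ᵥ p)) ≤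
        ENNReal.ofReal (K * (D * s ^ α)) * MalTree α F (Amat J j) T ^ 2 ^ (m - 1) := by
  obtain ⟨K, hMal⟩ := exists_lintegral_gaussMeasure_le_Mal (m := m) hα
    (one_le_mul_of_one_le_of_one_le hB hC)
  refine ⟨K, fun {J} hJ {T Q} hQ {F} hF j {p t} ht hp {w s D} hw => ?_⟩
  refine (hMal hF ht (S := (Amat J j).mulVec '' dC Q) ?_ hw).trans ?_
  · rintro _ ⟨q, hq, rfl⟩ k
    calc |(J *ᵥ q) (sel j k) - (J *ᵥ p) (sel j k)| = ‖(J *ᵥ (q - p)) (sel j k)‖ := by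
          rw [mulVec_sub, Pi.sub_apply, Real.norm_eq_abs]
      _ ≤ B * ‖q - p‖ := (norm_le_pi_norm _ _).trans (hJ.norm_mulVec_le _)
      _ ≤ B * C * t := by
          rw [mul_assoc, ← dist_eq_norm]
          gcongr
          exact hp q hq
  · gcongr
    exact le_iSup₂_of_le Q hQ le_rfl

theorem exists_admissible_stoppingHeight (hα : 0 ≤ α) (hB : 1 ≤ B) :
    ∃ K, ∀ {J : Matrix (Idx m) (Fin m) ℝ} (_ : IsBoundedBy B J)
      {T : Set (ℤ × (Fin m → ℤ))} (_ : T.Nonempty) {F : Corner m → (Fin m → ℝ) → ℝ}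
      (_ : IsTestTuple F)
      (_ : ∀ j, ENNReal.ofReal K * MalTree α (F j) (Amat J j) T ^ 2 ^ (m - 1) ≤ 1)
      {U : ℝ} (_ : 1 ≤ U) (τ : ℝ), Admissible α (stoppingHeight T U τ) J F := by
  obtain ⟨K, hMal⟩ := exists_lintegral_gaussMeasure_le_MalTree (m := m) hα hB (C := 18)
    (by norm_num)
  refine ⟨K, fun {J} hJ {T} hT {F} hF hFK {U} hU τ => ⟨hF, fun j p w t s D ht hp hw => ?_⟩⟩
  obtain ⟨Q, hQ, p₀, hp₀, h⟩ := exists_of_treeDist_lt (U := U) (p := p) (r := 9 * t) hT (by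
    linarith [(le_max_right τ (treeDist T U p / 4)).trans hp])
  have hside : (2 : ℝ) ^ Q.1 ≤ U * 2 ^ Q.1 := le_mul_of_one_le_left (by positivity) hU
  have hdist : ∀ q ∈ dC Q, dist q p ≤ 18 * t := fun q hq => by
    linarith [dist_le_of_mem_dC hq hp₀, dist_triangle_right q p p₀,
      dist_nonneg (x := p) (y := p₀), (by positivity : (0 : ℝ) < 2 ^ Q.1)]
  have hD : 0 ≤ D * s ^ α := mul_nonneg (zero_le_one.trans hw.one_le_prod)
    (Real.rpow_nonneg (zero_le_one.trans hw.one_le) _)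
  refine (hMal hJ hQ (hF j).1 j ht hdist hw).trans ?_
  rw [mul_comm K, ENNReal.ofReal_mul hD, mul_assoc]
  exact mul_le_of_le_one_right' (hFK j)

theorem IsBoundedBy.eq_zero_of_MalTree_eq_zero (hJ : IsBoundedBy B J) (hα : 0 ≤ α)
    (hT : T.Nonempty) {F : (Fin m → ℝ) → ℝ} (hF : Continuous F) {j : Corner m}
    (h : MalTree α F (Amat J j) T = 0) : F = 0 := by
  obtain ⟨K, hMal⟩ := exists_lintegral_gaussMeasure_le_MalTree (m := m) hα hJ.one_le le_rfl
  obtain ⟨Q, hQ⟩ := hT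
  have hw : WidthBound (1 : Fin m → ℝ) 1 1 := ⟨le_rfl, by simp, by simp, by simp⟩
  have hside : (0 : ℝ) < 2 ^ Q.1 := by positivity
  have hle := hMal hJ hQ hF j (p := fun k => (2 : ℝ) ^ Q.1 * Q.2 k) hside
    (fun q hq => (dist_le_of_mem_dC hq (corner_mem_dC Q)).trans_eq (one_mul _).symm) hw
  rw [h, zero_pow (by positivity), mul_zero, lintegral_gaussMeasure] at hle
  have hae := (lintegral_eq_zero_iff ((hF.enorm.measurable.pow_const _).mul
    (continuous_gaussProd _ _ _).measurable.ennreal_ofReal)).1 (nonpos_iff_eq_zero.1 hle)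
  refine (Continuous.ae_eq_iff_eq volume hF continuous_zero).1 ?_
  filter_upwards [hae] with y hy
  have hpos := gaussProd_zero_pos (v := (2 : ℝ) ^ Q.1 • (1 : Fin m → ℝ)) (by simpa using hside)
    (proj j (J *ᵥ fun k => (2 : ℝ) ^ Q.1 * Q.2 k)) y
  simpa [hpos.not_ge] using hy

end Averages

end Tree

theorem fderiv_prod_gaussDeriv {ι : Type*} [Fintype ι] [DecidableEq ι] (γ : ι → ℕ) (y : ι → ℝ)
    (d : ι) : fderiv ℝ (fun y : ι → ℝ => ∏ c, gaussDeriv (γ c) (y c)) y (Pi.single d 1) =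
      ∏ c, gaussDeriv ((γ + Pi.single d 1 : ι → ℕ) c) (y c) := by
  have hderiv (c : ι) : HasFDerivAt (fun y : ι → ℝ => gaussDeriv (γ c) (y c))
      (gaussDeriv (γ c + 1) (y c) • (ContinuousLinearMap.proj c : (ι → ℝ) →L[ℝ] ℝ)) y :=
    (hasDerivAt_gaussDeriv (γ c) (y c)).comp_hasFDerivAt y
      (ContinuousLinearMap.proj c : (ι → ℝ) →L[ℝ] ℝ).hasFDerivAt
  rw [(HasFDerivAt.finsetProd fun c _ => hderiv c).fderiv, _root_.sum_apply,
    Finset.sum_eq_single_of_mem d (Finset.mem_univ d) fun c _ hc => by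
      simp [Pi.single_eq_of_ne hc],
    ← Finset.prod_erase_mul _ _ (Finset.mem_univ d)]
  simp only [_root_.smul_apply, ContinuousLinearMap.proj_apply, Pi.single_eq_same, Pi.add_apply,
    smul_eq_mul, mul_one]
  refine congrArg (· * _) (Finset.prod_congr rfl fun c hc => ?_)
  rw [Pi.single_eq_of_ne (Finset.ne_of_mem_erase hc), add_zero]

section Shifts

variable {m : ℕ}

theorem ddg_eq_prod_gaussDeriv (i : Fin m) (y : Idx m → ℝ) :
    ddg i y = ∏ c, gaussDeriv (pairOrder i 1 c) (y c) := by
  have hgss : (gss : (Idx m → ℝ) → ℝ) = fun y => ∏ c, gaussDeriv ((0 : Idx m → ℕ) c) (y c) := by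
    funext y
    simp only [gss, Pi.zero_apply, gaussDeriv_zero, ← Real.exp_sum, Finset.mul_sum]
  rw [ddg, hgss]
  simp_rw [fderiv_prod_gaussDeriv]
  rw [zero_add, ← single_coord_add_single_coord]
  rfl

theorem dil_ddg_sub (i : Fin m) (t : ℝ) (x b : Idx m → ℝ) :
    dil t (ddg i) (x - b) = gaussProd (pairOrder i 1) (fun _ => t) b x := by
  simp only [dil, gaussProd, gaussKernel, ddg_eq_prod_gaussDeriv, Finset.prod_mul_distrib,
    Finset.prod_const, inv_pow, Pi.smul_apply, Pi.sub_apply, smul_eq_mul]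
  congr 3
  simp [two_mul]

variable {F : Corner m → (Fin m → ℝ) → ℝ}

/-- Unlike `IsTestTuple.abs_integral_cornerProd_mul_prod_le`, this allows a different majorant for
each of the two faces. It follows by a second application of that inequality, to each face. -/
theorem IsTestTuple.abs_integral_cornerProd_mul_prod_le_two_mul (hF : IsTestTuple F) (k : Fin m)
    {ψ : Idx m → ℝ → ℝ} {ψ' : Fin 2 → Idx m → ℝ → ℝ} (hψ : ∀ c, Continuous (ψ c))
    (hψ' : ∀ ε c, Continuous (ψ' ε c)) (hle : ∀ ε c, pos c ≠ k → ∀ r, |ψ c r| ≤ ψ' ε c r) :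
    |∫ x, cornerProd F x * ∏ c, ψ c (x c)| ≤ 2 * ∑ ε, ∫ x, cornerProd (SBL.faceTuple F k ε) x *
      ∏ c, replaceAt k (ψ (coord k ε)) (ψ' ε) c (x c) := by
  refine (hF.abs_integral_cornerProd_mul_prod_le k hψ (ψ' := fun c r => |ψ c r|)
    (fun c => (hψ c).abs) fun c _ r => le_rfl).trans ?_
  rw [Finset.mul_sum]
  refine Finset.sum_le_sum fun ε _ => ((le_abs_self _).trans
    ((hF.faceTuple k ε).abs_integral_cornerProd_mul_prod_le k (fun c => ?_) (hψ' ε)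
      fun c hc r => ?_)).trans_eq ?_
  · unfold replaceAt
    split_ifs
    exacts [hψ _, (hψ c).abs]
  · simpa [replaceAt, hc] using hle ε c hc r
  · simp only [faceTuple_faceTuple_self, replaceAt, pos_coord, if_true, Fin.sum_univ_two, two_mul]

theorem card_filter_pos_ne (i : Fin m) :
    (Finset.univ.filter fun c => pos c ≠ i).card = 2 * m - 2 := by
  have hcard : (Finset.univ.filter fun c => pos c = i).card = 2 := by
    rw [Finset.card_filter, sum_eq_sum_coord]
    simp
  have := Finset.card_filter_add_card_filter_not (s := (Finset.univ : Finset (Idx m))) (pos · = i)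
  rw [hcard, Finset.card_univ, Fintype.card_sum, Fintype.card_fin] at this
  simp only [ne_eq]
  omega

theorem widthBound_update_one (i : Fin m) {U : ℝ} (hU : 1 ≤ U) :
    WidthBound (Function.update 1 i U⁻¹) 1 U where
  one_le := le_rfl
  pos k := by
    rcases eq_or_ne k i with rfl | hk
    · simpa using one_pos.trans_le hU
    · simp [hk]
  le k := by
    rcases eq_or_ne k i with rfl | hk
    · simpa using inv_le_one_of_one_le₀ hU
    · simp [hk]
  prod_le := by
    rw [Finset.prod_eq_single i (fun k _ hk => by simp [hk]) (by simp)]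
    simp [hU]

/-- The translation by `t u` is absorbed at the position `i` by moving the base point, and at the
other positions by widening the Gaussians by the factor `U`. -/
theorem IsTestTuple.abs_gaussPairing_translate_le (hF : IsTestTuple F)
    (J : Matrix (Idx m) (Fin m) ℝ) (i : Fin m) (a : ℕ) (u : Idx m → ℝ) {U : ℝ} (hU : 2 ≤ U)
    {q : Fin 2 → Fin m → ℝ} (hq : ∀ ε, (J *ᵥ q ε) (coord i ε) = u (coord i ε))
    (hqU : ∀ ε c, |u c - (J *ᵥ q ε) c| ≤ U) (p : Fin m → ℝ) {t : ℝ} (ht : 0 < t) :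
    |gaussPairing (cornerProd F) (pairOrder i a) (fun _ => t) (J *ᵥ p - t • u)| ≤
      2 * (Real.exp (4 * Real.pi) * U) ^ (2 * m - 2) *
        ∑ ε, scalePairing (faceMatrix J i ε) (SBL.faceTuple F i ε) (pairOrder i a)
          (Function.update 1 i U⁻¹) (p - t • q ε) (U * t) := by
  have hcenter (ε : Fin 2) (c : Idx m) :
      (J *ᵥ (p - t • q ε)) c = (J *ᵥ p) c - t * (J *ᵥ q ε) c := by
    rw [mulVec_sub, mulVec_smul]; rfl
  refine (hF.abs_integral_cornerProd_mul_prod_le_two_mul i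
    (ψ := fun c r => gaussKernel (pairOrder i a c) t (r - (J *ᵥ p - t • u) c))
    (ψ' := fun ε c r => Real.exp (4 * Real.pi) * U *
      gaussKernel 0 (U * t) (r - (J *ᵥ (p - t • q ε)) c))
    (fun c => by fun_prop) (fun ε c => by fun_prop) fun ε c hc r => ?_).trans_eq ?_
  · rw [pairOrder, if_neg hc, abs_of_pos (gaussKernel_zero_pos ht _)]
    convert gaussKernel_zero_shift_le ht hU (hqU ε c) (r - (J *ᵥ (p - t • q ε)) c) using 2
    rw [hcenter, Pi.sub_apply, Pi.smul_apply, smul_eq_mul]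
    ring
  rw [mul_assoc, Finset.mul_sum _ _ (_ ^ _)]
  refine congrArg (2 * ·) (Finset.sum_congr rfl fun ε _ => ?_)
  rw [scalePairing, gaussPairing, ← integral_const_mul]
  refine integral_congr_ae (.of_forall fun x => ?_)
  simp only [gaussProd]
  rw [mul_left_comm, ← card_filter_pos_ne i, ← Finset.prod_const, Finset.prod_filter,
    ← Finset.prod_mul_distrib]
  refine congrArg (_ * ·) (Finset.prod_congr rfl fun c _ => ?_)
  simp only [replaceAt, faceMatrix_mulVec, Pi.smul_apply, Function.comp_apply, smul_eq_mul]
  by_cases hc : pos c = i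
  · have hU0 : U ≠ 0 := by linarith
    simp only [hc, pairOrder, pos_coord, hcenter, hq, ne_eq, not_true_eq_false, if_false, if_true,
      Function.update_self, Pi.sub_apply, Pi.smul_apply, smul_eq_mul, one_mul]
    rw [mul_right_comm, mul_inv_cancel₀ hU0, one_mul]
  · simp [hc, pairOrder]

end Shifts

section Shear

variable {E : Type*} [NormedAddCommGroup E] [NormedSpace ℝ E] [MeasurableSpace E] [BorelSpace E]
  [SecondCountableTopology E] (μ : Measure E) [SFinite μ] [μ.IsAddRightInvariant]

theorem lintegral_shear {U : ℝ} (hU : 0 < U) (q : E) {f : E × ℝ → ℝ≥0∞} (hf : Measurable f) :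
    ∫⁻ z, ENNReal.ofReal U * f (z.1 - z.2 • q, U * z.2) ∂μ.prod volume =
      ∫⁻ z, f z ∂μ.prod volume := by
  have hshear : Measurable fun z : E × ℝ => f (z.1 - z.2 • q, U * z.2) := hf.comp (by fun_prop)
  have hinner (t : ℝ) : ∫⁻ p, f (p - t • q, U * t) ∂μ = ∫⁻ p, f (p, U * t) ∂μ :=
    lintegral_sub_right_eq_self (fun p => f (p, U * t)) (t • q)
  rw [lintegral_const_mul _ hshear, lintegral_prod_symm _ hshear.aemeasurable,
    lintegral_prod_symm _ hf.aemeasurable]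
  simp only [hinner]
  conv_rhs => rw [← Real.smul_map_volume_mul_left hU.ne', lintegral_smul_measure,
    lintegral_map hf.lintegral_prod_left' (by fun_prop)]
  rw [abs_of_pos hU, smul_eq_mul]

theorem setLIntegral_shear_le {U : ℝ} (hU : 0 < U) (q : E) {A S : Set (E × ℝ)}
    (hS : MeasurableSet S) (hAS : Set.MapsTo (fun z => (z.1 - z.2 • q, U * z.2)) A S)
    {f : E × ℝ → ℝ≥0∞} (hf : Measurable f) :
    ∫⁻ z in A, ENNReal.ofReal U * f (z.1 - z.2 • q, U * z.2) ∂μ.prod volume ≤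
      ∫⁻ z in S, f z ∂μ.prod volume := by
  rw [← lintegral_indicator hS f, ← lintegral_shear μ hU q (hf.indicator hS)]
  have hpre : MeasurableSet ((fun z : E × ℝ => (z.1 - z.2 • q, U * z.2)) ⁻¹' S) :=
    hS.preimage (by fun_prop)
  refine ((lintegral_mono_set hAS).trans (setLIntegral_mono' hpre fun z hz => ?_)).trans
    (setLIntegral_le_lintegral _ _)
  rw [Set.indicator_of_mem (show (z.1 - z.2 • q, U * z.2) ∈ S from hz)]

end Shear

theorem SymmetricDatum.lintegral_form {m : ℕ} [NeZero m] {α Γ : ℝ} {S : Finset (Fin m)}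
    (X : SymmetricDatum α Γ S) {k : Fin m} (hk : k ∈ S) (a : ℕ) :
    ∫⁻ z in sawtooth X.ρ X.ℓ,
        ENNReal.ofReal (z.2⁻¹ * scalePairing X.J X.F (pairOrder k a) X.w z.1 z.2) =
      ENNReal.ofReal (X.form (pairOrder k a)) :=
  (ofReal_integral_eq_lintegral_ofReal
    (X.admissible.integrableOn_mul_scalePairing X.isStoppingHeight _ X.widthBound
      (k := fun t => t⁻¹) (continuousOn_inv₀.mono fun _ ht => ht.ne'))
    ((ae_restrict_iff' X.isStoppingHeight.measurableSet_sawtooth).2 <| .of_forall fun _ hz =>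
      X.inv_mul_scalePairing_pairOrder_nonneg hk a hz)).symm

section TreeForm

variable {m : ℕ} {T : Set (ℤ × (Fin m → ℤ))} {Qt : ℤ × (Fin m → ℤ)}

theorem sawtooth_stoppingHeight_zero (T : Set (ℤ × (Fin m → ℤ))) (U ℓ : ℝ) :
    sawtooth (stoppingHeight T U 0) ℓ = ⋃ n : ℕ, sawtooth (stoppingHeight T U (1 / (n + 1))) ℓ := by
  ext z
  simp only [sawtooth, stoppingHeight, Set.mem_ofPred_eq, Set.mem_Ioo, Set.mem_iUnion, max_lt_iff]
  constructor
  · rintro ⟨⟨h0, hdist⟩, hℓ⟩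
    obtain ⟨n, hn⟩ := exists_nat_one_div_lt h0
    exact ⟨n, ⟨hn, hdist⟩, hℓ⟩
  · rintro ⟨n, ⟨hn, hdist⟩, hℓ⟩
    exact ⟨⟨lt_trans (by positivity) hn, hdist⟩, hℓ⟩

theorem monotone_sawtooth_stoppingHeight (T : Set (ℤ × (Fin m → ℤ))) (U ℓ : ℝ) :
    Monotone fun n : ℕ => sawtooth (stoppingHeight T U (1 / ((n : ℝ) + 1))) ℓ := fun _ _ hab _ hz =>
  ⟨(max_le_max_right _ (Nat.one_div_le_one_div hab)).trans_lt hz.1, hz.2⟩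

theorem measurableSet_Omega (T : Set (ℤ × (Fin m → ℤ))) : MeasurableSet (Omega T) :=
  .biUnion T.to_countable fun Q _ => (measurableSet_dC Q).prod measurableSet_Ioo

theorem pos_of_mem_Omega {z : (Fin m → ℝ) × ℝ} (hz : z ∈ Omega T) : 0 < z.2 := by
  simp only [Omega, Set.mem_iUnion, Set.mem_prod, Set.mem_Ioo] at hz
  obtain ⟨Q, -, -, hlow, -⟩ := hz
  exact lt_trans (by positivity) hlow

/-- The density on the upper half space of the form of a face, with the position `i` narrowed by
the factor `U`. -/
def faceDensity (J : Matrix (Idx m) (Fin m) ℝ) (F : Corner m → (Fin m → ℝ) → ℝ) (i : Fin m) (U : ℝ)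
    (ε : Fin 2) (z : (Fin m → ℝ) × ℝ) : ℝ :=
  z.2⁻¹ * scalePairing (faceMatrix J i ε) (faceTuple F i ε) (pairOrder i 1)
    (Function.update 1 i U⁻¹) z.1 z.2

theorem IsTestTuple.measurable_faceDensity {F : Corner m → (Fin m → ℝ) → ℝ} (hF : IsTestTuple F)
    (J : Matrix (Idx m) (Fin m) ℝ) (i : Fin m) (U : ℝ) (ε : Fin 2) :
    Measurable (faceDensity J F i U ε) :=
  measurable_snd.inv.mul ((hF.faceTuple i ε).measurable_scalePairing _ _ _)

variable [NeZero m]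

theorem mapsTo_shear_Omega (hT : ConvexTree T Qt) {U : ℝ} (hU : 0 < U) {q : Fin m → ℝ}
    (hq : ‖q‖ ≤ U) : Set.MapsTo (fun z : (Fin m → ℝ) × ℝ => (z.1 - z.2 • q, U * z.2)) (Omega T)
      (sawtooth (stoppingHeight T U 0) (U * 2 ^ Qt.1)) := by
  intro z hz
  have ht := pos_of_mem_Omega hz
  simp only [Omega, Set.mem_iUnion, Set.mem_prod, Set.mem_Ioo] at hz
  obtain ⟨Q, hQ, hp, hlow, hhigh⟩ := hz
  refine ⟨max_lt (mul_pos hU ht) ?_,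
    mul_lt_mul_of_pos_left (hhigh.trans_le (side_le_of_dC_subset (hT.2.1 Q hQ))) hU⟩
  have hdist : dist (z.1 - z.2 • q) z.1 ≤ U * z.2 := by
    rw [dist_eq_norm, sub_sub_cancel_left, norm_neg, norm_smul, Real.norm_eq_abs, abs_of_pos ht,
      mul_comm]
    gcongr
  have hside : U * 2 ^ Q.1 < 2 * (U * z.2) := by nlinarith
  linarith [treeDist_le hU.le hQ hp (z.1 - z.2 • q), mul_pos hU ht]

/-- The symmetric datum with density `faceDensity J F i U ε`, localised to a tree. -/
def treeDatum {α Γ U τ : ℝ} {J : Matrix (Idx m) (Fin m) ℝ} {F : Corner m → (Fin m → ℝ) → ℝ}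
    (hT : ConvexTree T Qt) (hU : 1 ≤ U) (hτ : 0 < τ)
    (hF : Admissible α (stoppingHeight T U τ) J F) (hJ : HasBoundedPreimages Γ J) (i : Fin m)
    (ε : Fin 2) : SymmetricDatum α Γ {i} where
  ℓ := U * 2 ^ Qt.1
  ρ := stoppingHeight T U τ
  J := faceMatrix J i ε
  F := faceTuple F i ε
  w := Function.update 1 i U⁻¹
  s := 1
  D := U
  isStoppingHeight := isStoppingHeight_stoppingHeight hT hU hτ
  admissible := hF.face i ε
  hasBoundedPreimages := hJ.faceMatrix i ε
  faceMatrix_eq k hk δ := by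
    rw [Finset.mem_singleton.1 hk, faceMatrix_faceMatrix_self]
  faceTuple_eq k hk δ := by
    rw [Finset.mem_singleton.1 hk, faceTuple_faceTuple_self]
  widthBound := widthBound_update_one i hU
  width_eq k hk := by simp [Finset.notMem_singleton.1 hk]

theorem exists_lintegral_faceDensity_le {α : ℝ} (hα0 : 0 ≤ α) (hα : 2 * α < 1) {B : ℝ}
    (hB : 1 ≤ B) :
    ∃ K C : ℝ, 0 ≤ C ∧ ∀ {J : Matrix (Idx m) (Fin m) ℝ}, IsBoundedBy B J →
      ∀ {T : Set (ℤ × (Fin m → ℤ))} {Qt : ℤ × (Fin m → ℤ)}, ConvexTree T Qt →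
      ∀ {F : Corner m → (Fin m → ℝ) → ℝ}, IsTestTuple F →
      (∀ j, ENNReal.ofReal K * MalTree α (F j) (Amat J j) T ^ 2 ^ (m - 1) ≤ 1) →
      ∀ (i : Fin m) (ε : Fin 2) {U : ℝ}, 1 ≤ U →
        ∫⁻ z in sawtooth (stoppingHeight T U 0) (U * 2 ^ Qt.1),
          ENNReal.ofReal (faceDensity J F i U ε z) ≤
        ENNReal.ofReal (C * U ^ (m + 2)) * volume (dC Qt) := by
  obtain ⟨K, hadm⟩ := exists_admissible_stoppingHeight (m := m) hα0 hB
  have hbound (i : Fin m) := Asymptotics.isBigO_top.1 <|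
    isFormBounded_pairOrder (Γ := B * B) hα (Finset.mem_singleton_self i) one_ne_zero
  choose C hC using hbound
  refine ⟨K, (∑ i, |C i|) * 18 ^ m, by positivity, fun {J} hJ {T Qt} hT {F} hF hM i ε U hU => ?_⟩
  rw [sawtooth_stoppingHeight_zero,
    setLIntegral_iUnion_of_directed _ (monotone_sawtooth_stoppingHeight T U _).directed_le]
  refine iSup_le fun n => ?_
  let X := treeDatum hT hU (Nat.one_div_pos_of_nat (α := ℝ) (n := n))
    (hadm hJ ⟨Qt, hT.1⟩ hF hM hU _) hJ.hasBoundedPreimages i ε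
  have hform : X.form (pairOrder i 1) ≤ (∑ i, |C i|) * U ^ 2 * baseVolume X.ρ X.ℓ := by
    have hX := (le_abs_self _).trans (hC i X)
    rw [Real.norm_of_nonneg X.size_nonneg] at hX
    refine hX.trans ((mul_le_mul_of_nonneg_right ((le_abs_self _).trans <|
      Finset.single_le_sum (fun i _ => abs_nonneg (C i)) (Finset.mem_univ i))
        X.size_nonneg).trans_eq ?_)
    rw [SymmetricDatum.size, show X.s = 1 from rfl, Real.one_rpow, mul_one, ← mul_assoc]
    rfl
  calc _ = ENNReal.ofReal (X.form (pairOrder i 1)) :=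
        X.lintegral_form (Finset.mem_singleton_self i) 1
    _ ≤ ENNReal.ofReal ((∑ i, |C i|) * U ^ 2) * ENNReal.ofReal (baseVolume X.ρ X.ℓ) := by
        rw [← ENNReal.ofReal_mul (by positivity)]
        exact ENNReal.ofReal_le_ofReal hform
    _ ≤ ENNReal.ofReal ((∑ i, |C i|) * U ^ 2) * (ENNReal.ofReal ((18 * U) ^ m) * volume (dC Qt)) :=
        mul_le_mul_right (baseVolume_stoppingHeight_le hT hU _) _
    _ = ENNReal.ofReal ((∑ i, |C i|) * 18 ^ m * U ^ (m + 2)) * volume (dC Qt) := by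
        rw [← mul_assoc, ← ENNReal.ofReal_mul (by positivity)]
        ring_nf

end TreeForm

section TreeBound

variable {m : ℕ} {T : Set (ℤ × (Fin m → ℤ))} {Qt : ℤ × (Fin m → ℤ)}
  {J : Matrix (Idx m) (Fin m) ℝ} {F : Corner m → (Fin m → ℝ) → ℝ} {u : Idx m → ℝ} {i : Fin m}

theorem en_nonneg {ι : Type*} [Fintype ι] (u : ι → ℝ) : 0 ≤ en u := Real.sqrt_nonneg _

theorem abs_le_en {ι : Type*} [Fintype ι] (u : ι → ℝ) (c : ι) : |u c| ≤ en u :=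
  Real.abs_le_sqrt <|
    Finset.single_le_sum (f := fun c => u c ^ 2) (fun _ _ => sq_nonneg _) (Finset.mem_univ c)

theorem ofReal_norm_LambdaT_le (J : Matrix (Idx m) (Fin m) ℝ) (T : Set (ℤ × (Fin m → ℤ)))
    {c : ℝ → ℂ} (hc : ∀ᵐ t ∂(volume.restrict (Set.Ioi (0 : ℝ))), ‖c t‖ ≤ 1) (u : Idx m → ℝ)
    (i : Fin m) (F : Corner m → (Fin m → ℝ) → ℝ) :
    ENNReal.ofReal ‖LambdaT J T c u i F‖ ≤ ENNReal.ofReal (1 + en u ^ (4 * m))⁻¹ *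
      ∫⁻ z in Omega T, ENNReal.ofReal (z.2⁻¹ *
        |gaussPairing (cornerProd F) (pairOrder i 1) (fun _ => z.2) (J *ᵥ z.1 - z.2 • u)|) := by
  have hc' : ∀ᵐ z : (Fin m → ℝ) × ℝ, z.2 ∈ Set.Ioi (0 : ℝ) → ‖c z.2‖ ≤ 1 := by
    rw [Measure.volume_eq_prod]
    exact Measure.quasiMeasurePreserving_snd.ae ((ae_restrict_iff' measurableSet_Ioi).1 hc)
  have hdecay : 0 ≤ (1 + en u ^ (4 * m))⁻¹ := by
    have := en_nonneg u
    positivity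
  rw [ofReal_norm, ← lintegral_const_mul' _ _ ENNReal.ofReal_ne_top]
  refine (enorm_integral_le_lintegral_enorm _).trans (lintegral_mono_ae ?_)
  rw [ae_restrict_iff' (measurableSet_Omega T)]
  filter_upwards [hc'] with z hz hzT
  have ht := pos_of_mem_Omega hzT
  have hpairing : ∫ x, (∏ j, F j (proj j x)) * dil z.2 (ddg i) (x - J *ᵥ z.1 + z.2 • u) =
      gaussPairing (cornerProd F) (pairOrder i 1) (fun _ => z.2) (J *ᵥ z.1 - z.2 • u) := by
    simp only [sub_add, dil_ddg_sub]
    rfl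
  rw [hpairing, ← ofReal_norm, ← ENNReal.ofReal_mul hdecay, norm_mul, Complex.norm_real,
    Real.norm_eq_abs, abs_mul, abs_mul, abs_of_nonneg hdecay, abs_of_pos (inv_pos.2 ht), mul_assoc]
  exact ENNReal.ofReal_le_ofReal (mul_le_of_le_one_left (by positivity) (hz ht))

theorem IsBoundedBy.exists_mulVec_coord_eq {B U : ℝ} (hJ : IsBoundedBy B J) (u : Idx m → ℝ)
    (hU : (1 + B * B) * en u ≤ U) (i : Fin m) (ε : Fin 2) :
    ∃ q, ‖q‖ ≤ U ∧ (J *ᵥ q) (coord i ε) = u (coord i ε) ∧ ∀ c, |u c - (J *ᵥ q) c| ≤ U := by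
  have he := en_nonneg u
  have hB := hJ.one_le
  obtain ⟨q, hq, hqu⟩ := hJ.exists_proj_mulVec_eq (fun _ => ε) (proj (fun _ => ε) u)
  have hqe : ‖q‖ ≤ B * en u := hq.trans <| by
    gcongr
    exact (pi_norm_le_iff_of_nonneg he).2 fun k => abs_le_en u _
  refine ⟨q, hqe.trans (le_trans (by gcongr; nlinarith) hU), congrFun hqu i, fun c => ?_⟩
  calc |u c - (J *ᵥ q) c| ≤ |u c| + |(J *ᵥ q) c| := abs_sub _ _
    _ ≤ en u + B * (B * en u) := add_le_add (abs_le_en u c) <|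
        (norm_le_pi_norm _ c).trans ((hJ.norm_mulVec_le q).trans (by gcongr))
    _ = (1 + B * B) * en u := by ring
    _ ≤ U := hU

theorem IsTestTuple.ofReal_inv_mul_abs_gaussPairing_le (hF : IsTestTuple F) {U : ℝ} (hU : 2 ≤ U)
    {q : Fin 2 → Fin m → ℝ} (hq : ∀ ε, (J *ᵥ q ε) (coord i ε) = u (coord i ε))
    (hqU : ∀ ε c, |u c - (J *ᵥ q ε) c| ≤ U) {z : (Fin m → ℝ) × ℝ} (hz : 0 < z.2) :
    ENNReal.ofReal (z.2⁻¹ *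
        |gaussPairing (cornerProd F) (pairOrder i 1) (fun _ => z.2) (J *ᵥ z.1 - z.2 • u)|) ≤
      ENNReal.ofReal (2 * (Real.exp (4 * Real.pi) * U) ^ (2 * m - 2)) * ∑ ε, ENNReal.ofReal U *
        ENNReal.ofReal (faceDensity J F i U ε (z.1 - z.2 • q ε, U * z.2)) := by
  have hU0 : 0 < U := by linarith
  simp only [← ENNReal.ofReal_mul hU0.le]
  rw [Fin.sum_univ_two]
  refine le_trans ?_ (mul_le_mul_right ENNReal.ofReal_add_le _)
  rw [← ENNReal.ofReal_mul (by positivity), ← Fin.sum_univ_two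
    (fun ε => U * faceDensity J F i U ε (z.1 - z.2 • q ε, U * z.2))]
  refine ENNReal.ofReal_le_ofReal ((mul_le_mul_of_nonneg_left
    (hF.abs_gaussPairing_translate_le J i 1 u hU hq hqU z.1 hz) (inv_pos.2 hz).le).trans_eq ?_)
  rw [mul_left_comm, Finset.mul_sum]
  refine congrArg (_ * ·) (Finset.sum_congr rfl fun ε _ => ?_)
  rw [faceDensity, mul_inv, mul_assoc, mul_inv_cancel_left₀ hU0.ne']

variable [NeZero m]

theorem IsTestTuple.lintegral_abs_gaussPairing_le (hF : IsTestTuple F) (hT : ConvexTree T Qt)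
    {U : ℝ} (hU : 2 ≤ U) {q : Fin 2 → Fin m → ℝ} (hqn : ∀ ε, ‖q ε‖ ≤ U)
    (hq : ∀ ε, (J *ᵥ q ε) (coord i ε) = u (coord i ε)) (hqU : ∀ ε c, |u c - (J *ᵥ q ε) c| ≤ U) :
    ∫⁻ z in Omega T, ENNReal.ofReal (z.2⁻¹ *
        |gaussPairing (cornerProd F) (pairOrder i 1) (fun _ => z.2) (J *ᵥ z.1 - z.2 • u)|) ≤
      ENNReal.ofReal (2 * (Real.exp (4 * Real.pi) * U) ^ (2 * m - 2)) *
        ∑ ε, ∫⁻ z in sawtooth (stoppingHeight T U 0) (U * 2 ^ Qt.1),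
          ENNReal.ofReal (faceDensity J F i U ε z) := by
  have hU0 : 0 < U := by linarith
  have hmeas (ε : Fin 2) : Measurable fun z => ENNReal.ofReal (faceDensity J F i U ε z) :=
    (hF.measurable_faceDensity J i U ε).ennreal_ofReal
  have hshear (ε : Fin 2) : Measurable fun z : (Fin m → ℝ) × ℝ => ENNReal.ofReal U *
      ENNReal.ofReal (faceDensity J F i U ε (z.1 - z.2 • q ε, U * z.2)) :=
    ((hmeas ε).comp (by fun_prop)).const_mul _
  refine (setLIntegral_mono' (measurableSet_Omega T) fun z hz =>
    hF.ofReal_inv_mul_abs_gaussPairing_le hU hq hqU (pos_of_mem_Omega hz)).trans ?_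
  rw [lintegral_const_mul _ (Finset.measurable_fun_sum _ fun ε _ => hshear ε),
    lintegral_finsetSum _ fun ε _ => hshear ε]
  refine mul_le_mul_right (Finset.sum_le_sum fun ε _ => ?_) _
  exact setLIntegral_shear_le volume hU0 (q ε)
    (measurableSet_sawtooth (lipschitzWith_stoppingHeight ⟨Qt, hT.1⟩ hU0.le 0).continuous.measurable
      _) (mapsTo_shear_Omega hT hU0 (hqn ε)) (hmeas ε)

theorem inv_mul_scale_pow_le {b e : ℝ} (hb : 1 ≤ b) (he : 0 ≤ e) :
    (1 + e ^ (4 * m))⁻¹ * ((b * (1 + e)) ^ (2 * m - 2) * (b * (1 + e)) ^ (m + 2)) ≤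
      (2 * b) ^ (4 * m) := by
  have hm : 0 < m := NeZero.pos m
  rw [inv_mul_le_iff₀ (by positivity), ← pow_add]
  calc (b * (1 + e)) ^ (2 * m - 2 + (m + 2))
      ≤ (b * (1 + e)) ^ (4 * m) := pow_le_pow_right₀ (by nlinarith) (by omega)
    _ = b ^ (4 * m) * (1 + e) ^ (4 * m) := mul_pow ..
    _ ≤ b ^ (4 * m) * (2 ^ (4 * m) * (1 + e ^ (4 * m))) := by
        gcongr
        refine (add_pow_le zero_le_one he _).trans ?_
        rw [one_pow]
        gcongr
        · norm_num
        · omega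
    _ = (1 + e ^ (4 * m)) * (2 * b) ^ (4 * m) := by rw [mul_pow]; ring

theorem ofReal_mul_pow_le_one {K : ℝ} {x : ℝ≥0∞} {n : ℕ} (hn : n ≠ 0)
    (hx : x ≤ ENNReal.ofReal (max K 1)⁻¹) : ENNReal.ofReal K * x ^ n ≤ 1 := by
  have hκ : (max K 1)⁻¹ ≤ 1 := inv_le_one_of_one_le₀ (le_max_right K 1)
  calc ENNReal.ofReal K * x ^ n
      ≤ ENNReal.ofReal (max K 1) * ENNReal.ofReal (max K 1)⁻¹ := by
        gcongr
        · exact le_max_left K 1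
        · exact (pow_le_of_le_one zero_le (hx.trans (ENNReal.ofReal_le_one.2 hκ)) hn).trans hx
    _ = 1 := by
        rw [← ENNReal.ofReal_mul (by positivity), mul_inv_cancel₀ (by positivity),
          ENNReal.ofReal_one]

theorem exists_LambdaT_le_of_MalTree_le {α : ℝ} (hα0 : 0 ≤ α) (hα : 2 * α < 1) {B : ℝ}
    (hB : 1 ≤ B) :
    ∃ κ C : ℝ, 0 < κ ∧ 0 ≤ C ∧ ∀ {J : Matrix (Idx m) (Fin m) ℝ}, IsBoundedBy B J →
      ∀ {T : Set (ℤ × (Fin m → ℤ))} {Qt : ℤ × (Fin m → ℤ)}, ConvexTree T Qt →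
      ∀ {F : Corner m → (Fin m → ℝ) → ℝ}, IsTestTuple F →
      (∀ j, MalTree α (F j) (Amat J j) T ≤ ENNReal.ofReal κ) →
      ∀ {c : ℝ → ℂ}, (∀ᵐ t ∂(volume.restrict (Set.Ioi (0 : ℝ))), ‖c t‖ ≤ 1) →
      ∀ (u : Idx m → ℝ) (i : Fin m),
        ENNReal.ofReal ‖LambdaT J T c u i F‖ ≤ ENNReal.ofReal C * volume (dC Qt) := by
  obtain ⟨K, C, hC, hface⟩ := exists_lintegral_faceDensity_le (m := m) hα0 hα hB
  set E := Real.exp (4 * Real.pi)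
  refine ⟨(max K 1)⁻¹, 4 * E ^ (2 * m - 2) * C * (2 * (1 + B * B)) ^ (4 * m),
    by positivity, by positivity, fun {J} hJ T Qt hT F hF hM c hc u i => ?_⟩
  have hnorm (j : Corner m) :
      ENNReal.ofReal K * MalTree α (F j) (Amat J j) T ^ 2 ^ (m - 1) ≤ 1 :=
    ofReal_mul_pow_le_one (by positivity) (hM j)
  have he : 0 ≤ en u := en_nonneg u
  set U := (1 + B * B) * (1 + en u)
  have hU2 : 2 ≤ U := by nlinarith [mul_self_nonneg (B - 1)]
  choose q hqn hq hqU using hJ.exists_mulVec_coord_eq u (U := U) (mul_le_mul_of_nonneg_left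
    (by linarith) (by positivity)) i
  calc ENNReal.ofReal ‖LambdaT J T c u i F‖
      ≤ ENNReal.ofReal (1 + en u ^ (4 * m))⁻¹ * (ENNReal.ofReal (2 * (E * U) ^ (2 * m - 2)) *
          ∑ _ε : Fin 2, ENNReal.ofReal (C * U ^ (m + 2)) * volume (dC Qt)) := by
        refine (ofReal_norm_LambdaT_le J T hc u i F).trans (mul_le_mul_right
          ((hF.lintegral_abs_gaussPairing_le hT hU2 hqn hq hqU).trans ?_) _)
        exact mul_le_mul_right (Finset.sum_le_sum fun ε _ =>
          hface hJ hT hF hnorm i ε (by linarith)) _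
    _ = ENNReal.ofReal (4 * E ^ (2 * m - 2) * C *
          ((1 + en u ^ (4 * m))⁻¹ * (U ^ (2 * m - 2) * U ^ (m + 2)))) * volume (dC Qt) := by
        rw [Finset.sum_const, Finset.card_univ, Fintype.card_fin, nsmul_eq_mul, Nat.cast_ofNat,
          ← ENNReal.ofReal_ofNat, ← mul_assoc (ENNReal.ofReal 2), ← mul_assoc, ← mul_assoc,
          ← ENNReal.ofReal_mul (by positivity), ← ENNReal.ofReal_mul (by positivity),
          ← ENNReal.ofReal_mul (by positivity)]
        ring_nf
    _ ≤ _ := mul_le_mul_left (ENNReal.ofReal_le_ofReal (mul_le_mul_of_nonneg_left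
        (inv_mul_scale_pow_le (by linarith [mul_self_nonneg B]) he) (by positivity))) _

end TreeBound

section Homogeneity

variable {m : ℕ} {α : ℝ} {J : Matrix (Idx m) (Fin m) ℝ} {T : Set (ℤ × (Fin m → ℤ))}
  {c : ℝ → ℂ} {u : Idx m → ℝ} {i : Fin m} {F : Corner m → (Fin m → ℝ) → ℝ}

theorem LambdaT_const_mul (J : Matrix (Idx m) (Fin m) ℝ) (T : Set (ℤ × (Fin m → ℤ)))
    (c : ℝ → ℂ) (u : Idx m → ℝ) (i : Fin m) (a : Corner m → ℝ) (F : Corner m → (Fin m → ℝ) → ℝ) :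
    LambdaT J T c u i (fun j x => a j * F j x) = (∏ j, a j : ℝ) * LambdaT J T c u i F := by
  simp only [LambdaT, ← integral_const_mul, Finset.prod_mul_distrib, mul_assoc]
  refine integral_congr_ae (.of_forall fun z => ?_)
  simp only [integral_const_mul]
  push_cast
  ring

theorem LambdaT_eq_zero {j : Corner m} (hj : F j = 0) : LambdaT J T c u i F = 0 := by
  have hprod (x) : ∏ j, F j (proj j x) = 0 :=
    Finset.prod_eq_zero (Finset.mem_univ j) (congrFun hj _)
  simp [LambdaT, hprod]

theorem IsTestTuple.const_mul (hF : IsTestTuple F) (a : Corner m → ℝ) :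
    IsTestTuple fun j x => a j * F j x :=
  fun j => ⟨continuous_const.mul (hF j).1, (hF j).2.mul_left⟩

variable [NeZero m]

theorem avg_const_mul {a : ℝ} (ha : 0 ≤ a) (S : Set (Fin m → ℝ)) (F : (Fin m → ℝ) → ℝ) :
    avg S (fun x => a * F x) = a * avg S F := by
  have hm : 0 < m := NeZero.pos m
  have hexp : ((2 ^ (m - 1) : ℕ) : ℝ) * (2 : ℝ) ^ ((1 : ℤ) - (m : ℤ)) = 1 := by
    rw [Nat.cast_pow, Nat.cast_ofNat, ← zpow_natCast, ← zpow_add₀ two_ne_zero,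
      show ((m - 1 : ℕ) : ℤ) + (1 - (m : ℤ)) = 0 by omega, zpow_zero]
  simp only [avg, abs_mul, mul_pow, abs_of_nonneg ha]
  rw [integral_const_mul, mul_left_comm,
    Real.mul_rpow (by positivity) (mul_nonneg (by positivity) (by positivity)),
    ← Real.rpow_natCast, ← Real.rpow_mul ha, hexp, Real.rpow_one]

theorem MalTree_const_mul_le {a : ℝ} (ha : 0 ≤ a) (F : (Fin m → ℝ) → ℝ)
    (A : Matrix (Fin m) (Fin m) ℝ) (T : Set (ℤ × (Fin m → ℤ))) :
    MalTree α (fun x => a * F x) A T ≤ ENNReal.ofReal a * MalTree α F A T := by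
  refine iSup₂_le fun Q hQ => iSup₂_le fun l r => iSup₂_le fun hlr hS => ?_
  rw [avg_const_mul ha, mul_left_comm, ENNReal.ofReal_mul ha]
  refine mul_le_mul_right (le_trans ?_ (le_iSup₂_of_le Q hQ le_rfl)) _
  exact le_iSup₂_of_le l r (le_iSup₂_of_le hlr hS le_rfl)

theorem IsTestTuple.LambdaT_le_of_normalized {κ : ℝ} (hκ : 0 < κ) {V : ℝ≥0∞}
    (hV : ∀ G, IsTestTuple G → (∀ j, MalTree α (G j) (Amat J j) T ≤ ENNReal.ofReal κ) →
      ENNReal.ofReal ‖LambdaT J T c u i G‖ ≤ V)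
    (hF : IsTestTuple F) (h0 : ∀ j, MalTree α (F j) (Amat J j) T ≠ 0)
    (htop : ∀ j, MalTree α (F j) (Amat J j) T ≠ ⊤) :
    ENNReal.ofReal ‖LambdaT J T c u i F‖ ≤
      ENNReal.ofReal (∏ _j : Corner m, κ⁻¹) * V * ∏ j, MalTree α (F j) (Amat J j) T := by
  set M := fun j => (MalTree α (F j) (Amat J j) T).toReal
  have hM (j) : 0 < M j := ENNReal.toReal_pos (h0 j) (htop j)
  have hMof (j) : MalTree α (F j) (Amat J j) T = ENNReal.ofReal (M j) :=
    (ENNReal.ofReal_toReal (htop j)).symm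
  have ha (j) : 0 ≤ κ * (M j)⁻¹ := mul_nonneg hκ.le (inv_pos.2 (hM j)).le
  have hnorm (j) : MalTree α (fun x => κ * (M j)⁻¹ * F j x) (Amat J j) T ≤ ENNReal.ofReal κ := by
    refine (MalTree_const_mul_le (ha j) _ _ _).trans_eq ?_
    rw [hMof, ← ENNReal.ofReal_mul (ha j), inv_mul_cancel_right₀ (hM j).ne']
  have hprod : (∏ _j : Corner m, κ⁻¹) * (∏ j, M j) * ∏ j, κ * (M j)⁻¹ = 1 := by
    simp only [← Finset.prod_mul_distrib]
    refine Finset.prod_eq_one fun j _ => ?_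
    have := (hM j).ne'
    field_simp
  have hscale : ‖LambdaT J T c u i F‖ = (∏ _j : Corner m, κ⁻¹) * (∏ j, M j) *
      ‖LambdaT J T c u i fun j x => κ * (M j)⁻¹ * F j x‖ := by
    rw [LambdaT_const_mul, norm_mul, Complex.norm_real, Real.norm_eq_abs,
      abs_of_nonneg (Finset.prod_nonneg fun j _ => ha j), ← mul_assoc, hprod, one_mul]
  have hκ' : 0 ≤ ∏ _j : Corner m, κ⁻¹ := by positivity
  have hM' : 0 ≤ ∏ j, M j := Finset.prod_nonneg fun j _ => (hM j).le
  simp only [hMof]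
  rw [hscale, ENNReal.ofReal_mul (mul_nonneg hκ' hM'), ENNReal.ofReal_mul hκ',
    ENNReal.ofReal_prod_of_nonneg fun j _ => (hM j).le, mul_right_comm _ V]
  exact mul_le_mul_right (hV _ (hF.const_mul _) hnorm) _

theorem IsTestTuple.LambdaT_le_mul_prod_MalTree (hα : 0 ≤ α) {B : ℝ} (hJ : IsBoundedBy B J)
    (hT : T.Nonempty) {κ : ℝ} (hκ : 0 < κ) {V : ℝ≥0∞} (hV0 : V ≠ 0)
    (hV : ∀ G, IsTestTuple G → (∀ j, MalTree α (G j) (Amat J j) T ≤ ENNReal.ofReal κ) →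
      ENNReal.ofReal ‖LambdaT J T c u i G‖ ≤ V) (hF : IsTestTuple F) :
    ENNReal.ofReal ‖LambdaT J T c u i F‖ ≤
      ENNReal.ofReal (∏ _j : Corner m, κ⁻¹) * V * ∏ j, MalTree α (F j) (Amat J j) T := by
  by_cases h0 : ∃ j, MalTree α (F j) (Amat J j) T = 0
  · obtain ⟨j, hj⟩ := h0
    simp [LambdaT_eq_zero (hJ.eq_zero_of_MalTree_eq_zero hα hT (hF j).1 hj)]
  by_cases htop : ∃ j, MalTree α (F j) (Amat J j) T = ⊤
  · have hκ' : ENNReal.ofReal (∏ _j : Corner m, κ⁻¹) ≠ 0 :=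
      (ENNReal.ofReal_pos.2 (by positivity)).ne'
    obtain ⟨j, hj⟩ := htop
    push Not at h0
    rw [← Finset.mul_prod_erase _ (fun j => MalTree α (F j) (Amat J j) T)
      (Finset.mem_univ j), hj, ENNReal.top_mul (Finset.prod_ne_zero_iff.2 fun k _ => h0 k),
      ENNReal.mul_top (mul_ne_zero hκ' hV0)]
    exact le_top
  push Not at h0 htop
  exact hF.LambdaT_le_of_normalized hκ hV h0 htop

end Homogeneity

theorem statement2_general (m : ℕ) [NeZero m] (Δ α : ℝ) (hα0 : 0 ≤ α) (hα : 2 * α < 1) :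
    ∃ C : ℝ≥0, ∀ J : Matrix (Idx m) (Fin m) ℝ, (∀ j : Corner m, IsReg Δ (Amat J j)) →
      ∀ (T : Set (ℤ × (Fin m → ℤ))) (Qt : ℤ × (Fin m → ℤ)), ConvexTree T Qt →
      ∀ c : ℝ → ℂ, Measurable c →
        (∀ᵐ t ∂(volume.restrict (Set.Ioi (0 : ℝ))), ‖c t‖ ≤ 1) →
      ∀ u : Idx m → ℝ, ∀ i : Fin m,
      ∀ F : Corner m → (Fin m → ℝ) → ℝ, IsTestTuple F →
        ENNReal.ofReal ‖LambdaT J T c u i F‖ ≤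
          C * volume (dC Qt) * ∏ j : Corner m, MalTree α (F j) (Amat J j) T := by
  obtain ⟨B, hB, hreg⟩ := exists_isBoundedBy_of_isReg m Δ
  obtain ⟨κ, C, hκ, hC, hbound⟩ := exists_LambdaT_le_of_MalTree_le (m := m) hα0 hα hB
  refine ⟨((∏ _j : Corner m, κ⁻¹) * (C + 1)).toNNReal,
    fun J hJ T Qt hT c _ hc u i F hF => ?_⟩
  rw [ENNReal.ofNNReal_toNNReal, ENNReal.ofReal_mul (by positivity), mul_assoc (ENNReal.ofReal _)]
  refine hF.LambdaT_le_mul_prod_MalTree hα0 (hreg J hJ) ⟨Qt, hT.1⟩ hκ ?_ fun G hG hGM =>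
    (hbound (hreg J hJ) hT hG hGM hc u i).trans ?_
  · rw [volume_dC]
    exact mul_ne_zero (ENNReal.ofReal_pos.2 (by linarith : 0 < C + 1)).ne'
      (ENNReal.ofReal_pos.2 (by positivity)).ne'
  · exact mul_le_mul_left (ENNReal.ofReal_le_ofReal (by linarith)) _

/-- Theorem 3 (local bound for the form `Λ_𝒯`). -/
theorem statement2 (m : ℕ) (hm : 2 ≤ m) (Δ α : ℝ) (hΔ : 1 < Δ)
    (hα0 : 0 < α) (hα : α < 1 / m) :
    ∃ C : ℝ≥0, ∀ J : Matrix (Idx m) (Fin m) ℝ, IsUnit (Jb1 J).det →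
      (∀ j : Corner m, IsReg Δ (Amat J j)) →
      ∀ (T : Set (ℤ × (Fin m → ℤ))) (Qt : ℤ × (Fin m → ℤ)), ConvexTree T Qt →
      ∀ c : ℝ → ℂ, Measurable c →
        (∀ᵐ t ∂(volume.restrict (Set.Ioi (0:ℝ))), ‖c t‖ ≤ 1) →
      ∀ u : Idx m → ℝ, ∀ i : Fin m,
      ∀ F : Corner m → (Fin m → ℝ) → ℝ,
        (∀ j, ContDiff ℝ (⊤ : ℕ∞) (F j) ∧ HasCompactSupport (F j)) →
        ENNReal.ofReal ‖LambdaT J T c u i F‖ ≤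
          C * volume (dC Qt) * ∏ j : Corner m, MalTree α (F j) (Amat J j) T := by
  have : NeZero m := ⟨by omega⟩
  have hm' : (2 : ℝ) ≤ m := mod_cast hm
  obtain ⟨C, hC⟩ := statement2_general m Δ α hα0.le
    (by linarith [one_div_le_one_div_of_le two_pos hm'])
  exact ⟨C, fun J _ hJ T Qt hT c hcm hc u i F hF =>
    hC J hJ T Qt hT c hcm hc u i F fun j => ⟨(hF j).1.continuous, (hF j).2⟩⟩

end SBL
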